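/- arXiv:1911.08154 — 6 statements merged into one kernel-verified Lean document; each statement's English description precedes it below -/
import Mathlib

section
/- Let T be a tree, let 𝒜_T denote its set of static-included vertices and 𝒩_T its set of static-excluded vertices. Suppose u ∈ 𝒩_T is adjacent to exactly p isolated vertices of the induced subgraph T[𝒜_T] and to exactly q end-vertices of isolated edges of T[𝒜_T]. Then p + 2q ≥ 4 or p = 3. Consequently, if 𝒩_T ≠ ∅ then |𝒜_T| ≥ 3. -/
open SimpleGraph

/-- `l` is a (not necessarily induced) `k`-path in `G`: a list of `k` pairwise distinct
vertices in which consecutive vertices are adjacent. -/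
def IsKPath {V : Type*} (G : SimpleGraph V) (k : ℕ) (l : List V) : Prop :=
  l.length = k ∧ l.Nodup ∧ l.Chain' G.Adj

/-- A `k`-matching in `G`: a finite set of pairwise vertex-disjoint `k`-paths. -/
def IsKMatching {V : Type*} (G : SimpleGraph V) (k : ℕ) (M : Finset (List V)) : Prop :=
  (∀ l ∈ M, IsKPath G k l) ∧
    (M : Set (List V)).Pairwise fun l₁ l₂ => ∀ v ∈ l₁, v ∉ l₂

/-- The `k`-matching number `μ_k(G)`: the maximum cardinality of a `k`-matching. -/
noncomputable def kMatchNum {V : Type*} (G : SimpleGraph V) (k : ℕ) : ℕ :=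
  sSup {n | ∃ M : Finset (List V), IsKMatching G k M ∧ M.card = n}

/-- A maximum `k`-matching: a `k`-matching of cardinality `μ_k(G)`. -/
def IsMaxKMatching {V : Type*} (G : SimpleGraph V) (k : ℕ) (M : Finset (List V)) : Prop :=
  IsKMatching G k M ∧ M.card = kMatchNum G k

/-- A `k`-independent set: a set of vertices whose induced subgraph contains no `k`-path. -/
def IsKIndepSet {V : Type*} (G : SimpleGraph V) (k : ℕ) (S : Finset V) : Prop :=
  ∀ l : List V, IsKPath G k l → ¬ (∀ v ∈ l, v ∈ S)

/-- The `k`-independence number `α_k(G)`. -/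
noncomputable def kIndepNum {V : Type*} (G : SimpleGraph V) (k : ℕ) : ℕ :=
  sSup {n | ∃ S : Finset V, IsKIndepSet G k S ∧ S.card = n}

/-- A `k`-vertex cover: a set of vertices meeting every `k`-path of `G`. -/
def IsKCover {V : Type*} (G : SimpleGraph V) (k : ℕ) (C : Finset V) : Prop :=
  ∀ l : List V, IsKPath G k l → ∃ v ∈ l, v ∈ C

/-- The `k`-vertex cover number `τ_k(G)`. -/
noncomputable def kCoverNum {V : Type*} (G : SimpleGraph V) (k : ℕ) : ℕ :=
  sInf {n | ∃ C : Finset V, IsKCover G k C ∧ C.card = n}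

/-- A dissociation set: a set of vertices inducing a subgraph of maximum degree at most 1,
i.e. every vertex of `S` has at most one neighbour inside `S`. -/
def IsDissocSet {V : Type*} (G : SimpleGraph V) (S : Finset V) : Prop :=
  ∀ v ∈ S, ∀ u ∈ S, ∀ w ∈ S, G.Adj v u → G.Adj v w → u = w

/-- The dissociation number `α₃(G)`. -/
noncomputable def dissNum {V : Type*} (G : SimpleGraph V) : ℕ :=
  sSup {n | ∃ S : Finset V, IsDissocSet G S ∧ S.card = n}

/-- A maximum dissociation set: a dissociation set of cardinality `α₃(G)`. -/
def IsMaxDissocSet {V : Type*} (G : SimpleGraph V) (S : Finset V) : Prop :=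
  IsDissocSet G S ∧ S.card = dissNum G

/-- `uv` is an `α₃`-critical edge of `G`: deleting it increases the dissociation number. -/
def IsAlpha3Critical {V : Type*} (G : SimpleGraph V) (u v : V) : Prop :=
  G.Adj u v ∧ dissNum G < dissNum (G.deleteEdges {s(u, v)})

/-- `uv` is a `μ₃`-critical edge of `G`: deleting it decreases the `3`-matching number. -/
def IsMu3Critical {V : Type*} (G : SimpleGraph V) (u v : V) : Prop :=
  G.Adj u v ∧ kMatchNum (G.deleteEdges {s(u, v)}) 3 < kMatchNum G 3

/-- An insulated `α₃`-critical edge: an `α₃`-critical edge sharing no end-vertex with any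
other `α₃`-critical edge. -/
def IsInsulated {V : Type*} (G : SimpleGraph V) (u v : V) : Prop :=
  IsAlpha3Critical G u v ∧
    ∀ x y : V, IsAlpha3Critical G x y → s(x, y) ≠ s(u, v) →
      x ≠ u ∧ x ≠ v ∧ y ≠ u ∧ y ≠ v

/-- A flexible vertex: one lying in some but not all maximum dissociation sets. -/
def IsFlexible {V : Type*} (G : SimpleGraph V) (v : V) : Prop :=
  (∃ S : Finset V, IsMaxDissocSet G S ∧ v ∈ S) ∧
    (∃ S : Finset V, IsMaxDissocSet G S ∧ v ∉ S)

/-- The set of static-included vertices: vertices lying in every maximum dissociation set. -/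
def staticIncluded {V : Type*} (G : SimpleGraph V) : Set V :=
  {v | ∀ S : Finset V, IsMaxDissocSet G S → v ∈ S}

/-- The set of static-excluded vertices: vertices lying in no maximum dissociation set. -/
def staticExcluded {V : Type*} (G : SimpleGraph V) : Set V :=
  {v | ∀ S : Finset V, IsMaxDissocSet G S → v ∉ S}

/-- The (unordered) edge `uv` occurs as an edge of the path recorded by the list `l`. -/
def EdgeInList {V : Type*} (l : List V) (u v : V) : Prop :=
  ∃ p ∈ l.zip l.tail, p = (u, v) ∨ p = (v, u)


open Classical in
/-- Combine `S` on `B` with `R` off `B`. -/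
noncomputable def mixSet {V : Type*} (S R : Finset V) (B : Set V) : Finset V :=
  S.filter (fun x => x ∈ B) ∪ R.filter (fun x => x ∉ B)

theorem mem_mixSet {V : Type*} (S R : Finset V) (B : Set V) (x : V) :
    x ∈ mixSet S R B ↔ (x ∈ S ∧ x ∈ B) ∨ (x ∈ R ∧ x ∉ B) := by
  classical
  simp [mixSet]

theorem card_mixSet {V : Type*} (S R : Finset V) (B : Set V) :
    (mixSet S R B).card + (mixSet R S B).card = S.card + R.card := by
  classical
  have key : ∀ S R : Finset V, (mixSet S R B).card =
      (S.filter (fun x => x ∈ B)).card + (R.filter (fun x => x ∉ B)).card := by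
    intro S R
    unfold mixSet
    convert Finset.card_union_of_disjoint _ using 1
    rw [Finset.disjoint_left]
    intro a ha hb
    simp only [Finset.mem_filter] at ha hb
    exact hb.2 ha.2
  rw [key, key]
  have h1 := Finset.card_filter_add_card_filter_not (s := S) (fun x => x ∈ B)
  have h2 := Finset.card_filter_add_card_filter_not (s := R) (fun x => x ∈ B)
  omega

theorem mixSet_dissoc {V : Type*} (G : SimpleGraph V) (S R : Finset V) (B : Set V) (u v : V)
    (hB : ∀ x ∈ B, ∀ y, y ∉ B → G.Adj x y → x = v ∧ y = u)
    (hS : IsDissocSet G S) (hR : IsDissocSet G R) (h : v ∉ S ∨ u ∉ R) :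
    IsDissocSet G (mixSet S R B) := by
  have cross : ∀ x y, (x ∈ S ∧ x ∈ B) → (y ∈ R ∧ y ∉ B) → ¬ G.Adj x y := by
    intro x y hx hy hxy
    obtain ⟨rfl, rfl⟩ := hB x hx.2 y hy.2 hxy
    exact h.elim (fun h => h hx.1) (fun h => h hy.1)
  intro a ha b hb c hc hab hac
  rw [mem_mixSet] at ha hb hc
  rcases ha with ha | ha
  · rcases hb with hb | hb
    · rcases hc with hc | hc
      · exact hS a ha.1 b hb.1 c hc.1 hab hac
      · exact absurd hac (cross _ _ ha hc)
    · exact absurd hab (cross _ _ ha hb)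
  · rcases hb with hb | hb
    · exact absurd hab.symm (cross _ _ hb ha)
    · rcases hc with hc | hc
      · exact absurd hac.symm (cross _ _ hc ha)
      · exact hR a ha.1 b hb.1 c hc.1 hab hac

theorem exists_branch {V : Type*} (T : SimpleGraph V) (hT : T.IsTree) (u v : V)
    (huv : T.Adj u v) : ∃ B : Set V, v ∈ B ∧ u ∉ B ∧
      ∀ x ∈ B, ∀ y, y ∉ B → T.Adj x y → x = v ∧ y = u := by
  have hbr := SimpleGraph.isAcyclic_iff_forall_edge_isBridge.1 hT.IsAcyclic
    (e := s(u, v)) (by simpa using huv)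
  rw [SimpleGraph.isBridge_iff] at hbr
  have hu : ¬ (T.deleteEdges {s(u, v)}).Reachable v u := fun h => by
    first
      | exact hbr.2 h.symm
      | exact hbr h.symm
  refine ⟨{x | (T.deleteEdges {s(u, v)}).Reachable v x}, Reachable.refl _, hu, ?_⟩
  intro x hx y hy hxy
  by_cases he : s(x, y) = s(u, v)
  · rw [Sym2.eq_iff] at he
    rcases he with ⟨rfl, rfl⟩ | h
    · exact absurd hx hu
    · exact h
  · exfalso
    apply hy
    have : (T.deleteEdges {s(u, v)}).Adj x y := by
      rw [SimpleGraph.deleteEdges_adj]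
      exact ⟨hxy, by simpa using he⟩
    exact Reachable.trans hx this.reachable

theorem card_le_dissNum {V : Type*} [Fintype V] (G : SimpleGraph V) (S : Finset V)
    (hS : IsDissocSet G S) : S.card ≤ dissNum G := by
  apply le_csSup
  · refine ⟨Fintype.card V, ?_⟩
    rintro n ⟨S, -, rfl⟩
    exact Finset.card_le_univ S
  · exact ⟨S, hS, rfl⟩

theorem exists_maxDissoc {V : Type*} [Fintype V] (G : SimpleGraph V) :
    ∃ S : Finset V, IsMaxDissocSet G S := by
  have := Nat.sSup_mem (s := {n | ∃ S : Finset V, IsDissocSet G S ∧ S.card = n})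
    ⟨0, ∅, by intro v hv; simp at hv, rfl⟩
    ⟨Fintype.card V, by rintro n ⟨S, -, rfl⟩; exact Finset.card_le_univ S⟩
  obtain ⟨S, hS, h⟩ := this
  exact ⟨S, hS, h⟩

theorem mixSet_max {V : Type*} [Fintype V] (G : SimpleGraph V) (S R : Finset V) (B : Set V)
    (u v : V)
    (hB : ∀ x ∈ B, ∀ y, y ∉ B → G.Adj x y → x = v ∧ y = u)
    (hS : IsMaxDissocSet G S) (hR : IsMaxDissocSet G R) (h1 : u ∉ S) (h2 : u ∉ R) :
    IsMaxDissocSet G (mixSet S R B) := by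
  have a := mixSet_dissoc G S R B u v hB hS.1 hR.1 (Or.inr h2)
  have b := mixSet_dissoc G R S B u v hB hR.1 hS.1 (Or.inr h1)
  have a' := card_le_dissNum G _ a
  have b' := card_le_dissNum G _ b
  have := card_mixSet S R B
  have := hS.2
  have := hR.2
  exact ⟨a, by omega⟩

/-- There is a maximum dissociation set meeting `N(u)` only in static-included vertices. -/
theorem exists_max_avoid {V : Type*} [Fintype V] (T : SimpleGraph V) (hT : T.IsTree)
    (u : V) (hu : u ∈ staticExcluded T) :
    ∃ S, IsMaxDissocSet T S ∧ ∀ v ∈ S, T.Adj u v → v ∈ staticIncluded T := by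
  classical
  let f : Finset V → ℕ := fun S => (S.filter (fun x => T.Adj u x)).card
  obtain ⟨S, hS, hmin⟩ := Set.exists_min_image {S : Finset V | IsMaxDissocSet T S} f
    (Set.toFinite _) (exists_maxDissoc T)
  refine ⟨S, hS, ?_⟩
  intro v hv huv
  by_contra hnA
  simp only [staticIncluded, Set.mem_setOf_eq, not_forall] at hnA
  obtain ⟨S', hS', hv'⟩ := hnA
  obtain ⟨B, hvB, huB, hB⟩ := exists_branch T hT u v huv
  have hm := mixSet_max T S' S B u v hB hS' hS (hu _ hS') (hu _ hS)
  have := hmin _ hm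
  refine absurd this (not_le.2 ?_)
  apply Finset.card_lt_card
  rw [Finset.ssubset_iff_of_subset]
  · refine ⟨v, by simp [hv, huv], ?_⟩
    simp [mem_mixSet, hv', hvB]
  · intro x hx
    simp only [Finset.mem_filter, mem_mixSet] at hx ⊢
    obtain ⟨hx | hx, hux⟩ := hx
    · obtain ⟨rfl, -⟩ := hB x hx.2 u huB hux.symm
      exact absurd hx.1 hv'
    · exact ⟨hx.1, hux⟩

theorem exists_max_isolated {V : Type*} [Fintype V] (T : SimpleGraph V) (hT : T.IsTree)
    (v : V) (hv : v ∈ staticIncluded T) (hiso : ∀ x ∈ staticIncluded T, ¬ T.Adj v x) :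
    ∃ S, IsMaxDissocSet T S ∧ ∀ x ∈ S, ¬ T.Adj v x := by
  classical
  by_contra hcon
  push Not at hcon
  obtain ⟨S0, hS0⟩ := exists_maxDissoc T
  obtain ⟨x, hx, hvx⟩ := hcon S0 hS0
  have hnA : x ∉ staticIncluded T := fun h => hiso x h hvx
  simp only [staticIncluded, Set.mem_setOf_eq, not_forall] at hnA
  obtain ⟨S', hS', hx'⟩ := hnA
  obtain ⟨B, hxB, hvB, hB⟩ := exists_branch T hT v x hvx
  have d1 : IsDissocSet T (S'.erase v) := by
    intro a ha b hb c hc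
    exact hS'.1 a (Finset.mem_of_mem_erase ha) b (Finset.mem_of_mem_erase hb) c
      (Finset.mem_of_mem_erase hc)
  have a := mixSet_dissoc T S0 (S'.erase v) B v x hB hS0.1 d1 (Or.inr (by simp))
  have b := mixSet_dissoc T S' S0 B v x hB hS'.1 hS0.1 (Or.inl hx')
  have a' := card_le_dissNum T _ a
  have b' := card_le_dissNum T _ b
  have ane : (mixSet S0 (S'.erase v) B).card ≠ dissNum T := by
    intro h
    have := hv _ ⟨a, h⟩
    rw [mem_mixSet] at this
    simp [hvB] at this
  have e : mixSet (S'.erase v) S0 B = mixSet S' S0 B := by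
    ext y
    rw [mem_mixSet, mem_mixSet]
    have : y ∈ B → y ≠ v := by rintro h rfl; exact hvB h
    simp only [Finset.mem_erase]
    tauto
  have hc := card_mixSet S0 (S'.erase v) B
  rw [e] at hc
  have hce := Finset.card_erase_add_one (hv S' hS')
  have h1 := hS0.2
  have h2 := hS'.2
  obtain ⟨y, hy, hvy⟩ := hcon _ (⟨b, by omega⟩ : IsMaxDissocSet T (mixSet S' S0 B))
  rw [mem_mixSet] at hy
  rcases hy with hy | hy
  · obtain ⟨rfl, -⟩ := hB y hy.2 v hvB hvy.symm
    exact hx' hy.1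
  · have := hS0.1 v (hv S0 hS0) x hx y hy.1 hvx hvy
    subst this
    exact hy.2 hxB

/-- Swapping `u` in for a neighbour `w`. -/
theorem swap_false {V : Type*} [Fintype V] (T : SimpleGraph V)
    (u : V) (hu : u ∈ staticExcluded T) (S : Finset V) (hS : IsMaxDissocSet T S) (w : V)
    (h1 : ∀ a ∈ S, ∀ b ∈ S, a ≠ w → b ≠ w → T.Adj u a → T.Adj u b → a = b)
    (h2 : ∀ a ∈ S, a ≠ w → T.Adj u a → ∀ b ∈ S, ¬ T.Adj a b) : False := by
  classical
  have huS := hu S hS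
  have hd : IsDissocSet T (insert u (S.erase w)) := by
    intro a ha b hb c hc hab hac
    simp only [Finset.mem_insert, Finset.mem_erase] at ha hb hc
    rcases ha with rfl | ha
    · rcases hb with rfl | hb
      · exact absurd hab (T.irrefl)
      rcases hc with rfl | hc
      · exact absurd hac (T.irrefl)
      exact h1 b hb.2 c hc.2 hb.1 hc.1 hab hac
    · rcases hb with rfl | hb
      · rcases hc with rfl | hc
        · rfl
        · exact absurd hac (h2 a ha.2 ha.1 hab.symm c hc.2)
      · rcases hc with rfl | hc
        · exact absurd hab (h2 a ha.2 ha.1 hac.symm b hb.2)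
        · exact hS.1 a ha.2 b hb.2 c hc.2 hab hac
  have hle := card_le_dissNum T _ hd
  have hc : (insert u (S.erase w)).card = (S.erase w).card + 1 :=
    Finset.card_insert_of_notMem (fun h => huS (Finset.mem_of_mem_erase h))
  have hge : S.card ≤ (S.erase w).card + 1 := by
    have := Finset.pred_card_le_card_erase (s := S) (a := w)
    omega
  have h3 := hS.2
  exact hu _ ⟨hd, by omega⟩ (Finset.mem_insert_self _ _)

/-- Let `T` be a tree and let `u` be a static-excluded vertex of `T` adjacent to exactly
`p` isolated vertices of `T[𝒜_T]` and to exactly `q` end-vertices of isolated edges of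
`T[𝒜_T]`.  Then `p + 2q ≥ 4` or `p = 3`; consequently (as `𝒩_T ≠ ∅` here), `|𝒜_T| ≥ 3`. -/
theorem tree_staticExcluded_neighbors_staticIncluded {V : Type*} [Fintype V]
    [DecidableEq V] (T : SimpleGraph V) (hT : T.IsTree)
    (u : V) (hu : u ∈ staticExcluded T) (p q : ℕ)
    (hp : {w : V | w ∈ staticIncluded T ∧
      (∀ x ∈ staticIncluded T, ¬ T.Adj w x) ∧ T.Adj u w}.ncard = p)
    (hq : {w : V | w ∈ staticIncluded T ∧
      (∃ x ∈ staticIncluded T, T.Adj w x ∧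
        (∀ y ∈ staticIncluded T, T.Adj w y → y = x) ∧
        (∀ y ∈ staticIncluded T, T.Adj x y → y = w)) ∧ T.Adj u w}.ncard = q) :
    (4 ≤ p + 2 * q ∨ p = 3) ∧ 3 ≤ (staticIncluded T).ncard := by
  classical
  obtain ⟨S, hS, hSA⟩ := exists_max_avoid T hT u hu
  set P := {w : V | w ∈ staticIncluded T ∧
      (∀ x ∈ staticIncluded T, ¬ T.Adj w x) ∧ T.Adj u w} with hP
  set Q := {w : V | w ∈ staticIncluded T ∧
      (∃ x ∈ staticIncluded T, T.Adj w x ∧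
        (∀ y ∈ staticIncluded T, T.Adj w y → y = x) ∧
        (∀ y ∈ staticIncluded T, T.Adj x y → y = w)) ∧ T.Adj u w} with hQ
  set D := {w : V | w ∈ staticIncluded T ∧ T.Adj u w} with hD
  have hPQ : P ∪ Q = D := by
    ext w
    constructor
    · rintro (h | h)
      · exact ⟨h.1, h.2.2⟩
      · exact ⟨h.1, h.2.2⟩
    · rintro ⟨hw, huw⟩
      by_cases h : ∀ x ∈ staticIncluded T, ¬ T.Adj w x
      · exact Or.inl ⟨hw, h, huw⟩
      · push Not at h
        obtain ⟨x, hx, hwx⟩ := h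
        refine Or.inr ⟨hw, ⟨x, hx, hwx, ?_, ?_⟩, huw⟩
        · intro y hy hwy
          exact hS.1 w (hw S hS) y (hy S hS) x (hx S hS) hwy hwx
        · intro y hy hxy
          exact hS.1 x (hx S hS) y (hy S hS) w (hw S hS) hxy hwx.symm
  have hdisj : Disjoint P Q := by
    rw [Set.disjoint_left]
    rintro w h1 ⟨-, ⟨x, hx, hwx, -⟩, -⟩
    exact h1.2.1 x hx hwx
  have hcard : p + q = D.ncard := by
    rw [← hPQ, Set.ncard_union_eq hdisj (Set.toFinite _) (Set.toFinite _), hp, hq]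
  -- at least two
  have hD2 : 2 ≤ D.ncard := by
    by_contra hlt
    have hle : D.ncard ≤ 1 := by omega
    rw [Set.ncard_le_one (Set.toFinite _)] at hle
    by_cases hne : ∃ w, w ∈ D
    · obtain ⟨w, hw⟩ := hne
      refine swap_false T u hu S hS w ?_ ?_
      · intro a ha b hb haw hbw hua hub
        exact hle a ⟨hSA a ha hua, hua⟩ b ⟨hSA b hb hub, hub⟩
      · intro a ha haw hua
        exact absurd (hle a ⟨hSA a ha hua, hua⟩ w hw) haw
    · push Not at hne
      refine swap_false T u hu S hS u ?_ ?_
      · intro a ha b hb haw hbw hua hub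
        exact absurd ⟨hSA a ha hua, hua⟩ (hne a)
      · intro a ha haw hua
        exact absurd ⟨hSA a ha hua, hua⟩ (hne a)
  have hD3 : p ≠ 0 → 3 ≤ D.ncard := by
    intro hp0
    by_contra hlt
    have h2 : D.ncard = 2 := by omega
    obtain ⟨v, hvA, hviso, huv⟩ : P.Nonempty := by
      apply Set.nonempty_of_ncard_ne_zero
      omega
    have hvD : v ∈ D := ⟨hvA, huv⟩
    obtain ⟨w, hwv, hw⟩ : ∃ w, w ≠ v ∧ ∀ y ∈ D, y ≠ w → y = v := by
      obtain ⟨a, b, hab, hDab⟩ := Set.ncard_eq_two.1 h2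
      rw [hDab] at hvD ⊢
      rcases hvD with rfl | hvD
      · refine ⟨b, hab.symm, ?_⟩
        rintro y (rfl | rfl) h
        · rfl
        · exact absurd rfl h
      · obtain rfl : v = b := hvD
        refine ⟨a, hab, ?_⟩
        rintro y (rfl | rfl) h
        · exact absurd rfl h
        · rfl
    obtain ⟨S', hS', hiso'⟩ := exists_max_isolated T hT v hvA hviso
    obtain ⟨B, hvB, huB, hB⟩ := exists_branch T hT u v huv
    have hm := mixSet_max T S' S B u v hB hS' hS (hu _ hS') (hu _ hS)
    have hmA : ∀ a ∈ mixSet S' S B, a ≠ w → T.Adj u a → a = v := by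
      intro a ha haw hua
      rw [mem_mixSet] at ha
      rcases ha with ha | ha
      · exact (hB a ha.2 u huB hua.symm).1
      · exact hw a ⟨hSA a ha.1 hua, hua⟩ haw
    refine swap_false T u hu _ hm w ?_ ?_
    · intro a ha b hb haw hbw hua hub
      rw [hmA a ha haw hua, hmA b hb hbw hub]
    · intro a ha haw hua b hb hab
      obtain rfl := hmA a ha haw hua
      rw [mem_mixSet] at hb
      rcases hb with hb | hb
      · exact hiso' b hb.1 hab
      · obtain ⟨-, rfl⟩ := hB a hvB b hb.2 hab
        exact hu S hS hb.1
  refine ⟨by omega, ?_⟩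
  by_cases hp0 : p = 0
  · have hq2 : 1 < Q.ncard := by omega
    obtain ⟨w, w', hw, hw', hne⟩ := (Set.one_lt_ncard (Set.toFinite _)).1 hq2 |> fun
      ⟨a, ha, b, hb, hab⟩ => (⟨a, b, ha, hb, hab⟩ : ∃ a b, a ∈ Q ∧ b ∈ Q ∧ a ≠ b)
    obtain ⟨hwA, ⟨x, hxA, hwx, -⟩, huw⟩ := hw
    obtain ⟨hwA', -, huw'⟩ := hw'
    have hxw' : x ≠ w' := by
      rintro rfl
      -- triangle
      obtain ⟨B, hvB, huB, hB⟩ := exists_branch T hT u w huw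
      by_cases hxB : x ∈ B
      · exact hne (hB x hxB u huB huw'.symm).1.symm
      · exact huw'.ne (hB w hvB x hxB hwx).2.symm
    have hsub : ({w, w', x} : Set V) ⊆ staticIncluded T := by
      rintro y (rfl | rfl | rfl) <;> assumption
    have h3 : ({w, w', x} : Set V).ncard = 3 :=
      Set.ncard_eq_three.2 ⟨w, w', x, hne, hwx.ne, hxw'.symm, rfl⟩
    rw [← h3]
    exact Set.ncard_le_ncard hsub (Set.toFinite _)
  · exact (hD3 hp0).trans (Set.ncard_le_ncard (fun y hy => hy.1) (Set.toFinite _))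
end

section
/- Let T be a tree with exactly k flexible vertices. If T has exactly x critical 3-paths and exactly (k − 3x)/2 insulated α₃-critical edges, then the number of maximum dissociation sets of T is at most 3^x · 2^{(k−3x)/2}. -/
open SimpleGraph

def P3 {V : Type*} [DecidableEq V] (G : SimpleGraph V) (B : Finset V) : Prop :=
  ∃ a b c, a ≠ b ∧ a ≠ c ∧ b ≠ c ∧ G.Adj a b ∧ G.Adj b c ∧ B = {a, b, c}

def M3 {V : Type*} [DecidableEq V] (G : SimpleGraph V) (M : Finset (Finset V)) : Prop :=
  (∀ B ∈ M, P3 G B) ∧ ∀ B ∈ M, ∀ B' ∈ M, ∀ z, z ∈ B → z ∈ B' → B = B'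

section
variable {V : Type*} [Fintype V] [DecidableEq V]

lemma P3.card {G : SimpleGraph V} {B : Finset V} (h : P3 G B) : B.card = 3 := by
  obtain ⟨a, b, c, h1, h2, h3, _, _, rfl⟩ := h
  exact Finset.card_eq_three.2 ⟨a, b, c, h1, h2, h3, rfl⟩

lemma P3.hit {G : SimpleGraph V} {B S : Finset V} (h : P3 G B) (hS : IsDissocSet G S) :
    1 ≤ (B \ S).card := by
  obtain ⟨a, b, c, h1, h2, h3, h4, h5, rfl⟩ := h
  rw [Nat.one_le_iff_ne_zero, Finset.card_ne_zero]
  by_contra hne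
  rw [Finset.not_nonempty_iff_eq_empty, Finset.sdiff_eq_empty_iff_subset] at hne
  exact h2 (hS b (hne (by simp)) a (hne (by simp)) c (hne (by simp)) h4.symm h5)

lemma M3.sum_le {G : SimpleGraph V} {M : Finset (Finset V)} (hM : M3 G M) (S : Finset V) :
    ∑ B ∈ M, (B \ S).card ≤ Fintype.card V - S.card := by
  rw [← Finset.card_compl, ← Finset.card_biUnion]
  · apply Finset.card_le_card
    intro z hz
    simp only [Finset.mem_biUnion, Finset.mem_sdiff] at hz
    obtain ⟨B, _, _, h⟩ := hz
    simpa using h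
  · intro B hB B' hB' hne
    refine Finset.disjoint_left.2 ?_
    intro z hz hz'
    exact hne (hM.2 B hB B' hB' z (Finset.mem_sdiff.1 hz).1 (Finset.mem_sdiff.1 hz').1)

lemma M3.weak {G : SimpleGraph V} {M : Finset (Finset V)} (hM : M3 G M) {S : Finset V}
    (hS : IsDissocSet G S) : M.card ≤ Fintype.card V - S.card := by
  refine le_trans ?_ (hM.sum_le S)
  rw [Finset.card_eq_sum_ones]
  exact Finset.sum_le_sum fun B hB => (hM.1 B hB).hit hS

lemma M3.tight {G : SimpleGraph V} {M : Finset (Finset V)} (hM : M3 G M) {S : Finset V}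
    (hS : IsDissocSet G S) (h : M.card = Fintype.card V - S.card) {B : Finset V} (hB : B ∈ M) :
    (B \ S).card = 1 := by
  have h1 := hM.sum_le S
  rw [← h, Finset.card_eq_sum_ones] at h1
  have h2 : ∀ B ∈ M, 1 ≤ (B \ S).card := fun B hB => (hM.1 B hB).hit hS
  have h3 := (Finset.sum_eq_sum_iff_of_le h2).1 (le_antisymm (Finset.sum_le_sum h2) h1)
  exact (h3 B hB).symm

lemma one_nbr {G : SimpleGraph V} (hG : G.IsAcyclic) {v a b : V} (p : G.Walk a b)
    (hp : v ∉ p.support) (ha : G.Adj v a) (hb : G.Adj v b) : a = b := by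
  classical
  have hq : v ∉ p.bypass.support := fun h => hp (p.support_bypass_subset_support h)
  have hpath : (Walk.cons ha p.bypass).IsPath := by
    rw [Walk.cons_isPath_iff]
    exact ⟨p.bypass_isPath, hq⟩
  have hpath2 : (Walk.cons hb Walk.nil).IsPath := by
    rw [Walk.cons_isPath_iff]
    exact ⟨Walk.IsPath.nil, by simpa using hb.ne⟩
  have := hG.path_unique ⟨_, hpath⟩ ⟨_, hpath2⟩
  have h2 := congrArg (fun q : G.Path v b => (q : G.Walk v b).snd) this
  simpa using h2

def Good (G : SimpleGraph V) (W D : Finset V) (v : V) : Prop :=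
  D ⊆ W ∧ v ∈ D ∧ (∃ B ⊆ D, P3 G B) ∧ ∀ a ∈ D, a ≠ v → ∀ b ∈ W, G.Adj a b → b ∈ D

lemma P3_of_not {G : SimpleGraph V} {S : Finset V} (h : ¬ IsDissocSet G S) :
    ∃ a b c, a ≠ b ∧ a ≠ c ∧ b ≠ c ∧ G.Adj a b ∧ G.Adj b c ∧ a ∈ S ∧ b ∈ S ∧ c ∈ S := by
  unfold IsDissocSet at h
  push Not at h
  obtain ⟨v, hv, u, hu, w, hw, h1, h2, h3⟩ := h
  exact ⟨u, v, w, h1.ne', h3, h2.ne, h1.symm, h2, hu, hv, hw⟩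

lemma exists_good {G : SimpleGraph V} (hG : G.IsAcyclic) {W : Finset V}
    (hW : ¬ IsDissocSet G W) : ∃ D v, Good G W D v ∧ IsDissocSet G (D.erase v) := by
  classical
  have key : ∀ n, ∀ D v, D.card = n → Good G W D v →
      ∃ D v, Good G W D v ∧ IsDissocSet G (D.erase v) := by
    intro n
    induction n using Nat.strong_induction_on with
    | _ n ih =>
    intro D v hn hg
    by_cases hd : IsDissocSet G (D.erase v)
    · exact ⟨D, v, hg, hd⟩
    obtain ⟨a, b, c, h1, h2, h3, h4, h5, ha, hb, hc⟩ := P3_of_not hd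
    obtain ⟨g1, g2, g3, g4⟩ := hg
    let K : Finset V := Finset.univ.filter fun z =>
      ∃ p : G.Walk b z, ∀ w ∈ p.support, w ∈ D.erase v
    have hK : ∀ z, z ∈ K ↔ ∃ p : G.Walk b z, ∀ w ∈ p.support, w ∈ D.erase v := by
      intro z; simp [K]
    have hKD : K ⊆ D.erase v := by
      intro z hz
      obtain ⟨p, hp⟩ := (hK z).1 hz
      exact hp z p.end_mem_support
    have hstep : ∀ z ∈ K, ∀ w, G.Adj z w → w ∈ D.erase v → w ∈ K := by
      intro z hz w hzw hw
      obtain ⟨p, hp⟩ := (hK z).1 hz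
      refine (hK w).2 ⟨p.concat hzw, ?_⟩
      intro t ht
      rw [Walk.support_concat] at ht
      simp at ht
      rcases ht with ht | rfl
      · exact hp t ht
      · exact hw
    have hbK : b ∈ K := (hK b).2 ⟨Walk.nil, by simpa using hb⟩
    have haK : a ∈ K := hstep b hbK a h4.symm ha
    have hcK : c ∈ K := hstep b hbK c h5 hc
    have huniq : ∀ s ∈ K, ∀ t ∈ K, G.Adj v s → G.Adj v t → s = t := by
      intro s hs t ht hvs hvt
      obtain ⟨p, hp⟩ := (hK s).1 hs
      obtain ⟨q, hq⟩ := (hK t).1 ht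
      refine one_nbr hG (p.reverse.append q) ?_ hvs hvt
      intro hv
      rw [Walk.mem_support_append_iff, Walk.support_reverse, List.mem_reverse] at hv
      rcases hv with hv | hv
      · simpa using hp v hv
      · simpa using hq v hv
    have hcard : K.card < n := by
      have := Finset.card_le_card hKD
      rw [Finset.card_erase_of_mem g2] at this
      have : 0 < D.card := Finset.card_pos.2 ⟨v, g2⟩
      omega
    have hsub : K ⊆ W := hKD.trans ((Finset.erase_subset _ _).trans g1)
    have hP : ∃ B ⊆ K, P3 G B := by
      refine ⟨{a, b, c}, ?_, a, b, c, h1, h2, h3, h4, h5, rfl⟩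
      intro z hz
      simp at hz
      rcases hz with rfl | rfl | rfl <;> assumption
    obtain ⟨u, huK, hu⟩ : ∃ u ∈ K, ∀ s ∈ K, G.Adj v s → s = u := by
      by_cases hex : ∃ u ∈ K, G.Adj v u
      · obtain ⟨u, huK, hu⟩ := hex
        exact ⟨u, huK, fun s hs h => huniq s hs u huK h hu⟩
      · exact ⟨b, hbK, fun s hs h => absurd ⟨s, hs, h⟩ hex⟩
    refine ih K.card hcard K u rfl ⟨hsub, huK, hP, ?_⟩
    intro s hs hsu t ht hst
    have hsD := Finset.mem_erase.1 (hKD hs)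
    have htD := g4 s hsD.2 hsD.1 t ht hst
    refine hstep s hs t hst (Finset.mem_erase.2 ⟨?_, htD⟩)
    rintro rfl
    exact hsu (hu s hs hst.symm)
  obtain ⟨a, b, c, h1, h2, h3, h4, h5, ha, hb, hc⟩ := P3_of_not hW
  refine key _ W a rfl ⟨subset_rfl, ha, ⟨{a, b, c}, ?_, a, b, c, h1, h2, h3, h4, h5, rfl⟩,
    fun _ _ _ b hb _ => hb⟩
  intro z hz
  simp at hz
  rcases hz with rfl | rfl | rfl <;> assumption

lemma koenig {G : SimpleGraph V} (hG : G.IsAcyclic) : ∀ n, ∀ W : Finset V, W.card = n →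
    ∃ (S : Finset V) (M : Finset (Finset V)), S ⊆ W ∧ IsDissocSet G S ∧ M3 G M ∧
      (∀ B ∈ M, B ⊆ W) ∧ M.card + S.card = W.card := by
  intro n
  induction n using Nat.strong_induction_on with
  | _ n ih =>
  intro W hn
  by_cases hW : IsDissocSet G W
  · exact ⟨W, ∅, subset_rfl, hW, ⟨by simp, by simp⟩, by simp, by simp⟩
  obtain ⟨D, v, ⟨g1, g2, ⟨B, hBD, hB⟩, g4⟩, hd⟩ := exists_good hG hW
  have hDpos : 0 < D.card := Finset.card_pos.2 ⟨v, g2⟩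
  have hc : (W \ D).card = W.card - D.card := Finset.card_sdiff_of_subset g1
  have hDW := Finset.card_le_card g1
  obtain ⟨S, M, s1, s2, s3, s4, s5⟩ := ih (W \ D).card (by omega) (W \ D) rfl
  have hSD : ∀ z ∈ S, z ∈ W ∧ z ∉ D := fun z hz => Finset.mem_sdiff.1 (s1 hz)
  have hno : ∀ p ∈ D.erase v, ∀ q ∈ S, ¬ G.Adj p q := by
    intro p hp q hq h
    have hp := Finset.mem_erase.1 hp
    exact (hSD q hq).2 (g4 p hp.2 hp.1 q (hSD q hq).1 h)
  have hBne : B.Nonempty := by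
    rw [← Finset.card_pos, hB.card]; norm_num
  have hMB : ∀ B' ∈ M, ∀ z ∈ B', z ∉ B := fun B' hB' z hz hzB =>
    (Finset.mem_sdiff.1 (s4 B' hB' hz)).2 (hBD hzB)
  have hBM : B ∉ M := by
    intro h
    obtain ⟨z, hz⟩ := hBne
    exact hMB B h z hz hz
  refine ⟨S ∪ D.erase v, insert B M, ?_, ?_, ⟨?_, ?_⟩, ?_, ?_⟩
  · exact Finset.union_subset (s1.trans Finset.sdiff_subset) ((Finset.erase_subset _ _).trans g1)
  · intro a ha b hb c hc hab hac
    rw [Finset.mem_union] at ha hb hc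
    rcases ha with ha | ha
    · have hb' : b ∈ S := hb.resolve_right fun h => hno b h a ha hab.symm
      have hc' : c ∈ S := hc.resolve_right fun h => hno c h a ha hac.symm
      exact s2 a ha b hb' c hc' hab hac
    · have hb' := hb.resolve_left fun h => hno a ha b h hab
      have hc' := hc.resolve_left fun h => hno a ha c h hac
      exact hd a ha b hb' c hc' hab hac
  · intro B' hB'
    rcases Finset.mem_insert.1 hB' with rfl | h
    · exact hB
    · exact s3.1 B' h
  · intro B1 h1 B2 h2 z hz1 hz2
    rcases Finset.mem_insert.1 h1 with rfl | h1 <;> rcases Finset.mem_insert.1 h2 with rfl | h2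
    · rfl
    · exact absurd hz1 (hMB B2 h2 z hz2)
    · exact absurd hz2 (hMB B1 (by assumption) z hz1)
    · exact s3.2 B1 h1 B2 h2 z hz1 hz2
  · intro B' hB'
    rcases Finset.mem_insert.1 hB' with rfl | h
    · exact hBD.trans g1
    · exact (s4 B' h).trans Finset.sdiff_subset
  · rw [Finset.card_insert_of_notMem hBM, Finset.card_union_of_disjoint,
      Finset.card_erase_of_mem g2]
    · omega
    · rw [Finset.disjoint_left]
      intro z hz hz'
      exact (hSD z hz).2 (Finset.mem_erase.1 hz').2

lemma diss_bdd (G : SimpleGraph V) : BddAbove {n | ∃ S : Finset V, IsDissocSet G S ∧ S.card = n} :=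
  ⟨Fintype.card V, by rintro n ⟨S, _, rfl⟩; exact Finset.card_le_univ S⟩

lemma le_dissNum {G : SimpleGraph V} {S : Finset V} (h : IsDissocSet G S) : S.card ≤ dissNum G :=
  le_csSup (diss_bdd G) ⟨S, h, rfl⟩

lemma exists_max (G : SimpleGraph V) : ∃ S, IsMaxDissocSet G S := by
  have := Nat.sSup_mem (s := {n | ∃ S : Finset V, IsDissocSet G S ∧ S.card = n})
    ⟨0, ∅, by simp [IsDissocSet], rfl⟩ (diss_bdd G)
  obtain ⟨S, h1, h2⟩ := this
  exact ⟨S, h1, h2⟩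

lemma exists_M {G : SimpleGraph V} (hG : G.IsAcyclic) :
    ∃ M, M3 G M ∧ M.card = Fintype.card V - dissNum G := by
  obtain ⟨S, M, _, s2, s3, _, s5⟩ := koenig hG _ Finset.univ rfl
  refine ⟨M, s3, ?_⟩
  obtain ⟨S', h1, h2⟩ := exists_max G
  have a1 := s3.weak h1
  have a2 := le_dissNum s2
  have a3 := Finset.card_le_univ S'
  rw [Finset.card_univ] at s5
  omega

lemma del_dissoc {G : SimpleGraph V} {u v w : V} (hw : w = u ∨ w = v) {S : Finset V}
    (hS : IsDissocSet (G.deleteEdges {s(u, v)}) S) : IsDissocSet G (S.erase w) := by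
  intro a ha b hb c hc hab hac
  have ha := Finset.mem_erase.1 ha
  have hb := Finset.mem_erase.1 hb
  have hc := Finset.mem_erase.1 hc
  apply hS a ha.2 b hb.2 c hc.2
  · simp only [deleteEdges_adj, Set.mem_singleton_iff]
    refine ⟨hab, fun h => ?_⟩
    have : w ∈ s(a, b) := by rw [h]; simpa using hw
    rw [Sym2.mem_iff] at this
    rcases this with h | h
    · exact ha.1 h.symm
    · exact hb.1 h.symm
  · simp only [deleteEdges_adj, Set.mem_singleton_iff]
    refine ⟨hac, fun h => ?_⟩
    have : w ∈ s(a, c) := by rw [h]; simpa using hw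
    rw [Sym2.mem_iff] at this
    rcases this with h | h
    · exact ha.1 h.symm
    · exact hc.1 h.symm

lemma crit_symm {G : SimpleGraph V} {u v : V} (h : IsAlpha3Critical G u v) :
    IsAlpha3Critical G v u := by
  refine ⟨h.1.symm, ?_⟩
  rw [Sym2.eq_swap]
  exact h.2

lemma crit_flex {G : SimpleGraph V} {u v : V} (h : IsAlpha3Critical G u v) : IsFlexible G u := by
  obtain ⟨S, h1, h2⟩ := exists_max (G.deleteEdges {s(u, v)})
  have hlt := h.2
  have e1 := le_dissNum (del_dissoc (Or.inl rfl) h1)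
  have e2 := le_dissNum (del_dissoc (Or.inr rfl) h1)
  have hu : u ∈ S := by
    by_contra hn
    rw [Finset.erase_eq_of_notMem hn] at e1
    omega
  have hv : v ∈ S := by
    by_contra hn
    rw [Finset.erase_eq_of_notMem hn] at e2
    omega
  have c1 := Finset.card_erase_of_mem hu
  have c2 := Finset.card_erase_of_mem hv
  refine ⟨⟨S.erase v, ⟨del_dissoc (Or.inr rfl) h1, by omega⟩, ?_⟩,
    ⟨S.erase u, ⟨del_dissoc (Or.inl rfl) h1, by omega⟩, by simp⟩⟩
  exact Finset.mem_erase.2 ⟨h.1.ne, hu⟩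

lemma crit_mem {G : SimpleGraph V} {M : Finset (Finset V)} (hM : M3 G M)
    (hc : M.card = Fintype.card V - dissNum G) {u v : V} (h : IsAlpha3Critical G u v) :
    ∃ B ∈ M, u ∈ B ∧ v ∈ B := by
  by_contra hcon
  push Not at hcon
  have hM' : M3 (G.deleteEdges {s(u, v)}) M := by
    refine ⟨fun B hB => ?_, hM.2⟩
    obtain ⟨a, b, c, h1, h2, h3, h4, h5, h6⟩ := hM.1 B hB
    have hn : ∀ p q, p ∈ B → q ∈ B → s(p, q) ≠ s(u, v) := by
      intro p q hp hq he
      rw [Sym2.eq_iff] at he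
      rcases he with ⟨rfl, rfl⟩ | ⟨rfl, rfl⟩
      · exact hcon B hB hp hq
      · exact hcon B hB hq hp
    refine ⟨a, b, c, h1, h2, h3, ?_, ?_, h6⟩
    · simp only [deleteEdges_adj, Set.mem_singleton_iff]
      exact ⟨h4, hn a b (by simp [h6]) (by simp [h6])⟩
    · simp only [deleteEdges_adj, Set.mem_singleton_iff]
      exact ⟨h5, hn b c (by simp [h6]) (by simp [h6])⟩
  obtain ⟨S, h1, h2⟩ := exists_max (G.deleteEdges {s(u, v)})
  have := hM'.weak h1
  have h3 := h.2
  have h4 := Finset.card_le_univ S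
  omega

end

/-- Let `T` be a tree with exactly `k` flexible vertices.  If `T` has exactly `x`
critical `3`-paths and exactly `(k - 3x)/2 = y` insulated `α₃`-critical edges
(so `k = 3x + 2y`), then `T` has at most `3^x * 2^y` maximum dissociation sets. -/
theorem tree_numMaxDissoc_le_of_critical_counts {V : Type*} [Fintype V] [DecidableEq V]
    (T : SimpleGraph V) (hT : T.IsTree) (k x y : ℕ)
    (hk : {v : V | IsFlexible T v}.ncard = k)
    (hx : {s : Finset V | ∃ a b c : V, s = {a, b, c} ∧ IsKPath T 3 [a, b, c] ∧
      IsAlpha3Critical T a b ∧ IsAlpha3Critical T b c}.ncard = x)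
    (hy : {e : Sym2 V | ∃ u v : V, e = s(u, v) ∧ IsInsulated T u v}.ncard = y)
    (hxy : k = 3 * x + 2 * y) :
    {S : Finset V | IsMaxDissocSet T S}.ncard ≤ 3 ^ x * 2 ^ y := by
  classical
  obtain ⟨M, hM, hMc⟩ := exists_M hT.isAcyclic
  set X : Finset (Finset V) := Finset.univ.filter fun s => ∃ a b c : V, s = {a, b, c} ∧
    IsKPath T 3 [a, b, c] ∧ IsAlpha3Critical T a b ∧ IsAlpha3Critical T b c with hX
  set Y : Finset (Finset V) := Finset.univ.filter fun s => ∃ u v : V, s = {u, v} ∧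
    IsInsulated T u v with hY
  have memX : ∀ s, s ∈ X ↔ ∃ a b c : V, s = {a, b, c} ∧
    IsKPath T 3 [a, b, c] ∧ IsAlpha3Critical T a b ∧ IsAlpha3Critical T b c := by
    intro s; simp [hX]
  have memY : ∀ s, s ∈ Y ↔ ∃ u v : V, s = {u, v} ∧ IsInsulated T u v := by
    intro s; simp [hY]
  have hXc : X.card = x := by
    rw [← hx, ← Set.ncard_coe_finset]
    congr 1
    ext s
    simp [hX]
  have hYc : Y.card = y := by
    rw [← hy, ← Set.ncard_coe_finset]
    symm
    refine Set.ncard_congr (fun e _ => e.toFinset) ?_ ?_ ?_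
    · rintro e ⟨u, v, rfl, h⟩
      rw [Finset.mem_coe, memY]
      exact ⟨u, v, by ext z; simp, h⟩
    · intro e e' _ _ h
      ext z
      rw [← Sym2.mem_toFinset, h, Sym2.mem_toFinset]
    · intro s hs
      obtain ⟨u, v, rfl, h⟩ := (memY s).1 (Finset.mem_coe.1 hs)
      exact ⟨s(u, v), ⟨u, v, rfl, h⟩, by ext z; simp⟩
  have Xdist : ∀ a b c, IsKPath T 3 [a, b, c] → a ≠ b ∧ a ≠ c ∧ b ≠ c := by
    intro a b c h
    have := h.2.1
    simp at this
    tauto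
  have X3 : ∀ s ∈ X, s.card = 3 := by
    intro s hs
    obtain ⟨a, b, c, rfl, h, _⟩ := (memX s).1 hs
    obtain ⟨h1, h2, h3⟩ := Xdist a b c h
    exact Finset.card_eq_three.2 ⟨a, b, c, h1, h2, h3, rfl⟩
  have Y2 : ∀ s ∈ Y, s.card = 2 := by
    intro s hs
    obtain ⟨u, v, rfl, h⟩ := (memY s).1 hs
    exact Finset.card_pair h.1.1.ne
  have XM : ∀ s ∈ X, s ∈ M := by
    intro s hs
    have hs3 := X3 s hs
    obtain ⟨a, b, c, rfl, h, c1, c2⟩ := (memX s).1 hs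
    obtain ⟨B, hB, ha, hb⟩ := crit_mem hM hMc c1
    obtain ⟨B', hB', hb', hc⟩ := crit_mem hM hMc c2
    obtain rfl := hM.2 B hB B' hB' b hb hb'
    have : ({a, b, c} : Finset V) = B := by
      apply Finset.eq_of_subset_of_card_le
      · intro z hz
        simp at hz
        rcases hz with rfl | rfl | rfl <;> assumption
      · rw [hs3, (hM.1 B hB).card]
    rw [this]; exact hB
  -- every vertex of a block lies on a critical edge inside the block
  have Fcrit : ∀ s ∈ X ∪ Y, ∀ z ∈ s, ∃ w ∈ s, IsAlpha3Critical T z w := by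
    intro s hs z hz
    rcases Finset.mem_union.1 hs with hs | hs
    · obtain ⟨a, b, c, rfl, h, c1, c2⟩ := (memX s).1 hs
      simp at hz
      rcases hz with rfl | rfl | rfl
      · exact ⟨b, by simp, c1⟩
      · exact ⟨c, by simp, c2⟩
      · exact ⟨b, by simp, crit_symm c2⟩
    · obtain ⟨u, v, rfl, h⟩ := (memY s).1 hs
      simp at hz
      rcases hz with rfl | rfl
      · exact ⟨v, by simp, h.1⟩
      · exact ⟨u, by simp, crit_symm h.1⟩
  -- a block meeting an insulated edge is that edge
  have insul : ∀ u v, IsInsulated T u v → ∀ z w, IsAlpha3Critical T z w → (z = u ∨ z = v) →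
      s(z, w) = s(u, v) := by
    intro u v h z w hc hz
    by_contra hne
    have := h.2 z w hc hne
    tauto
  have Ydisj : ∀ s ∈ Y, ∀ t ∈ X ∪ Y, ∀ z, z ∈ s → z ∈ t → s = t := by
    intro s hs t ht z hzs hzt
    obtain ⟨u, v, rfl, h⟩ := (memY s).1 hs
    simp only [Finset.mem_insert, Finset.mem_singleton] at hzs
    rcases Finset.mem_union.1 ht with ht | ht
    · exfalso
      obtain ⟨a, b, c, rfl, hp, c1, c2⟩ := (memX t).1 ht
      obtain ⟨d1, d2, d3⟩ := Xdist a b c hp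
      have key : s(a, b) = s(u, v) ∨ s(b, c) = s(u, v) := by
        simp at hzt
        rcases hzt with rfl | rfl | rfl
        · exact Or.inl (insul u v h _ _ c1 hzs)
        · exact Or.inr (insul u v h _ _ c2 hzs)
        · right; rw [Sym2.eq_swap]; exact insul u v h _ _ (crit_symm c2) hzs
      have hb : b = u ∨ b = v := by
        rcases key with k | k
        · have : b ∈ s(u, v) := by rw [← k]; simp
          simpa using this
        · have : b ∈ s(u, v) := by rw [← k]; simp
          simpa using this
      have k1 := insul u v h _ _ (crit_symm c1) hb
      have k2 := insul u v h _ _ c2 hb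
      rw [← k2, Sym2.congr_right] at k1
      exact d2 k1
    · obtain ⟨u', v', rfl, h'⟩ := (memY t).1 ht
      simp at hzt
      have : s(u', v') = s(u, v) := by
        rcases hzt with rfl | rfl
        · exact insul u v h _ _ h'.1 hzs
        · rw [Sym2.eq_swap]; exact insul u v h _ _ (crit_symm h'.1) hzs
      ext q
      have hq : q ∈ s(u', v') ↔ q ∈ s(u, v) := by rw [this]
      simpa using hq.symm
  have Fdisj : ∀ s ∈ X ∪ Y, ∀ t ∈ X ∪ Y, ∀ z, z ∈ s → z ∈ t → s = t := by
    intro s hs t ht z hzs hzt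
    rcases Finset.mem_union.1 hs with hs' | hs'
    · rcases Finset.mem_union.1 ht with ht' | ht'
      · exact hM.2 s (XM s hs') t (XM t ht') z hzs hzt
      · exact (Ydisj t ht' s hs z hzt hzs).symm
    · exact Ydisj s hs' t ht z hzs hzt
  have XYd : Disjoint X Y := by
    rw [Finset.disjoint_left]
    intro s h1 h2
    have := X3 s h1
    have := Y2 s h2
    omega
  have Ucard : ((X ∪ Y).biUnion id).card = k := by
    rw [Finset.card_biUnion, Finset.sum_union XYd]
    · simp only [id]
      rw [Finset.sum_const_nat X3, Finset.sum_const_nat Y2, hXc, hYc, hxy]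
      ring
    · intro s hs t ht hne
      refine Finset.disjoint_left.2 ?_
      intro z h1 h2
      exact hne (Fdisj s hs t ht z h1 h2)
  have Ueq : (((X ∪ Y).biUnion id : Finset V) : Set V) = {v : V | IsFlexible T v} := by
    apply Set.eq_of_subset_of_ncard_le
    · intro z hz
      simp only [Finset.mem_coe, Finset.mem_biUnion, id] at hz
      obtain ⟨s, hs, hz⟩ := hz
      obtain ⟨w, _, hc⟩ := Fcrit s hs z hz
      exact crit_flex hc
    · rw [hk, Set.ncard_coe_finset, Ucard]
    · exact Set.toFinite _
  have flexU : ∀ z, IsFlexible T z → ∃ s ∈ X ∪ Y, z ∈ s := by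
    intro z hz
    have : z ∈ (((X ∪ Y).biUnion id : Finset V) : Set V) := by rw [Ueq]; exact hz
    simpa only [Finset.mem_coe, Finset.mem_biUnion, id] using this
  have tight : ∀ S, IsMaxDissocSet T S → ∀ B ∈ M, (B \ S).card = 1 := by
    intro S hS B hB
    exact hM.tight hS.1 (by rw [hS.2, hMc]) hB
  have one : ∀ S, IsMaxDissocSet T S → ∀ s ∈ X ∪ Y, ∃ z, s \ S = {z} := by
    intro S hS s hs
    rcases Finset.mem_union.1 hs with hs' | hs'
    · exact Finset.card_eq_one.1 (tight S hS s (XM s hs'))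
    · obtain ⟨u, v, rfl, h⟩ := (memY s).1 hs'
      obtain ⟨B, hB, hu, hv⟩ := crit_mem hM hMc h.1
      have huv := h.1.1.ne
      have hsub : ({u, v} : Finset V) ⊆ B := by
        intro z hz
        simp at hz
        rcases hz with rfl | rfl <;> assumption
      have hd : (B \ {u, v}).card = 1 := by
        rw [Finset.card_sdiff_of_subset hsub, (hM.1 B hB).card, Finset.card_pair huv]
      obtain ⟨w, hw⟩ := Finset.card_eq_one.1 hd
      have hwm : ∀ z, z ∈ B → z = u ∨ z = v ∨ z = w := by
        intro z hz
        by_cases hz' : z ∈ ({u, v} : Finset V)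
        · simp at hz'; tauto
        · have : z ∈ B \ {u, v} := Finset.mem_sdiff.2 ⟨hz, hz'⟩
          rw [hw] at this
          simp at this; tauto
      have hwB : w ∈ B ∧ w ∉ ({u, v} : Finset V) := by
        rw [← Finset.mem_sdiff, hw]; simp
      have hwu : w ≠ u ∧ w ≠ v := by simpa using hwB.2
      have hnf : ¬ IsFlexible T w := by
        intro hf
        obtain ⟨t, ht, hwt⟩ := flexU w hf
        obtain ⟨q, _, hc⟩ := Fcrit t ht w hwt
        obtain ⟨B', hB', hwB', hq⟩ := crit_mem hM hMc hc
        obtain rfl := hM.2 B hB B' hB' w hwB.1 hwB'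
        have hqw : q ≠ w := hc.1.ne'
        have hquv : q = u ∨ q = v := by have := hwm q hq; tauto
        have := insul u v h q w (crit_symm hc) hquv
        have hh : w ∈ s(u, v) := by rw [← this]; simp
        simp at hh
        tauto
      have hwS : w ∈ S := by
        by_contra hn
        obtain ⟨S', hS', huS'⟩ := (crit_flex h.1).2
        have hwS' : w ∉ S' := fun h' => hnf ⟨⟨S', hS', h'⟩, ⟨S, hS, hn⟩⟩
        have := Finset.card_le_one.1 (tight S' hS' B hB).le u (by simp [hu, huS']) w
          (by simp [hwB.1, hwS'])
        exact hwu.1 this.symm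
      have : ({u, v} : Finset V) \ S = B \ S := by
        ext z
        simp only [Finset.mem_sdiff]
        constructor
        · rintro ⟨a1, a2⟩; exact ⟨hsub a1, a2⟩
        · rintro ⟨a1, a2⟩
          refine ⟨?_, a2⟩
          rcases hwm z a1 with rfl | rfl | rfl
          · simp
          · simp
          · exact absurd hwS a2
      rw [this]
      exact Finset.card_eq_one.1 (tight S hS B hB)
  have hcount : ((X ∪ Y).pi (fun s => s)).card = 3 ^ x * 2 ^ y := by
    rw [Finset.card_pi, Finset.prod_union XYd, Finset.prod_congr rfl X3, Finset.prod_congr rfl Y2]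
    simp [hXc, hYc]
  haveI : Nonempty V := hT.connected.nonempty
  choose! f hf using one
  have hset : {S : Finset V | IsMaxDissocSet T S} =
      ((Finset.univ.filter fun S => IsMaxDissocSet T S : Finset (Finset V)) : Set (Finset V)) := by
    ext S; simp
  rw [hset, Set.ncard_coe_finset, ← hcount]
  refine Finset.card_le_card_of_injOn (fun S s _ => f S s) ?_ ?_
  · intro S hS
    have hS : IsMaxDissocSet T S := by simpa using hS
    rw [Finset.mem_coe, Finset.mem_pi]
    intro s hs
    have : f S s ∈ s \ S := by rw [hf S hS s hs]; simp
    exact (Finset.mem_sdiff.1 this).1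
  · intro S hS S' hS' he
    have hS : IsMaxDissocSet T S := by simpa using hS
    have hS' : IsMaxDissocSet T S' := by simpa using hS'
    ext z
    by_cases hz : IsFlexible T z
    · obtain ⟨s, hs, hzs⟩ := flexU z hz
      have e1 : f S s = f S' s := congrFun (congrFun he s) hs
      have e2 : s \ S = s \ S' := by rw [hf S hS s hs, hf S' hS' s hs, e1]
      have e3 : z ∈ s \ S ↔ z ∈ s \ S' := by rw [e2]
      simp only [Finset.mem_sdiff, hzs, true_and] at e3
      exact not_iff_not.1 e3
    · constructor
      · intro h
        by_contra hn
        exact hz ⟨⟨S, hS, h⟩, ⟨S', hS', hn⟩⟩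
      · intro h
        by_contra hn
        exact hz ⟨⟨S', hS', h⟩, ⟨S, hS, hn⟩⟩
end

section
/- Let T be a tree with exactly k flexible vertices. If k = 3t for a nonnegative integer t, then T has at most 3^t maximum dissociation sets; if k = 3t + 1, then T has at most 3^{t−1}·2² maximum dissociation sets; and if k = 3t + 2, then T has at most 3^t·2 maximum dissociation sets. -/
open SimpleGraph

/-- Maximal product function. -/
def mmF : ℕ → ℕ
  | 0 => 1
  | 1 => 1
  | 2 => 2
  | 3 => 3
  | 4 => 4
  | (n + 5) => 3 * mmF (n + 2)

theorem mmF_add (a : ℕ) : mmF a ≤ mmF (a + 1) ∧ mmF a * 2 ≤ mmF (a + 2) ∧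
    mmF a * 3 ≤ mmF (a + 3) := by
  induction a using Nat.strong_induction_on with
  | _ a ih =>
    match a, ih with
    | 0, _ => decide
    | 1, _ => decide
    | 2, _ => decide
    | 3, _ => decide
    | 4, _ => decide
    | (n + 5), ih =>
      have h := ih (n + 2) (by omega)
      have e1 : mmF (n + 5) = 3 * mmF (n + 2) := by rw [mmF]
      have e2 : mmF (n + 5 + 1) = 3 * mmF (n + 2 + 1) := by
        rw [show n + 5 + 1 = (n + 1) + 5 by ring, mmF]
      have e3 : mmF (n + 5 + 2) = 3 * mmF (n + 2 + 2) := by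
        rw [show n + 5 + 2 = (n + 2) + 5 by ring, mmF]
      have e4 : mmF (n + 5 + 3) = 3 * mmF (n + 2 + 3) := by
        rw [show n + 5 + 3 = (n + 3) + 5 by ring, mmF]
      omega

theorem mmF_mul (a c : ℕ) (hc : c ≤ 3) : mmF c * mmF a ≤ mmF (c + a) := by
  obtain ⟨h1, h2, h3⟩ := mmF_add a
  rw [mul_comm, add_comm]
  interval_cases c <;> simp [mmF] <;> assumption

theorem mmF_closed (t : ℕ) : mmF (3 * t) ≤ 3 ^ t ∧ mmF (3 * t + 1) ≤ 3 ^ (t - 1) * 2 ^ 2 ∧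
    mmF (3 * t + 2) ≤ 3 ^ t * 2 := by
  induction t with
  | zero => decide
  | succ t ih =>
    rcases t with _ | t
    · decide
    · have e1 : mmF (3 * (t + 1 + 1)) = 3 * mmF (3 * (t + 1)) := by
        rw [show 3 * (t + 1 + 1) = (3 * t + 1) + 5 by ring, mmF]
        congr 1
      have e2 : mmF (3 * (t + 1 + 1) + 1) = 3 * mmF (3 * (t + 1) + 1) := by
        rw [show 3 * (t + 1 + 1) + 1 = (3 * t + 2) + 5 by ring, mmF]
        congr 1
      have e3 : mmF (3 * (t + 1 + 1) + 2) = 3 * mmF (3 * (t + 1) + 2) := by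
        rw [show 3 * (t + 1 + 1) + 2 = (3 * t + 3) + 5 by ring, mmF]
        congr 1
      rw [e1, e2, e3]
      simp only [Nat.add_sub_cancel, pow_succ] at ih ⊢
      omega

theorem prod_mmF_le {α : Type*} (M : Finset α) (c : α → ℕ) (hc : ∀ p ∈ M, c p ≤ 3) :
    ∏ p ∈ M, mmF (c p) ≤ mmF (∑ p ∈ M, c p) := by
  classical
  induction M using Finset.induction_on with
  | empty => simp [mmF]
  | insert a s ha ih =>
    rw [Finset.prod_insert ha, Finset.sum_insert ha]
    refine le_trans (Nat.mul_le_mul_left _ (ih fun p hp => hc p (Finset.mem_insert_of_mem hp))) ?_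
    exact mmF_mul _ _ (hc a (Finset.mem_insert_self _ _))

/-- greedy cover and packing -/
theorem greedy_cover {V : Type*} [DecidableEq V] (top : Finset V → V) (rk : Finset V → ℕ)
    (F : Finset (Finset V))
    (htop : ∀ p ∈ F, top p ∈ p)
    (h : ∀ p ∈ F, ∀ q ∈ F, rk q ≤ rk p → ∀ x, x ∈ p → x ∈ q → top p ∈ q) :
    ∃ (M : Finset (Finset V)) (C : Finset V), M ⊆ F ∧
      (∀ p ∈ M, ∀ q ∈ M, p ≠ q → Disjoint p q) ∧ C.card ≤ M.card ∧
      ∀ p ∈ F, ∃ x ∈ p, x ∈ C := by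
  induction F using Finset.strongInduction with
  | _ F ih =>
    rcases F.eq_empty_or_nonempty with rfl | hne
    · exact ⟨∅, ∅, by simp, by simp, by simp, by simp⟩
    · obtain ⟨p, hp, hmax⟩ := F.exists_max_image rk hne
      have hsub : F.filter (fun q => top p ∉ q) ⊆ F := Finset.filter_subset _ _
      obtain ⟨M, C, hM, hd, hc, hcov⟩ := ih (F.filter (fun q => top p ∉ q))
        ⟨hsub, fun hh => (Finset.mem_filter.1 (hh hp)).2 (htop p hp)⟩
        (fun q hq => htop q (hsub hq))
        (fun q hq q' hq' => h q (hsub hq) q' (hsub hq'))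
      have hdis : ∀ q ∈ M, Disjoint p q := by
        intro q hq
        have hq' := Finset.mem_filter.1 (hM hq)
        rw [Finset.disjoint_left]
        intro x hx hxq
        exact hq'.2 (h p hp q hq'.1 (hmax q hq'.1) x hx hxq)
      have hpM : p ∉ M := fun hh => (Finset.mem_filter.1 (hM hh)).2 (htop p hp)
      refine ⟨insert p M, insert (top p) C, ?_, ?_, ?_, ?_⟩
      · intro q hq
        rcases Finset.mem_insert.1 hq with rfl | hq
        · exact hp
        · exact hsub (hM hq)
      · intro a ha b hb hab
        rcases Finset.mem_insert.1 ha with ha1 | ha1 <;>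
        rcases Finset.mem_insert.1 hb with hb1 | hb1
        · exact absurd (ha1.trans hb1.symm) hab
        · exact ha1 ▸ hdis b hb1
        · exact hb1 ▸ (hdis a ha1).symm
        · exact hd a ha1 b hb1 hab
      · rw [Finset.card_insert_of_notMem hpM]
        exact (Finset.card_insert_le _ _).trans (by omega)
      · intro q hq
        by_cases hq' : top p ∈ q
        · exact ⟨_, hq', Finset.mem_insert_self _ _⟩
        · obtain ⟨x, hx, hxC⟩ := hcov q (Finset.mem_filter.2 ⟨hq, hq'⟩)
          exact ⟨x, hx, Finset.mem_insert_of_mem hxC⟩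

theorem tree_parent {V : Type*} (T : SimpleGraph V) (hT : T.IsTree) :
    ∃ (d : V → ℕ) (par : V → V), ∀ u v, T.Adj u v →
      (par u = v ∧ d u = d v + 1) ∨ (par v = u ∧ d v = d u + 1) := by
  obtain ⟨r⟩ := hT.connected.nonempty
  choose P hP hPu using fun v => hT.existsUnique_path r v
  have key : ∀ v w, T.Adj v w → T.dist r v = T.dist r w + 1 → (P v).penultimate = w := by
    intro v w hvw hd
    obtain ⟨q, hq⟩ := hT.connected.exists_walk_length_eq_dist r w
    have : (q.concat hvw.symm).IsPath := by
      apply Walk.isPath_of_length_eq_dist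
      rw [Walk.length_concat, hq, hd]
    rw [← hPu v _ this, Walk.penultimate_concat]
  refine ⟨fun v => T.dist r v, fun v => (P v).penultimate, fun u v huv => ?_⟩
  rcases hT.dist_eq_dist_add_one_of_adj r huv with h | h
  · exact Or.inl ⟨key u v huv h, h⟩
  · exact Or.inr ⟨key v u huv.symm h, h⟩

/-- `p` is the vertex set of a 3-path. -/
def IsP3 {V : Type*} [DecidableEq V] (T : SimpleGraph V) (p : Finset V) : Prop :=
  ∃ a b c, a ≠ c ∧ T.Adj b a ∧ T.Adj b c ∧ p = {a, b, c}

theorem IsP3.card {V : Type*} [DecidableEq V] {T : SimpleGraph V} {p : Finset V}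
    (h : IsP3 T p) : p.card = 3 := by
  obtain ⟨a, b, c, hac, hba, hbc, rfl⟩ := h
  exact Finset.card_eq_three.2 ⟨a, b, c, hba.ne', hac, hbc.ne, rfl⟩

theorem tree_cover {V : Type*} [Fintype V] [DecidableEq V] (T : SimpleGraph V) (hT : T.IsTree) :
    ∃ (M : Finset (Finset V)) (C : Finset V), (∀ p ∈ M, IsP3 T p) ∧
      (∀ p ∈ M, ∀ q ∈ M, p ≠ q → Disjoint p q) ∧ C.card ≤ M.card ∧
      ∀ p, IsP3 T p → ∃ x ∈ p, x ∈ C := by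
  classical
  obtain ⟨d, par, hpar⟩ := tree_parent T hT
  obtain ⟨r⟩ := hT.connected.nonempty
  have hex : ∀ p : Finset V, ∃ t, IsP3 T p → t ∈ p ∧
      ∀ x ∈ p, d t ≤ d x ∧ (x = t ∨ (par x ∈ p ∧ d x = d (par x) + 1)) := by
    intro p
    by_cases hp : IsP3 T p
    · obtain ⟨a, b, c, hac, hba, hbc, rfl⟩ := hp
      rcases hpar _ _ hba with ⟨h1, h1'⟩ | ⟨h1, h1'⟩ <;>
      rcases hpar _ _ hbc with ⟨h2, h2'⟩ | ⟨h2, h2'⟩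
      · exact absurd (h1.symm.trans h2) hac
      · refine ⟨a, fun _ => ⟨by simp, ?_⟩⟩
        simp only [Finset.mem_insert, Finset.mem_singleton]
        rintro x (rfl | rfl | rfl)
        · simp
        · refine ⟨by omega, Or.inr ⟨Or.inl h1, by rw [h1]; omega⟩⟩
        · refine ⟨by omega, Or.inr ⟨Or.inr (Or.inl h2), by rw [h2]; omega⟩⟩
      · refine ⟨c, fun _ => ⟨by simp, ?_⟩⟩
        simp only [Finset.mem_insert, Finset.mem_singleton]
        rintro x (rfl | rfl | rfl)
        · refine ⟨by omega, Or.inr ⟨Or.inr (Or.inl h1), by rw [h1]; omega⟩⟩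
        · refine ⟨by omega, Or.inr ⟨Or.inr (Or.inr h2), by rw [h2]; omega⟩⟩
        · simp
      · refine ⟨b, fun _ => ⟨by simp, ?_⟩⟩
        simp only [Finset.mem_insert, Finset.mem_singleton]
        rintro x (rfl | rfl | rfl)
        · refine ⟨by omega, Or.inr ⟨Or.inr (Or.inl h1), by rw [h1]; omega⟩⟩
        · simp
        · refine ⟨by omega, Or.inr ⟨Or.inr (Or.inl h2), by rw [h2]; omega⟩⟩
    · exact ⟨r, fun h => absurd h hp⟩
  choose top htop using hex
  obtain ⟨M, C, hM, hd, hc, hcov⟩ := greedy_cover top (fun p => d (top p))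
    (Finset.univ.filter (fun p => IsP3 T p))
    (fun p hp => (htop p (Finset.mem_filter.1 hp).2).1) (by
      intro p hp q hq hle x
      have hp := htop p (Finset.mem_filter.1 hp).2
      have hq := htop q (Finset.mem_filter.1 hq).2
      induction hn : d x using Nat.strong_induction_on generalizing x with
      | _ n ih =>
        intro hxp hxq
        rcases (hp.2 x hxp).2 with rfl | ⟨h1, h2⟩
        · exact hxq
        · have h3 := (hp.2 _ h1).1
          rcases (hq.2 x hxq).2 with h4 | ⟨h4, h5⟩
          · rw [← h4] at hle
            omega
          · exact ih _ (by omega) (par x) rfl h1 h4)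
  exact ⟨M, C, fun p hp => (Finset.mem_filter.1 (hM hp)).2, hd, hc,
    fun p hp => hcov p (Finset.mem_filter.2 ⟨Finset.mem_univ _, hp⟩)⟩

theorem dissoc_bdd {V : Type*} [Fintype V] (T : SimpleGraph V) :
    BddAbove {n | ∃ S : Finset V, IsDissocSet T S ∧ S.card = n} := by
  refine ⟨Fintype.card V, ?_⟩
  rintro n ⟨S, _, rfl⟩
  exact S.card_le_univ

/-- every minimum cover meets each path of the packing exactly once, and is covered by it -/
theorem tree_structure {V : Type*} [Fintype V] [DecidableEq V] (T : SimpleGraph V)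
    (hT : T.IsTree) :
    ∃ M : Finset (Finset V), (∀ p ∈ M, p.card = 3) ∧
      (∀ p ∈ M, ∀ q ∈ M, p ≠ q → Disjoint p q) ∧
      ∀ S, IsMaxDissocSet T S → (∀ p ∈ M, (p ∩ Sᶜ).card = 1) ∧ Sᶜ ⊆ M.biUnion id := by
  obtain ⟨M, C, hM, hd, hc, hcov⟩ := tree_cover T hT
  refine ⟨M, fun p hp => (hM p hp).card, hd, ?_⟩
  rintro S ⟨hS, hcard⟩
  have hC : IsDissocSet T Cᶜ := by
    intro v hv u hu w hw hvu hvw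
    by_contra hne
    obtain ⟨x, hx, hxC⟩ := hcov {u, v, w} ⟨u, v, w, hne, hvu, hvw, rfl⟩
    simp only [Finset.mem_insert, Finset.mem_singleton] at hx
    simp only [Finset.mem_compl] at hv hu hw
    rcases hx with rfl | rfl | rfl <;> contradiction
  have h1 : Cᶜ.card ≤ S.card := by
    rw [hcard]
    exact le_csSup (dissoc_bdd T) ⟨_, hC, rfl⟩
  have h2 : Sᶜ.card ≤ M.card := by
    have := Finset.card_compl_add_card C
    have := Finset.card_compl_add_card S
    omega
  have hpos : ∀ p ∈ M, 1 ≤ (p ∩ Sᶜ).card := by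
    intro p hp
    obtain ⟨a, b, c, hac, hba, hbc, rfl⟩ := hM p hp
    rw [Nat.one_le_iff_ne_zero, Finset.card_ne_zero]
    by_contra hemp
    rw [Finset.not_nonempty_iff_eq_empty] at hemp
    have hin : ∀ x ∈ ({a, b, c} : Finset V), x ∈ S := by
      intro x hx
      by_contra hxS
      have : x ∈ ({a, b, c} : Finset V) ∩ Sᶜ := by
        rw [Finset.mem_inter, Finset.mem_compl]; exact ⟨hx, hxS⟩
      rw [hemp] at this
      simp at this
    exact hac (hS b (hin _ (by simp)) a (hin _ (by simp)) c (hin _ (by simp)) hba hbc)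
  have hU : (M.biUnion (fun p => p ∩ Sᶜ)).card = ∑ p ∈ M, (p ∩ Sᶜ).card := by
    apply Finset.card_biUnion
    intro p hp q hq hpq
    exact (hd p hp q hq hpq).mono Finset.inter_subset_left Finset.inter_subset_left
  have hsub : M.biUnion (fun p => p ∩ Sᶜ) ⊆ Sᶜ := by
    rw [Finset.biUnion_subset]
    exact fun p _ => Finset.inter_subset_right
  have h3 := Finset.card_le_card hsub
  have h4 : M.card ≤ ∑ p ∈ M, (p ∩ Sᶜ).card := by
    rw [Finset.card_eq_sum_ones]
    exact Finset.sum_le_sum hpos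
  have h5 : ∑ p ∈ M, 1 = ∑ p ∈ M, (p ∩ Sᶜ).card := by
    rw [← Finset.card_eq_sum_ones]; omega
  refine ⟨fun p hp => ((Finset.sum_eq_sum_iff_of_le hpos).1 h5 p hp).symm, ?_⟩
  have h6 : M.biUnion (fun p => p ∩ Sᶜ) = Sᶜ := Finset.eq_of_subset_of_card_le hsub (by omega)
  rw [← h6]
  exact Finset.biUnion_mono fun p _ => Finset.inter_subset_left

theorem count_lemma {V : Type*} [DecidableEq V] (M : Finset (Finset V))
    (hM : ∀ p ∈ M, p.card = 3)
    (hd : ∀ p ∈ M, ∀ q ∈ M, p ≠ q → Disjoint p q) (D : Finset (Finset V))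
    (hD : ∀ E ∈ D, (∀ p ∈ M, (p ∩ E).card = 1) ∧ E ⊆ M.biUnion id)
    (Fl : Finset V) (hFl : ∀ v, v ∈ Fl ↔ (∃ E ∈ D, v ∈ E) ∧ (∃ E ∈ D, v ∉ E)) :
    D.card ≤ mmF Fl.card := by
  have h1 : D.card ≤ ∏ p ∈ M, (p ∩ D.biUnion id).card := by
    have : ∏ p ∈ M, (p ∩ D.biUnion id).card =
        (M.pi (fun p => Finset.powersetCard 1 (p ∩ D.biUnion id))).card := by
      rw [Finset.card_pi]
      exact Finset.prod_congr rfl fun p _ => by rw [Finset.card_powersetCard, Nat.choose_one_right]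
    rw [this]
    apply Finset.card_le_card_of_injOn (fun E p _ => p ∩ E)
    · intro E hE
      simp only [Finset.mem_coe, Finset.mem_pi, Finset.mem_powersetCard]
      intro p hp
      refine ⟨Finset.inter_subset_inter_left ?_, (hD E hE).1 p hp⟩
      exact Finset.subset_biUnion_of_mem id hE
    · have aux : ∀ E ∈ D, ∀ E' ∈ D, (fun (p : Finset V) (_ : p ∈ M) => p ∩ E) =
          (fun (p : Finset V) (_ : p ∈ M) => p ∩ E') → E ⊆ E' := by
        intro E hE E' hE' he x hx
        obtain ⟨p, hp, hxp⟩ := Finset.mem_biUnion.1 ((hD E hE).2 hx)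
        have := congrFun (congrFun he p) hp
        have hx' : x ∈ p ∩ E := Finset.mem_inter.2 ⟨hxp, hx⟩
        rw [this] at hx'
        exact (Finset.mem_inter.1 hx').2
      intro E hE E' hE' he
      exact (aux E hE E' hE' he).antisymm (aux E' hE' E hE he.symm)
  have h2 : ∀ p ∈ M, (p ∩ D.biUnion id).card ≤ mmF (p ∩ Fl).card := by
    intro p hp
    have h3 : (p ∩ Fl).card ≤ 3 := (Finset.card_le_card Finset.inter_subset_left).trans (hM p hp).le
    by_cases hle : (p ∩ D.biUnion id).card ≤ 1
    · refine hle.trans ?_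
      interval_cases (p ∩ Fl).card <;> decide
    · have hsub : p ∩ D.biUnion id ⊆ p ∩ Fl := by
        intro v hv
        obtain ⟨hvp, hvD⟩ := Finset.mem_inter.1 hv
        obtain ⟨E, hE, hvE⟩ := Finset.mem_biUnion.1 hvD
        refine Finset.mem_inter.2 ⟨hvp, (hFl v).2 ⟨⟨E, hE, hvE⟩, ?_⟩⟩
        obtain ⟨w, hw, hwv⟩ := Finset.exists_mem_ne (by omega : 1 < (p ∩ D.biUnion id).card) v
        obtain ⟨hwp, hwD⟩ := Finset.mem_inter.1 hw
        obtain ⟨E', hE', hwE⟩ := Finset.mem_biUnion.1 hwD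
        refine ⟨E', hE', fun hvE' => hwv ?_⟩
        exact Finset.card_le_one.1 ((hD E' hE').1 p hp).le w (Finset.mem_inter.2 ⟨hwp, hwE⟩) v
          (Finset.mem_inter.2 ⟨hvp, hvE'⟩)
      have h4 := Finset.card_le_card hsub
      refine h4.trans ?_
      interval_cases (p ∩ Fl).card <;> decide
  have h5 : ∑ p ∈ M, (p ∩ Fl).card = Fl.card := by
    rw [← Finset.card_biUnion]
    · congr 1
      ext v
      simp only [Finset.mem_biUnion, Finset.mem_inter]
      constructor
      · rintro ⟨_, _, _, h⟩; exact h
      · intro hv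
        obtain ⟨E, hE, hvE⟩ := ((hFl v).1 hv).1
        obtain ⟨p, hp, hvp⟩ := Finset.mem_biUnion.1 ((hD E hE).2 hvE)
        exact ⟨p, hp, hvp, hv⟩
    · intro p hp q hq hpq
      exact (hd p hp q hq hpq).mono Finset.inter_subset_left Finset.inter_subset_left
  rw [← h5]
  refine h1.trans ((Finset.prod_le_prod' h2).trans (prod_mmF_le _ _ fun p hp => ?_))
  exact (Finset.card_le_card Finset.inter_subset_left).trans (hM p hp).le

theorem main_bound {V : Type*} [Fintype V] [DecidableEq V] (T : SimpleGraph V)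
    (hT : T.IsTree) :
    {S : Finset V | IsMaxDissocSet T S}.ncard ≤ mmF {v : V | IsFlexible T v}.ncard := by
  classical
  obtain ⟨M, hM, hd, hS⟩ := tree_structure T hT
  have e1 : {S : Finset V | IsMaxDissocSet T S}.ncard =
      ((Finset.univ.filter (fun S : Finset V => IsMaxDissocSet T S)).image compl).card := by
    rw [Finset.card_image_of_injective _ compl_injective, ← Set.ncard_coe_finset]
    simp
  have e2 : {v : V | IsFlexible T v}.ncard = (Finset.univ.filter (fun v => IsFlexible T v)).card := by
    rw [← Set.ncard_coe_finset]
    simp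
  rw [e1, e2]
  apply count_lemma M hM hd
  · intro E hE
    obtain ⟨S, hS', rfl⟩ := Finset.mem_image.1 hE
    exact hS S (Finset.mem_filter.1 hS').2
  · intro v
    rw [Finset.mem_filter]
    simp only [Finset.mem_filter, Finset.mem_univ, true_and, Finset.mem_image,
      exists_exists_and_eq_and, Finset.mem_compl, not_not]
    unfold IsFlexible
    exact and_comm

/-- Let `T` be a tree with exactly `k` flexible vertices.  If `k = 3t` then `T` has at
most `3^t` maximum dissociation sets; if `k = 3t + 1` then at most `3^(t-1) * 2^2`; and
if `k = 3t + 2` then at most `3^t * 2`. -/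
theorem tree_numMaxDissoc_le_of_flexible_count {V : Type*} [Fintype V] [DecidableEq V]
    (T : SimpleGraph V) (hT : T.IsTree) (k : ℕ)
    (hk : {v : V | IsFlexible T v}.ncard = k) :
    (∀ t : ℕ, k = 3 * t →
      {S : Finset V | IsMaxDissocSet T S}.ncard ≤ 3 ^ t) ∧
    (∀ t : ℕ, k = 3 * t + 1 →
      {S : Finset V | IsMaxDissocSet T S}.ncard ≤ 3 ^ (t - 1) * 2 ^ 2) ∧
    (∀ t : ℕ, k = 3 * t + 2 →
      {S : Finset V | IsMaxDissocSet T S}.ncard ≤ 3 ^ t * 2) := by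
  have h := main_bound T hT
  rw [hk] at h
  refine ⟨?_, ?_, ?_⟩
  · rintro t rfl
    exact h.trans (mmF_closed t).1
  · rintro t rfl
    exact h.trans (mmF_closed t).2.1
  · rintro t rfl
    exact h.trans (mmF_closed t).2.2
end

section
/- Let m be a positive integer and T a tree on 3m + 1 vertices. Then the number of maximum dissociation sets of T is at most 3^{m−1} + 1. -/
open SimpleGraph

/-! Local configurations: `none` is the uncovered vertex, `some (i, a)` is the `a`-th vertex
of the `i`-th path of the packing. -/

abbrev Loc (t : ℕ) := Option (Fin t × Fin 3)

def inAdj (a b : Fin 3) : Bool := (a.val + 1 == b.val) || (b.val + 1 == a.val)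

def hit {t : ℕ} (f : Fin t → Fin 3) : Loc t → Bool
  | none => false
  | some (i, a) => Nat.beq (f i).val a.val

def eqL {t : ℕ} : Loc t → Loc t → Bool
  | none, none => true
  | some (i, a), some (j, b) => Nat.beq i.val j.val && Nat.beq a.val b.val
  | _, _ => false

theorem eqL_iff {t : ℕ} (x y : Loc t) : eqL x y = true ↔ x = y := by
  rcases x with _ | ⟨i, a⟩ <;> rcases y with _ | ⟨j, b⟩ <;> simp [eqL, Fin.ext_iff]

def nbrs {t : ℕ} (E : List (Loc t × Loc t)) (y : Loc t) : List (Loc t) :=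
  ((E.filter (fun e => eqL e.1 y)).map Prod.snd) ++
  (match y with
   | none => []
   | some (i, a) => ([0, 1, 2].filter (inAdj a)).map (fun b => some (i, b)))

def symE {t : ℕ} (E : List (Loc t × Loc t)) : List (Loc t × Loc t) := E ++ E.map Prod.swap

def good {t : ℕ} (E : List (Loc t × Loc t)) (f : Fin t → Fin 3) : Bool :=
  (symE E).all fun e => (nbrs (symE E) e.2).all fun z =>
    eqL z e.1 || hit f e.1 || hit f e.2 || hit f z

theorem c1 : ∀ (p : Fin 3), ∃ c d : Fin 3, ∀ f : Fin 1 → Fin 3,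
    good [(none, some (0, p))] f = true → f 0 = c ∨ f 0 = d := by decide +kernel

theorem c2 : ∀ (p : Fin 3) (X : Loc 2), X.map Prod.fst ≠ some 1 → ∃ c d : Fin 3,
    ∀ (q : Fin 3) (f : Fin 2 → Fin 3),
      good [(none, some (0, p)), (X, some (1, q))] f = true →
        f 0 = c ∨ (f 0 = d ∧ f 1 = q) := by decide +kernel

def allF : List (Fin 3 → Fin 3) :=
  [0, 1, 2].flatMap fun a => [0, 1, 2].flatMap fun b => [0, 1, 2].map fun c => ![a, b, c]

theorem mem_allF (f : Fin 3 → Fin 3) : f ∈ allF := by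
  have h : ∀ a b c : Fin 3, ![a, b, c] ∈ allF := by decide +kernel
  have : f = ![f 0, f 1, f 2] := by
    funext i
    fin_cases i <;> rfl
  rw [this]
  exact h _ _ _

def pre3 (p q : Fin 3) (X0 : Option (Fin 3)) : List (Fin 3 → Fin 3) :=
  allF.filter (good [(none, some (0, p)), (X0.map (fun a => ((0 : Fin 3), a)), some (1, q))])

theorem c3' : ∀ (p q : Fin 3) (X0 : Option (Fin 3)),
   Nat.ble (pre3 p q X0).length 9 = true ∨ ∀ (r : Fin 3) (Y : Option (Fin 2 × Fin 3)),
   eqL (Y.map (Prod.map Fin.castSucc id)) (X0.map (fun a => ((0 : Fin 3), a))) = true ∨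
   Nat.ble ((pre3 p q X0).filter (good [(none, some (0, p)),
     (X0.map (fun a => ((0 : Fin 3), a)), some (1, q)),
     (Y.map (Prod.map Fin.castSucc id), some (2, r))])).length 9 = true := by
  decide +kernel

theorem c3 (p q : Fin 3) (X0 : Option (Fin 3)) (r : Fin 3) (Y : Loc 3)
    (hY : Y.map Prod.fst ≠ some 2) (hYX : Y ≠ X0.map (fun a => (0, a))) :
    (Finset.univ.filter (fun f : Fin 3 → Fin 3 =>
     good [(none, some (0, p)), (X0.map (fun a => (0, a)), some (1, q))] f = true ∧
     good [(none, some (0, p)), (X0.map (fun a => (0, a)), some (1, q)), (Y, some (2, r))] f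
       = true)).card ≤ 9 := by
  obtain ⟨Z, rfl⟩ : ∃ Z : Option (Fin 2 × Fin 3), Z.map (Prod.map Fin.castSucc id) = Y := by
    rcases Y with _ | ⟨i, a⟩
    · exact ⟨none, rfl⟩
    · fin_cases i
      · exact ⟨some (0, a), rfl⟩
      · exact ⟨some (1, a), rfl⟩
      · simp at hY
  have h : ((pre3 p q X0).filter (good [(none, some (0, p)),
     (X0.map (fun a => ((0 : Fin 3), a)), some (1, q)),
     (Z.map (Prod.map Fin.castSucc id), some (2, r))])).length ≤ 9 := by
    rcases c3' p q X0 with h | h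
    · exact (List.length_filter_le _ _).trans (Nat.le_of_ble_eq_true h)
    · exact Nat.le_of_ble_eq_true ((h r Z).resolve_left (fun h => hYX ((eqL_iff _ _).1 h)))
  refine le_trans ?_ h
  refine le_trans (Finset.card_le_card (t := ((pre3 p q X0).filter (good
    [(none, some (0, p)), (X0.map (fun a => ((0 : Fin 3), a)), some (1, q)),
     (Z.map (Prod.map Fin.castSucc id), some (2, r))])).toFinset) ?_) (List.toFinset_card_le _)
  intro f hf
  rw [List.mem_toFinset, List.mem_filter, pre3, List.mem_filter]
  have := (Finset.mem_filter.1 hf).2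
  exact ⟨⟨mem_allF f, this.1⟩, this.2⟩

theorem cntBound {t m : ℕ} (e : Fin t → Fin m) (he : Function.Injective e)
    (R : Finset (Fin t → Fin 3)) (F : Finset (Fin m → Fin 3)) (h : ∀ f ∈ F, f ∘ e ∈ R) :
    F.card ≤ R.card * 3 ^ (m - t) := by
  classical
  have hc : Fintype.card {j // ¬ j ∈ Set.range e} = m - t := by
    rw [Fintype.card_subtype_compl]
    have : Fintype.card {x // x ∈ Set.range e} = t := by
      have := Fintype.card_congr (Equiv.ofInjective e he)
      rw [Fintype.card_fin] at this
      exact this.symm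
    rw [this, Fintype.card_fin]
  have h2 : (R ×ˢ (Finset.univ : Finset ({j // ¬ j ∈ Set.range e} → Fin 3))).card
      = R.card * 3 ^ (m - t) := by
    rw [Finset.card_product, Finset.card_univ, Fintype.card_fun, hc, Fintype.card_fin]
  rw [← h2]
  apply Finset.card_le_card_of_injOn (fun f => (f ∘ e, fun j => f j.1))
  · intro f hf
    simp only [Finset.coe_product, Finset.coe_univ, Set.mem_prod, Set.mem_univ, and_true]
    exact h f hf
  · intro f _ f' _ hff
    simp only [Prod.mk.injEq] at hff
    funext j
    by_cases hj : j ∈ Set.range e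
    · obtain ⟨s, rfl⟩ := hj
      exact congrFun hff.1 s
    · exact congrFun hff.2 ⟨j, hj⟩

theorem tree_parent_unique {V : Type*} {T : SimpleGraph V} (hT : T.IsTree) (r : V) {y a b : V}
    (ha : T.Adj a y) (hb : T.Adj b y) (hda : T.dist r y = T.dist r a + 1)
    (hdb : T.dist r y = T.dist r b + 1) : a = b := by
  obtain ⟨p, hp⟩ := hT.connected.exists_walk_length_eq_dist r a
  obtain ⟨q, hq⟩ := hT.connected.exists_walk_length_eq_dist r b
  have h1 : (p.concat ha).IsPath := Walk.isPath_of_length_eq_dist _ (by simp [hp, hda])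
  have h2 : (q.concat hb).IsPath := Walk.isPath_of_length_eq_dist _ (by simp [hq, hdb])
  have := (hT.isAcyclic.subsingleton_path r y).elim ⟨_, h1⟩ ⟨_, h2⟩
  have h3 : p.concat ha = q.concat hb := congrArg Subtype.val this
  exact (Walk.concat_inj h3).1

/-- There is a `P₃` in `W` whose highest vertex is `x`. -/
def TopIn {V : Type*} (T : SimpleGraph V) (d : V → ℕ) (W : Finset V) (x : V) : Prop :=
  x ∈ W ∧ ∃ y ∈ W, ∃ z ∈ W, y ≠ z ∧ T.Adj x y ∧ d y = d x + 1 ∧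
    ((T.Adj x z ∧ d z = d x + 1) ∨ (T.Adj y z ∧ d z = d y + 1))

theorem top_of_path {V : Type*} {T : SimpleGraph V} (d : V → ℕ) (W : Finset V)
    (hd : ∀ a b, T.Adj a b → d a = d b + 1 ∨ d b = d a + 1)
    (hu : ∀ y a b, T.Adj a y → T.Adj b y → d y = d a + 1 → d y = d b + 1 → a = b)
    {a b c : V} (ha : a ∈ W) (hb : b ∈ W) (hc : c ∈ W) (hab : T.Adj a b) (hbc : T.Adj b c)
    (hac : a ≠ c) : ∃ t, TopIn T d W t ∧ ∀ w, (w = a ∨ w = b ∨ w = c) → w = t ∨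
      ∃ w', (w' = a ∨ w' = b ∨ w' = c) ∧ T.Adj w' w ∧ d w = d w' + 1 := by
  rcases hd a b hab with h1 | h1 <;> rcases hd b c hbc with h2 | h2
  · refine ⟨c, ⟨hc, b, hb, a, ha, hab.ne', hbc.symm, h2, Or.inr ⟨hab.symm, h1⟩⟩, ?_⟩
    rintro w (rfl | rfl | rfl)
    · exact Or.inr ⟨b, by simp, hab.symm, h1⟩
    · exact Or.inr ⟨c, by simp, hbc.symm, h2⟩
    · exact Or.inl rfl
  · refine ⟨b, ⟨hb, a, ha, c, hc, hac, hab.symm, h1, Or.inl ⟨hbc, h2⟩⟩, ?_⟩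
    rintro w (rfl | rfl | rfl)
    · exact Or.inr ⟨b, by simp, hab.symm, h1⟩
    · exact Or.inl rfl
    · exact Or.inr ⟨b, by simp, hbc, h2⟩
  · exact absurd (hu b a c hab hbc.symm h1 h2) hac
  · refine ⟨a, ⟨ha, b, hb, c, hc, hbc.ne, hab, h1, Or.inr ⟨hbc, h2⟩⟩, ?_⟩
    rintro w (rfl | rfl | rfl)
    · exact Or.inl rfl
    · exact Or.inr ⟨a, by simp, hab, h1⟩
    · exact Or.inr ⟨b, by simp, hbc, h2⟩

theorem konig_step {V : Type*} {T : SimpleGraph V} (d : V → ℕ) (W : Finset V)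
    (hd : ∀ a b, T.Adj a b → d a = d b + 1 ∨ d b = d a + 1)
    (hu : ∀ y a b, T.Adj a y → T.Adj b y → d y = d a + 1 → d y = d b + 1 → a = b)
    (hex : ∃ x, TopIn T d W x) :
    ∃ p : Fin 3 → V, ∃ x : V, (∀ i, p i ∈ W) ∧ Function.Injective p ∧ T.Adj (p 0) (p 1) ∧
      T.Adj (p 1) (p 2) ∧ ∀ a ∈ W, ∀ b ∈ W, ∀ c ∈ W, T.Adj a b → T.Adj b c → a ≠ c →
        (x = a ∨ x = b ∨ x = c) ∨ ∀ i, p i ≠ a ∧ p i ≠ b ∧ p i ≠ c := by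
  classical
  obtain ⟨x0, hx0⟩ := hex
  obtain ⟨x, hx, hmax⟩ := Finset.exists_max_image (W.filter (TopIn T d W)) d
    ⟨x0, by simp [hx0, hx0.1]⟩
  simp only [Finset.mem_filter] at hx hmax
  obtain ⟨hxW, -, y, hy, z, hz, hyz, hxy, hdy, hcase⟩ := hx
  have key : ∀ a ∈ W, ∀ b ∈ W, ∀ c ∈ W, T.Adj a b → T.Adj b c → a ≠ c →
      (x = a ∨ x = b ∨ x = c) ∨ (¬ (y = a ∨ y = b ∨ y = c) ∧ ¬ (z = a ∨ z = b ∨ z = c)) := by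
    intro a ha b hb c hc hab hbc hac
    by_cases hxin : x = a ∨ x = b ∨ x = c
    · exact Or.inl hxin
    right
    obtain ⟨t, ht, hw⟩ := top_of_path d W hd hu ha hb hc hab hbc hac
    have htx := hmax t ⟨ht.1, ht⟩
    have ny : ¬ (y = a ∨ y = b ∨ y = c) := by
      intro h
      rcases hw y h with h' | ⟨w', h1, h2, h3⟩
      · subst h'; omega
      · have := hu y w' x h2 hxy h3 hdy
        subst this; exact hxin h1
    refine ⟨ny, fun h => ?_⟩
    rcases hw z h with h' | ⟨w', h1, h2, h3⟩
    · subst h'; rcases hcase with h | h <;> omega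
    · rcases hcase with h | h
      · have := hu z w' x h2 h.1 h3 h.2
        subst this; exact hxin h1
      · have := hu z w' y h2 h.1 h3 h.2
        subst this; exact ny h1
  have hxz : x ≠ z := by rintro rfl; rcases hcase with h | h <;> omega
  have inj3 : ∀ a b c : V, a ≠ b → a ≠ c → b ≠ c → Function.Injective ![a, b, c] := by
    intro a b c h1 h2 h3 i j hij
    fin_cases i <;> fin_cases j <;> simp_all
  rcases hcase with h | h
  · refine ⟨![y, x, z], x, ?_, inj3 _ _ _ hxy.ne' hyz hxz, hxy.symm, h.1, ?_⟩
    · intro i; fin_cases i <;> simpa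
    · intro a ha b hb c hc h1 h2 h3
      rcases key a ha b hb c hc h1 h2 h3 with h | h
      · exact Or.inl h
      · by_cases hxin : x = a ∨ x = b ∨ x = c
        · exact Or.inl hxin
        · right
          intro i; fin_cases i <;> simp <;> tauto
  · refine ⟨![x, y, z], x, ?_, inj3 _ _ _ hxy.ne hxz hyz, hxy, h.1, ?_⟩
    · intro i; fin_cases i <;> simpa
    · intro a ha b hb c hc h1 h2 h3
      rcases key a ha b hb c hc h1 h2 h3 with h | h
      · exact Or.inl h
      · by_cases hxin : x = a ∨ x = b ∨ x = c
        · exact Or.inl hxin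
        · right
          intro i; fin_cases i <;> simp <;> tauto

theorem konig_aux {V : Type*} {T : SimpleGraph V} (d : V → ℕ)
    (hd : ∀ a b, T.Adj a b → d a = d b + 1 ∨ d b = d a + 1)
    (hu : ∀ y a b, T.Adj a y → T.Adj b y → d y = d a + 1 → d y = d b + 1 → a = b)
    (n : ℕ) : ∀ W : Finset V, W.card ≤ n →
    ∃ k : ℕ, ∃ P : Fin k → Fin 3 → V, ∃ C : Finset V,
      (∀ i a, P i a ∈ W) ∧ (∀ i j a b, P i a = P j b → i = j ∧ a = b) ∧
      (∀ i, T.Adj (P i 0) (P i 1) ∧ T.Adj (P i 1) (P i 2)) ∧ C.card ≤ k ∧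
      ∀ a ∈ W, ∀ b ∈ W, ∀ c ∈ W, T.Adj a b → T.Adj b c → a ≠ c → a ∈ C ∨ b ∈ C ∨ c ∈ C := by
  classical
  induction n with
  | zero =>
    intro W hW
    have : W = ∅ := by simpa using hW
    subst this
    exact ⟨0, fun i => i.elim0, ∅, by simp, fun i => i.elim0, fun i => i.elim0, by simp, by simp⟩
  | succ n ih =>
    intro W hW
    by_cases hex : ∃ x, TopIn T d W x
    · obtain ⟨p, x, hpW, hinj, h01, h12, hp⟩ := konig_step d W hd hu hex
      obtain ⟨k, P, C, h1, h2, h3, h4, h5⟩ := ih (W \ Finset.univ.image p) (by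
        have : (W \ Finset.univ.image p).card < W.card := by
          apply Finset.card_lt_card
          refine Finset.ssubset_iff_subset_ne.2 ⟨Finset.sdiff_subset, fun h => ?_⟩
          have := hpW 0
          rw [← h] at this
          simp at this
        omega)
      have hne : ∀ i a b, P i a ≠ p b := by
        intro i a b h
        have := h1 i a
        rw [h] at this
        simp at this
      refine ⟨k + 1, Fin.cons p P, insert x C, ?_, ?_, ?_, ?_, ?_⟩
      · intro i a
        refine Fin.cases ?_ (fun i => ?_) i
        · exact hpW a
        · exact (Finset.mem_sdiff.1 (h1 i a)).1
      · intro i j a b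
        refine Fin.cases ?_ (fun i => ?_) i <;> refine Fin.cases ?_ (fun j => ?_) j
        · intro h; exact ⟨rfl, hinj h⟩
        · intro h; exact absurd h.symm (hne j b a)
        · intro h; exact absurd h (hne i a b)
        · intro h
          obtain ⟨h, h'⟩ := h2 i j a b h
          exact ⟨congrArg _ h, h'⟩
      · intro i
        refine Fin.cases ?_ (fun i => ?_) i
        · exact ⟨h01, h12⟩
        · exact h3 i
      · exact (Finset.card_insert_le _ _).trans (by omega)
      · intro a ha b hb c hc hab hbc hac
        rcases hp a ha b hb c hc hab hbc hac with h | h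
        · rcases h with rfl | rfl | rfl <;> simp
        · have := h5 a (by simp [ha]; exact fun i => (h i).1) b
            (by simp [hb]; exact fun i => (h i).2.1) c
            (by simp [hc]; exact fun i => (h i).2.2) hab hbc hac
          simp only [Finset.mem_insert]; tauto
    · refine ⟨0, fun i => i.elim0, ∅, fun i => i.elim0, fun i => i.elim0, fun i => i.elim0,
        by simp, ?_⟩
      intro a ha b hb c hc hab hbc hac
      obtain ⟨t, ht, -⟩ := top_of_path d W hd hu ha hb hc hab hbc hac
      exact absurd ⟨t, ht⟩ hex

theorem sound {V : Type*} [Fintype V] [DecidableEq V] {T : SimpleGraph V} {m t : ℕ}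
    (g : Loc m → V) (hg : Function.Injective g)
    (hin : ∀ i, T.Adj (g (some (i, 0))) (g (some (i, 1))) ∧
      T.Adj (g (some (i, 1))) (g (some (i, 2))))
    (e : Fin t → Fin m) (he : Function.Injective e) (E : List (Loc t × Loc t))
    (hE : ∀ x ∈ E, T.Adj (g (x.1.map (Prod.map e id))) (g (x.2.map (Prod.map e id))))
    (f : Fin m → Fin 3)
    (hf : IsDissocSet T (Finset.univ.filter (fun x => ∀ i, x ≠ g (some (i, f i))))) :
    good E (f ∘ e) = true := by
  set G : Loc t → V := fun x => g (x.map (Prod.map e id)) with hG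
  have hGi : Function.Injective G :=
    hg.comp (Option.map_injective (he.prodMap Function.injective_id))
  have hS : ∀ x : Loc t, hit (f ∘ e) x = false →
      G x ∈ Finset.univ.filter (fun x => ∀ i, x ≠ g (some (i, f i))) := by
    intro x hx
    simp only [Finset.mem_filter, Finset.mem_univ, true_and]
    intro i h
    have h' := hg h
    rcases x with _ | ⟨j, a⟩
    · simp at h'
    · simp at h'
      obtain ⟨h1, h2⟩ := h'
      subst h1
      simp [hit, h2] at hx
  have hsE : ∀ x ∈ symE E, T.Adj (G x.1) (G x.2) := by
    intro x hx
    simp only [symE, List.mem_append, List.mem_map] at hx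
    rcases hx with hx | ⟨y, hy, rfl⟩
    · exact hE x hx
    · exact (hE y hy).symm
  have hn : ∀ y z, z ∈ nbrs (symE E) y → T.Adj (G y) (G z) := by
    intro y z hz
    simp only [nbrs, List.mem_append] at hz
    rcases hz with hz | hz
    · simp only [List.mem_map, List.mem_filter, eqL_iff] at hz
      obtain ⟨x, ⟨hx, rfl⟩, rfl⟩ := hz
      exact hsE x hx
    · rcases y with _ | ⟨i, a⟩
      · simp at hz
      · simp only [List.mem_map, List.mem_filter] at hz
        obtain ⟨b, ⟨-, hb⟩, rfl⟩ := hz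
        have h1 := (hin (e i)).1
        have h2 := (hin (e i)).2
        have h1' := h1.symm
        have h2' := h2.symm
        fin_cases a <;> fin_cases b <;> first | (simp [inAdj] at hb; done) | assumption
  simp only [good, List.all_eq_true, Bool.or_eq_true, eqL_iff]
  intro x hx z hz
  by_contra hcon
  push Not at hcon
  obtain ⟨⟨⟨h1, h2⟩, h3⟩, h4⟩ := hcon
  have := hf _ (hS x.2 (by simpa using h3)) _ (hS x.1 (by simpa using h2)) _
    (hS z (by simpa using h4)) (hsE x hx).symm (hn _ _ hz)
  exact h1 (hGi this).symm

theorem exists_cross {V : Type*} {T : SimpleGraph V} (hT : T.Connected) (A : Set V) {u v : V}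
    (hu : u ∈ A) (hv : v ∉ A) : ∃ x y, x ∈ A ∧ y ∉ A ∧ T.Adj x y := by
  obtain ⟨p⟩ := hT.preconnected u v
  obtain ⟨d, -, h1, h2⟩ := p.exists_boundary_dart A hu hv
  exact ⟨_, _, h1, h2, d.adj⟩

theorem inj_two {A : Type*} {a b : A} (h : a ≠ b) : Function.Injective ![a, b] := by
  intro i j hij
  fin_cases i <;> fin_cases j <;> simp_all

theorem inj_three {A : Type*} {a b c : A} (h : a ≠ b) (h' : a ≠ c) (h'' : b ≠ c) :
    Function.Injective ![a, b, c] := by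
  intro i j hij
  fin_cases i <;> fin_cases j <;> simp_all

set_option maxHeartbeats 1000000 in
theorem core {V : Type*} [Fintype V] [DecidableEq V] {T : SimpleGraph V} (hT : T.Connected)
    {m : ℕ} (hm : 1 ≤ m)
    (g : Loc m → V) (hg : Function.Bijective g)
    (hin : ∀ i, T.Adj (g (some (i, 0))) (g (some (i, 1))) ∧
      T.Adj (g (some (i, 1))) (g (some (i, 2))))
    (F : Finset (Fin m → Fin 3))
    (hF : ∀ f ∈ F, IsDissocSet T (Finset.univ.filter (fun x => ∀ i, x ≠ g (some (i, f i))))) :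
    F.card ≤ 3 ^ (m - 1) + 1 := by
  classical
  have snd := fun {t : ℕ} (e : Fin t → Fin m) (he : Function.Injective e) E hE f hf =>
    sound g hg.1 hin e he E hE f (hF f hf)
  obtain ⟨i, p, hip⟩ : ∃ i p, T.Adj (g none) (g (some (i, p))) := by
    obtain ⟨x, y, hx, hy, hxy⟩ := exists_cross hT {g none} (u := g none)
      (v := g (some (⟨0, hm⟩, 0))) rfl (fun h => by simpa using hg.1 h)
    obtain ⟨b, rfl⟩ := hg.2 y
    rw [Set.mem_singleton_iff] at hx
    subst hx
    rcases b with _ | ⟨i, p⟩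
    · exact absurd rfl hy
    · exact ⟨i, p, hxy⟩
  obtain ⟨X0, hX⟩ : ∃ X0 : Option (Fin 3), (∃ j, j ≠ i) →
      ∃ j q, j ≠ i ∧ T.Adj (g (X0.map (fun a => (i, a)))) (g (some (j, q))) := by
    by_cases hj : ∃ j, j ≠ i
    · obtain ⟨j, hj⟩ := hj
      obtain ⟨x, y, ⟨X0, rfl⟩, hy, hxy⟩ := exists_cross hT
        (Set.range fun X0 : Option (Fin 3) => g (X0.map (fun a => (i, a)))) (u := g none)
        (v := g (some (j, 0))) ⟨none, rfl⟩ (by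
          rintro ⟨X, h⟩
          have := hg.1 h
          rcases X with _ | a
          · simp at this
          · simp at this
            exact hj this.1.symm)
      obtain ⟨b, rfl⟩ := hg.2 y
      refine ⟨X0, fun _ => ?_⟩
      rcases b with _ | ⟨k, r⟩
      · exact absurd ⟨none, rfl⟩ hy
      · refine ⟨k, r, ?_, hxy⟩
        rintro rfl
        exact hy ⟨some r, rfl⟩
    · exact ⟨none, fun h => absurd h hj⟩
  by_cases hall : ∀ j, ∃ q, j ≠ i → T.Adj (g (X0.map (fun a => (i, a)))) (g (some (j, q)))
  · choose q hq using hall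
    obtain ⟨c, d, hcd⟩ : ∃ c d : Fin 3, ∀ f ∈ F, f i = c ∨ (f i = d ∧ ∀ j, j ≠ i → f j = q j) := by
      by_cases hj : ∃ j, j ≠ i
      · obtain ⟨c, d, hcd⟩ := c2 p (X0.map (fun a => (0, a))) (by
          rcases X0 with _ | a <;> simp)
        have key : ∀ f ∈ F, ∀ j, j ≠ i → f i = c ∨ (f i = d ∧ f j = q j) := by
          intro f hf j hji
          have := hcd (q j) _ (snd ![i, j] (inj_two hji.symm) _ (by
            intro x hx
            simp only [List.mem_cons, List.not_mem_nil, or_false] at hx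
            rcases hx with rfl | rfl
            · simpa using hip
            · have := hq j hji
              rcases X0 with _ | a <;> simpa using this) f hf)
          simpa using this
        refine ⟨c, d, fun f hf => ?_⟩
        obtain ⟨j0, hj0⟩ := hj
        by_cases hc : f i = c
        · exact Or.inl hc
        · right
          refine ⟨((key f hf j0 hj0).resolve_left hc).1, fun j hji =>
            ((key f hf j hji).resolve_left hc).2⟩
      · obtain ⟨c, d, hcd⟩ := c1 p
        refine ⟨c, d, fun f hf => ?_⟩
        have := hcd _ (snd ![i] (by
            intro a b hab
            exact Subsingleton.elim _ _) _ (by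
            intro x hx
            simp only [List.mem_cons, List.not_mem_nil, or_false] at hx
            subst hx
            simpa using hip) f hf)
        simp at this
        rcases this with h | h
        · exact Or.inl h
        · exact Or.inr ⟨h, fun j hj' => absurd ⟨j, hj'⟩ hj⟩
    have hsub : F ⊆ insert (fun j => if j = i then d else q j) (F.filter (fun f => f i = c)) := by
      intro f hf
      rw [Finset.mem_insert, Finset.mem_filter]
      rcases hcd f hf with h | h
      · exact Or.inr ⟨hf, h⟩
      · left
        funext j
        split_ifs with hj
        · rw [hj]; exact h.1
        · exact h.2 j hj
    have h1 := cntBound (t := 1) (fun _ => i) (fun a b _ => Subsingleton.elim _ _)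
      {fun _ => c} (F.filter (fun f => f i = c)) (by
        intro f hf
        rw [Finset.mem_filter] at hf
        rw [Finset.mem_singleton]
        funext a
        exact hf.2)
    have h2 := Finset.card_le_card hsub
    have h3 := Finset.card_insert_le (fun j => if j = i then d else q j)
      (F.filter (fun f => f i = c))
    simp at h1
    omega
  · push Not at hall
    obtain ⟨k0, hk0⟩ := hall
    obtain ⟨j, k, q, r, Y0, hji, hki, hkj, hq, hr, hY2, hYX⟩ : ∃ (j k : Fin m) (q r : Fin 3)
        (Y0 : Loc 3), j ≠ i ∧ k ≠ i ∧ k ≠ j ∧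
        T.Adj (g (X0.map (fun a => (i, a)))) (g (some (j, q))) ∧
        T.Adj (g (Y0.map (Prod.map ![i, j, k] id))) (g (some (k, r))) ∧
        Y0.map Prod.fst ≠ some 2 ∧ Y0 ≠ X0.map (fun a => (0, a)) := by
      obtain ⟨x, y, ⟨a, rfl, ha⟩, hy, hxy⟩ := exists_cross hT
        {x | ∃ y : Loc m, g y = x ∧ (y = none ∨ ∃ s b, y = some (s, b) ∧ (s = i ∨ s ≠ i ∧ ∃ q,
          T.Adj (g (X0.map (fun a => (i, a)))) (g (some (s, q)))))} (u := g none)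
        (v := g (some (k0, 0))) ⟨none, rfl, Or.inl rfl⟩ (by
          rintro ⟨y, h, h'⟩
          have := hg.1 h
          subst this
          rcases h' with h' | ⟨s, b, hs, h'⟩
          · simp at h'
          · simp at hs
            obtain ⟨rfl, -⟩ := hs
            rcases h' with h' | ⟨-, q, h'⟩
            · exact (hk0 0).1 h'
            · exact (hk0 q).2 h')
      obtain ⟨b, rfl⟩ := hg.2 y
      rcases b with _ | ⟨k, r⟩
      · exact absurd ⟨none, rfl, Or.inl rfl⟩ hy
      have hki : k ≠ i := fun h => hy ⟨_, rfl, Or.inr ⟨_, _, rfl, Or.inl h⟩⟩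
      have hkX : ∀ q, ¬ T.Adj (g (X0.map (fun a => (i, a)))) (g (some (k, q))) :=
        fun q h => hy ⟨_, rfl, Or.inr ⟨_, _, rfl, Or.inr ⟨hki, q, h⟩⟩⟩
      obtain ⟨j, q, hji, hq⟩ := hX ⟨k, hki⟩
      rcases ha with rfl | ⟨s, b, rfl, rfl | ⟨hs, q', hq'⟩⟩
      · refine ⟨j, k, q, r, none, hji, hki, ?_, hq, hxy, by simp, ?_⟩
        · rintro rfl; exact hkX q hq
        · rcases X0 with _ | a
          · exact absurd hxy (hkX r)
          · simp
      · refine ⟨j, k, q, r, some (0, b), hji, hki, ?_, hq, hxy, by simp, ?_⟩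
        · rintro rfl; exact hkX q hq
        · rcases X0 with _ | a
          · simp
          · intro h
            simp at h
            subst h
            exact absurd hxy (hkX r)
      · refine ⟨s, k, q', r, some (1, b), hs, hki, ?_, hq', hxy, by simp, ?_⟩
        · rintro rfl; exact hkX q' hq'
        · rcases X0 with _ | a <;> simp
    have hinj : Function.Injective ![i, j, k] := inj_three hji.symm hki.symm hkj.symm
    have hm3 : 3 ≤ m := by
      have := Fintype.card_le_of_injective _ hinj
      simpa using this
    have h9 := c3 p q X0 r Y0 hY2 hYX
    have hb := cntBound (t := 3) ![i, j, k] hinj (Finset.univ.filter (fun f : Fin 3 → Fin 3 =>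
     good [(none, some (0, p)), (X0.map (fun a => (0, a)), some (1, q))] f = true ∧
     good [(none, some (0, p)), (X0.map (fun a => (0, a)), some (1, q)), (Y0, some (2, r))] f = true))
      F (fun f hf => by
      rw [Finset.mem_filter]
      have hE : ∀ x ∈ [((none : Loc 3), (some (0, p) : Loc 3)),
          (X0.map (fun a => (0, a)), some (1, q)), (Y0, some (2, r))],
          T.Adj (g (x.1.map (Prod.map ![i, j, k] id))) (g (x.2.map (Prod.map ![i, j, k] id))) := by
        intro x hx
        simp only [List.mem_cons, List.not_mem_nil, or_false] at hx
        rcases hx with rfl | rfl | rfl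
        · simpa using hip
        · rcases X0 with _ | a <;> simpa using hq
        · simpa using hr
      refine ⟨Finset.mem_univ _, snd ![i, j, k] hinj _ (fun x hx => hE x ?_) f hf,
        snd ![i, j, k] hinj _ hE f hf⟩
      simp only [List.mem_cons, List.not_mem_nil, or_false] at hx ⊢
      tauto)
    have h3 : 3 ^ (m - 1) = 9 * 3 ^ (m - 3) := by
      obtain ⟨n, rfl⟩ := Nat.exists_eq_add_of_le hm3
      rw [show 3 + n - 1 = n + 2 by omega, show 3 + n - 3 = n by omega, pow_add]
      ring
    have h4 := Nat.mul_le_mul_right (3 ^ (m - 3)) h9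
    have h5 := le_trans hb h4
    omega

/-- A tree on `3m + 1` vertices (`m ≥ 1`) has at most `3^(m-1) + 1` maximum dissociation
sets. -/
theorem tree_numMaxDissoc_le_of_card_eq_three_mul_add_one {V : Type*} [Fintype V]
    [DecidableEq V] (T : SimpleGraph V) (hT : T.IsTree) (m : ℕ) (hm : 1 ≤ m)
    (hcard : Fintype.card V = 3 * m + 1) :
    {S : Finset V | IsMaxDissocSet T S}.ncard ≤ 3 ^ (m - 1) + 1 := by
  classical
  obtain ⟨r⟩ := hT.connected.nonempty
  obtain ⟨k, P, C, -, hP, hadj, hCk, hC⟩ := konig_aux (T := T) (fun x => T.dist r x)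
    (fun a b h => hT.dist_eq_dist_add_one_of_adj r h)
    (fun y a b ha hb h1 h2 => tree_parent_unique hT r ha hb h1 h2) _ Finset.univ le_rfl
  have hinj : Function.Injective (fun x : Fin k × Fin 3 => P x.1 x.2) := by
    rintro ⟨i, a⟩ ⟨j, b⟩ h
    obtain ⟨rfl, rfl⟩ := hP i j a b h
    rfl
  have hk : k * 3 ≤ 3 * m + 1 := by
    have := Fintype.card_le_of_injective _ hinj
    rw [hcard] at this
    simpa using this
  have hbdd : BddAbove {n | ∃ S : Finset V, IsDissocSet T S ∧ S.card = n} := by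
    refine ⟨Fintype.card V, ?_⟩
    rintro n ⟨S, -, rfl⟩
    exact Finset.card_le_univ S
  have hdn : Fintype.card V ≤ dissNum T + k := by
    have h1 : Cᶜ.card ≤ dissNum T := by
      apply le_csSup hbdd
      refine ⟨Cᶜ, ?_, rfl⟩
      intro v hv u hu w hw hvu hvw
      by_contra hne
      rw [Finset.mem_compl] at hv hu hw
      rcases hC u (Finset.mem_univ _) v (Finset.mem_univ _) w (Finset.mem_univ _)
        hvu.symm hvw hne with h | h | h <;> contradiction
    have := Finset.card_add_card_compl C
    omega
  -- every maximum set comes from a choice function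
  have hS : ∀ S : Finset V, IsMaxDissocSet T S → ∃ f : Fin k → Fin 3,
      S = Finset.univ.filter (fun x => ∀ i, x ≠ P i (f i)) := by
    rintro S ⟨hS, hcS⟩
    have hf : ∀ i, ∃ a, P i a ∉ S := by
      intro i
      by_contra hcon
      push Not at hcon
      have := hP _ _ _ _ (hS _ (hcon 1) _ (hcon 0) _ (hcon 2) (hadj i).1.symm (hadj i).2)
      simp at this
    choose f hf using hf
    refine ⟨f, ?_⟩
    have himg : (Finset.univ.image (fun i => P i (f i))).card = k := by
      rw [Finset.card_image_of_injective, Finset.card_univ, Fintype.card_fin]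
      intro i j h
      exact (hP _ _ _ _ h).1
    have hsub : Finset.univ.image (fun i => P i (f i)) ⊆ Sᶜ := by
      intro x hx
      simp only [Finset.mem_image, Finset.mem_univ, true_and] at hx
      obtain ⟨i, rfl⟩ := hx
      exact Finset.mem_compl.2 (hf i)
    have heq := Finset.eq_of_subset_of_card_le hsub (by
      have := Finset.card_add_card_compl S
      omega)
    rw [← compl_compl S, ← heq]
    ext x
    simp [eq_comm]
  set F : Finset (Fin k → Fin 3) := Finset.univ.filter (fun f =>
    IsDissocSet T (Finset.univ.filter (fun x => ∀ i, x ≠ P i (f i)))) with hFdef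
  have hle : {S : Finset V | IsMaxDissocSet T S}.ncard ≤ F.card := by
    have hsub : {S : Finset V | IsMaxDissocSet T S} ⊆
        ((F.image (fun f => Finset.univ.filter (fun x => ∀ i, x ≠ P i (f i))) :
          Finset (Finset V)) : Set (Finset V)) := by
      intro S hSm
      obtain ⟨f, rfl⟩ := hS S hSm
      rw [Finset.coe_image]
      exact ⟨f, by simp only [hFdef, Finset.coe_filter, Finset.mem_univ, true_and]; exact hSm.1, rfl⟩
    have h1 := Set.ncard_le_ncard hsub (Finset.finite_toSet _)
    rw [Set.ncard_coe_finset] at h1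
    exact h1.trans Finset.card_image_le
  refine hle.trans ?_
  by_cases hkm : k = m
  · subst hkm
    obtain ⟨v, hv⟩ : ∃ v, ∀ i a, v ≠ P i a := by
      by_contra hcon
      push Not at hcon
      have := Fintype.card_le_of_surjective (fun x : Fin k × Fin 3 => P x.1 x.2) (fun v => by
        obtain ⟨i, a, h⟩ := hcon v
        exact ⟨(i, a), h.symm⟩)
      rw [hcard] at this
      simp at this
      omega
    have hgi : Function.Injective (fun x : Loc k => x.elim v (fun y => P y.1 y.2)) := by
      rintro (_ | ⟨i, a⟩) (_ | ⟨j, b⟩) h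
      · rfl
      · exact absurd h (hv j b)
      · exact absurd h.symm (hv i a)
      · obtain ⟨rfl, rfl⟩ := hP i j a b h
        rfl
    refine core hT.connected hm (fun x => x.elim v (fun y => P y.1 y.2))
      ((Fintype.bijective_iff_injective_and_card _).2 ⟨hgi, ?_⟩) hadj F ?_
    · rw [hcard]
      simp
      omega
    · intro f hf
      simp only [hFdef, Finset.mem_filter, Finset.mem_univ, true_and] at hf
      exact hf
  · have h1 : F.card ≤ 3 ^ k := by
      have := Finset.card_le_univ F
      simpa using this
    have h2 : 3 ^ k ≤ 3 ^ (m - 1) := Nat.pow_le_pow_right (by norm_num) (by omega)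
    omega
end

section
/- Let m be a positive integer and T a tree on 3m + 2 vertices. Then the number of maximum dissociation sets of T is at most 3^{m−1}. -/
open SimpleGraph

theorem exists_parent {V : Type*} (T : SimpleGraph V) (hT : T.IsTree) :
    ∃ (p : V → V) (d : V → ℕ), (∀ u, p u = u ∨ d (p u) < d u) ∧
      ∀ u w, T.Adj u w → (p u = w ∧ d w < d u) ∨ (p w = u ∧ d u < d w) := by
  classical
  obtain ⟨r⟩ := hT.connected.nonempty
  have hex : ∀ u, ∃ q : T.Walk u r, q.IsPath := fun u => (hT.existsUnique_path u r).exists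
  choose q hq using hex
  have huniq : ∀ u v (a b : T.Walk u v), a.IsPath → b.IsPath → a = b := fun u v a b ha hb =>
    (hT.existsUnique_path u v).unique ha hb
  have key : ∀ u w, (h : T.Adj u w) → (q u = Walk.cons h (q w)) ∨ (q w = Walk.cons h.symm (q u)) := by
    intro u w h
    by_cases hu : u ∈ (q w).support
    · right
      have h1 := (q w).take_spec hu
      have h2 : (q w).takeUntil u hu = Walk.cons h.symm Walk.nil :=
        huniq _ _ _ _ ((hq w).takeUntil hu) (by simp [h.ne'])
      have h3 : (q w).dropUntil u hu = q u := huniq _ _ _ _ ((hq w).dropUntil hu) (hq u)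
      rw [h2, h3] at h1
      rw [← h1]; rfl
    · left
      exact huniq _ _ _ _ (hq u) ((hq w).cons hu)
  refine ⟨fun u => (q u).snd, fun u => (q u).length, ?_, ?_⟩
  · intro u
    by_cases hn : (q u).Nil
    · left
      have : u = r := hn.eq
      subst this
      have : q u = Walk.nil := huniq _ _ _ _ (hq u) (by simp)
      simp [this]
    · right
      have hadj := (q u).adj_snd hn
      rcases key _ _ hadj with h | h
      · have := congrArg Walk.length h
        simp at this; simp; omega
      · have h1 : (q u).tail = q ((q u).snd) := huniq _ _ _ _ ((hq u).tail) (hq _)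
        have h2 := Walk.length_tail_add_one hn
        rw [h1] at h2
        show (q (q u).snd).length < (q u).length
        omega
  · intro u w h
    rcases key u w h with h' | h'
    · left; simp [h']
    · right; simp [h']

theorem konig {V : Type*} [DecidableEq V] (T : SimpleGraph V)
    (p : V → V) (d : V → ℕ) (hp : ∀ u, p u = u ∨ d (p u) < d u)
    (hadj : ∀ u w, T.Adj u w → (p u = w ∧ d w < d u) ∨ (p w = u ∧ d u < d w)) :
    ∀ (n : ℕ) (U : Finset V), U.card ≤ n → ∃ (k : ℕ) (P : Fin k → Fin 3 → V) (C : Finset V),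
      (∀ i e, P i e ∈ U) ∧ (∀ i e j f, P i e = P j f → i = j ∧ e = f) ∧
      (∀ i, T.Adj (P i 0) (P i 1) ∧ T.Adj (P i 1) (P i 2)) ∧ C.card ≤ k ∧
      ∀ u ∈ U, ∀ v ∈ U, ∀ w ∈ U, T.Adj u v → T.Adj v w → u ≠ w → u ∈ C ∨ v ∈ C ∨ w ∈ C := by
  classical
  intro n
  induction n with
  | zero =>
    intro U hU
    have : U = ∅ := by simpa using hU
    subst this
    exact ⟨0, fun i => i.elim0, ∅, fun i => i.elim0, fun i => i.elim0, fun i => i.elim0, by simp,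
      by simp⟩
  | succ n ih =>
    intro U hU
    let F : Finset (V × V × V) := (U ×ˢ U ×ˢ U).filter
      fun t => T.Adj t.1 t.2.1 ∧ T.Adj t.2.1 t.2.2 ∧ t.1 ≠ t.2.2
    by_cases hF : F.Nonempty
    swap
    · refine ⟨0, fun i => i.elim0, ∅, fun i => i.elim0, fun i => i.elim0, fun i => i.elim0, by simp,
        ?_⟩
      intro u hu v hv w hw h1 h2 h3
      exact absurd ⟨(u, v, w), by simp [F, *]⟩ hF
    obtain ⟨⟨a, b, c⟩, hmem, hmax⟩ := F.exists_max_image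
      (fun t => min (d t.1) (min (d t.2.1) (d t.2.2))) hF
    simp only [F, Finset.mem_filter, Finset.mem_product] at hmem
    obtain ⟨⟨ha, hb, hc⟩, hab, hbc, hac⟩ := hmem
    have hmax' : ∀ u ∈ U, ∀ v ∈ U, ∀ w ∈ U, T.Adj u v → T.Adj v w → u ≠ w →
        min (d u) (min (d v) (d w)) ≤ min (d a) (min (d b) (d c)) := by
      intro u hu v hv w hw h1 h2 h3
      exact hmax (u, v, w) (by simp [F, *])
    obtain ⟨v, hv, hdv, hva, hvb, hvc⟩ : ∃ v ∈ U, d v = min (d a) (min (d b) (d c)) ∧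
        (∃ k, p^[k] a = v) ∧ (∃ k, p^[k] b = v) ∧ (∃ k, p^[k] c = v) := by
      rcases hadj a b hab with ⟨h1, h1'⟩ | ⟨h1, h1'⟩ <;> rcases hadj b c hbc with ⟨h2, h2'⟩ | ⟨h2, h2'⟩
      · exact ⟨c, hc, by omega, ⟨2, by simp [h1, h2]⟩, ⟨1, by simp [h2]⟩, ⟨0, rfl⟩⟩
      · exact ⟨b, hb, by omega, ⟨1, by simp [h1]⟩, ⟨0, rfl⟩, ⟨1, by simp [h2]⟩⟩
      · exact absurd (h1.symm.trans h2) hac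
      · exact ⟨a, ha, by omega, ⟨0, rfl⟩, ⟨1, by simp [h1]⟩, ⟨2, by simp [h1, h2]⟩⟩
    have hdeep : ∀ k u, p^[k] u = v → u = v ∨ d v < d u := by
      intro k
      induction k with
      | zero => intro u hu; left; simpa using hu
      | succ k ihk =>
        intro u hu
        rw [Function.iterate_succ_apply] at hu
        rcases hp u with h | h
        · rw [h] at hu; exact ihk u hu
        · right
          rcases ihk _ hu with h' | h'
          · rw [← h']; exact h
          · exact h'.trans h
    have hclosed : ∀ u w, T.Adj u w → u ≠ v → (∃ k, p^[k] u = v) → ∃ k, p^[k] w = v := by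
      rintro u w h hne ⟨k, hk⟩
      rcases hadj u w h with ⟨h1, -⟩ | ⟨h1, -⟩
      · cases k with
        | zero => exact absurd hk hne
        | succ k => exact ⟨k, by rw [Function.iterate_succ_apply, h1] at hk; exact hk⟩
      · exact ⟨k + 1, by rw [Function.iterate_succ_apply, h1]; exact hk⟩
    let U' := U.filter fun u => ¬ ∃ k, p^[k] u = v
    have hU' : U'.card ≤ n := by
      have : U'.card < U.card := by
        apply Finset.card_lt_card
        rw [Finset.ssubset_iff_of_subset (Finset.filter_subset _ _)]
        exact ⟨v, hv, by simp only [U', Finset.mem_filter, not_and, not_not]; exact fun _ => ⟨0, rfl⟩⟩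
      omega
    obtain ⟨k, P, C, hPU, hinj, hPadj, hCk, hcov⟩ := ih U' hU'
    have hPU1 : ∀ i e, P i e ∈ U := fun i e => (Finset.mem_filter.1 (hPU i e)).1
    have hPU2 : ∀ i e, ¬ ∃ k, p^[k] (P i e) = v := fun i e => (Finset.mem_filter.1 (hPU i e)).2
    have hQ : ∀ e : Fin 3, ∃ k, p^[k] ((![a, b, c] : Fin 3 → V) e) = v := by
      intro e; fin_cases e
      · exact hva
      · exact hvb
      · exact hvc
    refine ⟨k + 1, Fin.cons ![a, b, c] P, insert v C, ?_, ?_, ?_, ?_, ?_⟩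
    · intro i e
      refine Fin.cases ?_ (fun i => ?_) i
      · fin_cases e <;> simp [ha, hb, hc]
      · simpa using hPU1 i e
    · intro i e j f
      refine Fin.cases ?_ (fun i => ?_) i <;> refine Fin.cases ?_ (fun j => ?_) j
      · simp only [Fin.cons_zero]
        have h1 := hab.ne
        have h2 := hbc.ne
        have h1' := hab.ne'
        have h2' := hbc.ne'
        have h3' := hac.symm
        fin_cases e <;> fin_cases f <;> simp [*]
      · simp only [Fin.cons_zero, Fin.cons_succ]
        intro h
        exact absurd (h ▸ hQ e) (hPU2 j f)
      · simp only [Fin.cons_zero, Fin.cons_succ]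
        intro h
        exact absurd (h ▸ hQ f) (hPU2 i e)
      · simp only [Fin.cons_succ]
        intro h
        simpa using hinj _ _ _ _ h
    · intro i
      refine Fin.cases ?_ (fun i => ?_) i
      · simp [hab, hbc]
      · simpa using hPadj i
    · exact (Finset.card_insert_le _ _).trans (by omega)
    · intro x hx y hy z hz hxy hyz hxz
      by_cases hxv : x = v
      · simp [hxv]
      by_cases hyv : y = v
      · simp [hyv]
      by_cases hzv : z = v
      · simp [hzv]
      have hany : ¬ ((∃ k, p^[k] x = v) ∧ (∃ k, p^[k] y = v) ∧ (∃ k, p^[k] z = v)) := by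
        rintro ⟨⟨k1, e1⟩, ⟨k2, e2⟩, ⟨k3, e3⟩⟩
        have t1 := (hdeep _ _ e1).resolve_left hxv
        have t2 := (hdeep _ _ e2).resolve_left hyv
        have t3 := (hdeep _ _ e3).resolve_left hzv
        have := hmax' x hx y hy z hz hxy hyz hxz
        omega
      have c1 := hclosed x y hxy hxv
      have c2 := hclosed y x hxy.symm hyv
      have c3 := hclosed y z hyz hyv
      have c4 := hclosed z y hyz.symm hzv
      have m : ∀ u ∈ U, ¬ (∃ k, p^[k] u = v) → u ∈ U' := fun u hu h => Finset.mem_filter.2 ⟨hu, h⟩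
      have := hcov x (m x hx fun h => hany ⟨h, c1 h, c3 (c1 h)⟩) y (m y hy fun h => hany ⟨c2 h, h, c3 h⟩) z (m z hz fun h => hany ⟨c2 (c4 h), c4 h, h⟩) hxy hyz hxz
      simp only [Finset.mem_insert]
      exact this.imp Or.inr (Or.imp Or.inr Or.inr)

theorem card_fix (k : ℕ) (i : Fin k) :
    (Finset.univ.filter fun f : Fin k → Fin 3 => f i = 0).card = 3 ^ (k - 1) := by
  classical
  have : (Finset.univ.filter fun f : Fin k → Fin 3 => f i = 0) =
      Fintype.piFinset (fun l => if l = i then ({0} : Finset (Fin 3)) else Finset.univ) := by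
    ext f
    simp only [Finset.mem_filter, Finset.mem_univ, true_and, Fintype.mem_piFinset]
    constructor
    · intro h l
      by_cases hl : l = i <;> simp [hl, h]
    · intro h
      simpa using h i
  rw [this, Fintype.card_piFinset, ← Finset.mul_prod_erase _ _ (Finset.mem_univ i)]
  rw [Finset.prod_congr rfl (g := fun _ => 3)]
  · simp
  · intro l hl
    simp [Finset.ne_of_mem_erase hl]

theorem count_one (k : ℕ) (G : Finset (Fin k → Fin 3)) (i : Fin k) (c : Fin 3)
    (h : ∀ g ∈ G, g i = c) : G.card ≤ 3 ^ (k - 1) := by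
  classical
  rw [← card_fix k i]
  apply Finset.card_le_card_of_injOn (fun g => Function.update g i 0)
  · intro g hg; simp
  · intro g hg g' hg' he
    ext1 l
    by_cases hl : l = i
    · rw [hl, h g hg, h g' hg']
    · simpa [hl] using congrFun he l

theorem count_two (k : ℕ) (G : Finset (Fin k → Fin 3)) (i j l : Fin k) (s t e q : Fin 3)
    (hij : j ≠ i) (hil : l ≠ i)
    (h1 : ∀ g ∈ G, g i = s ∨ g i = t) (h2 : ∀ g ∈ G, g i = t → g j = e)
    (h3 : ∀ g ∈ G, g l ≠ q) : G.card ≤ 3 ^ (k - 1) := by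
  classical
  by_cases hst : s = t
  · exact count_one k G i t (fun g hg => by rcases h1 g hg with h | h <;> simp [h, hst])
  rw [← card_fix k i]
  apply Finset.card_le_card_of_injOn (fun g => if g i = t then
    Function.update (Function.update (Function.update g i 0) j (g l)) l q
      else Function.update g i 0)
  · intro g hg
    by_cases h : g i = t <;> simp [h, Ne.symm hij, Ne.symm hil]
  · intro g hg g' hg' he
    have a1 := h1 g hg
    have a2 := h2 g hg
    have a3 := h3 g hg
    have b1 := h1 g' hg'
    have b2 := h2 g' hg'
    have b3 := h3 g' hg'
    have el := congrFun he l
    have ej := congrFun he j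
    have hh : g i = g' i := by
      by_cases h : g i = t <;> by_cases h' : g' i = t <;> simp [h, h', hil] at el
      · rw [h, h']
      · exact absurd el.symm b3
      · exact absurd el a3
      · rw [a1.resolve_right h, b1.resolve_right h']
    ext1 n
    have en := congrFun he n
    by_cases h : g i = t
    · have h' : g' i = t := hh ▸ h
      simp only [h, h', if_true, Function.update_apply] at en ej
      have := a2 h
      have := b2 h'
      grind
    · have h' : ¬ g' i = t := hh ▸ h
      simp only [h, h', if_false, Function.update_apply] at en
      grind

theorem exists_boundary {V : Type*} (T : SimpleGraph V) (hT : T.Connected) (S : Set V)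
    (x y : V) (hx : x ∈ S) (hy : y ∉ S) : ∃ u ∈ S, ∃ w, w ∉ S ∧ T.Adj u w := by
  obtain ⟨p⟩ := hT.preconnected x y
  obtain ⟨d, hd, h1, h2⟩ := p.exists_boundary_dart S hx hy
  exact ⟨d.fst, h1, d.snd, h2, d.adj⟩

theorem count_main {V : Type*} (T : SimpleGraph V) (hT : T.Connected)
    (k : ℕ) (hk : 1 ≤ k) (P : Fin k → Fin 3 → V)
    (hinj : ∀ i e j f, P i e = P j f → i = j ∧ e = f)
    (hP : ∀ i, T.Adj (P i 0) (P i 1) ∧ T.Adj (P i 1) (P i 2))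
    (x y : V) (hx : ∀ i e, P i e ≠ x) (hy : ∀ i e, P i e ≠ y) (hxy : x ≠ y)
    (G : Finset (Fin k → Fin 3))
    (hG : ∀ g ∈ G, ∀ u v w, T.Adj u v → T.Adj v w → u ≠ w →
      (∃ i, P i (g i) = u) ∨ (∃ i, P i (g i) = v) ∨ (∃ i, P i (g i) = w)) :
    G.card ≤ 3 ^ (k - 1) := by
  have mem : ∀ (g : Fin k → Fin 3) i e, (∃ j, P j (g j) = P i e) ↔ g i = e := by
    intro g i e
    constructor
    · rintro ⟨j, hj⟩
      obtain ⟨rfl, h⟩ := hinj _ _ _ _ hj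
      exact h
    · intro h; exact ⟨i, by rw [h]⟩
  -- two adjacent extra vertices
  have claim0 : ∀ u v, (∀ i e, P i e ≠ u) → (∀ i e, P i e ≠ v) → T.Adj u v →
      G.card ≤ 3 ^ (k - 1) := by
    intro u v hu hv huv
    obtain ⟨z, hz, w, hw, hzw⟩ := exists_boundary T hT {u, v} u (P ⟨0, hk⟩ 0) (by simp)
      (by simp [hu, hv])
    simp only [Set.mem_insert_iff, Set.mem_singleton_iff, not_or] at hz hw
    have hall : ∀ g ∈ G, ∃ i, P i (g i) = w := by
      intro g hg
      rcases hz with rfl | rfl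
      · rcases hG g hg v z w huv.symm hzw (Ne.symm hw.2) with ⟨i, h⟩ | ⟨i, h⟩ | h
        · exact absurd h (hv _ _)
        · exact absurd h (hu _ _)
        · exact h
      · rcases hG g hg u z w huv hzw (Ne.symm hw.1) with ⟨i, h⟩ | ⟨i, h⟩ | h
        · exact absurd h (hu _ _)
        · exact absurd h (hv _ _)
        · exact h
    by_cases hwP : ∃ i e, P i e = w
    · obtain ⟨i, e, rfl⟩ := hwP
      exact count_one k G i e fun g hg => (mem g i e).1 (hall g hg)
    · push Not at hwP
      exact count_one k G ⟨0, hk⟩ 0 fun g hg => by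
        obtain ⟨i, h⟩ := hall g hg
        exact absurd h (hwP _ _)
  have nbr : ∀ u v, u ≠ v → ∃ w, T.Adj u w := by
    intro u v huv
    obtain ⟨z, hz, w, hw, hzw⟩ := exists_boundary T hT {u} u v (by simp) (by simp [huv.symm])
    simp only [Set.mem_singleton_iff] at hz
    exact ⟨w, hz ▸ hzw⟩
  obtain ⟨x1, hx1⟩ := nbr x y hxy
  obtain ⟨y1, hy1⟩ := nbr y x hxy.symm
  by_cases hx1P : ∃ i e, P i e = x1
  swap
  · push Not at hx1P
    exact claim0 x x1 hx hx1P hx1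
  by_cases hy1P : ∃ i e, P i e = y1
  swap
  · push Not at hy1P
    exact claim0 y y1 hy hy1P hy1
  obtain ⟨i, e0, rfl⟩ := hx1P
  obtain ⟨l, f, rfl⟩ := hy1P
  have nx : ∀ g : Fin k → Fin 3, ¬ ∃ i, P i (g i) = x := fun g ⟨i, h⟩ => hx _ _ h
  have ny : ∀ g : Fin k → Fin 3, ¬ ∃ i, P i (g i) = y := fun g ⟨i, h⟩ => hy _ _ h
  have hinjne : ∀ i e f, e ≠ f → P i e ≠ P i f := fun i e f h h' => h (hinj _ _ _ _ h').2
  have hyq : ∃ q, ∀ g ∈ G, g l ≠ q := by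
    have key : ∀ e1 e2 q : Fin 3, e1 ≠ q → e2 ≠ q → T.Adj y (P l e1) → T.Adj (P l e1) (P l e2) →
        ∃ q, ∀ g ∈ G, g l ≠ q := by
      intro e1 e2 q h1 h2 a1 a2
      refine ⟨q, fun g hg h => ?_⟩
      have := hG g hg _ _ _ a1 a2 (hy _ _).symm
      rw [mem, mem] at this
      rcases this with t | t | t
      · exact ny g t
      · exact h1 (t.symm.trans h)
      · exact h2 (t.symm.trans h)
    fin_cases f
    · exact key 0 1 2 (by decide) (by decide) hy1 (hP l).1
    · exact key 1 2 0 (by decide) (by decide) hy1 (hP l).2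
    · exact key 2 1 0 (by decide) (by decide) hy1 (hP l).2.symm
  obtain ⟨q, hq⟩ := hyq
  by_cases he1 : e0 = 1
  · subst he1
    refine count_one k G i 1 fun g hg => ?_
    have t1 := hG g hg x (P i 1) (P i 0) hx1 (hP i).1.symm (hx _ _).symm
    have t2 := hG g hg x (P i 1) (P i 2) hx1 (hP i).2 (hx _ _).symm
    have := nx g
    rw [mem, mem] at t1 t2
    rcases t1 with t | t | t
    · exact absurd t this
    · exact t
    rcases t2 with s | s | s
    · exact absurd s this
    · exact s
    · rw [t] at s; exact absurd s (by decide)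
  obtain ⟨e2, h02, h12, hab, hbc⟩ : ∃ e2, e0 ≠ e2 ∧ 1 ≠ e2 ∧ T.Adj (P i e0) (P i 1) ∧
      T.Adj (P i 1) (P i e2) := by
    fin_cases e0
    · exact ⟨2, by decide, by decide, (hP i).1, (hP i).2⟩
    · exact absurd rfl he1
    · exact ⟨0, by decide, by decide, (hP i).2.symm, (hP i).1.symm⟩
  have cover3 : ∀ e : Fin 3, e = e0 ∨ e = 1 ∨ e = e2 := by
    clear * - he1 h02 h12; revert e0 e2; decide
  have hgi : ∀ g ∈ G, g i = e0 ∨ g i = 1 := by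
    intro g hg
    have t := hG g hg x _ _ hx1 hab (hx _ _).symm
    rw [mem, mem] at t
    exact t.resolve_left (nx g)
  have force : ∀ u w, (u = x ∨ ∃ e, P i e = u) → T.Adj u w → w ≠ x → (∀ e, P i e ≠ w) →
      ∃ s t : Fin 3, (∀ g ∈ G, g i = s ∨ g i = t) ∧ (∀ g ∈ G, g i = t → ∃ j, P j (g j) = w) := by
    intro u w hu huw hwx hwP
    have A : (∀ g ∈ G, g i = 1 → ∃ j, P j (g j) = w) → ∃ s t : Fin 3,
      (∀ g ∈ G, g i = s ∨ g i = t) ∧ (∀ g ∈ G, g i = t → ∃ j, P j (g j) = w) := fun h =>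
        ⟨e0, 1, hgi, h⟩
    have B : (∀ g ∈ G, g i = e0 → ∃ j, P j (g j) = w) → ∃ s t : Fin 3,
      (∀ g ∈ G, g i = s ∨ g i = t) ∧ (∀ g ∈ G, g i = t → ∃ j, P j (g j) = w) := fun h =>
        ⟨1, e0, fun g hg => (hgi g hg).symm, h⟩
    rcases hu with rfl | ⟨e, rfl⟩
    · apply A
      intro g hg h
      have t := hG g hg _ _ w hx1.symm huw (hwP _)
      rw [mem, h] at t
      rcases t with t | t | t
      · exact absurd t.symm he1
      · exact absurd t (nx g)
      · exact t
    rcases cover3 e with rfl | rfl | rfl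
    · apply A
      intro g hg h
      have t := hG g hg _ _ w hx1 huw hwx.symm
      rw [mem, h] at t
      rcases t with t | t | t
      · exact absurd t (nx g)
      · exact absurd t.symm he1
      · exact t
    · apply B
      intro g hg h
      have t := hG g hg _ _ w hbc.symm huw (hwP _)
      rw [mem, mem, h] at t
      rcases t with t | t | t
      · exact absurd t h02
      · exact absurd t he1
      · exact t
    · apply B
      intro g hg h
      have t := hG g hg _ _ w hbc huw (hwP _)
      rw [mem, mem, h] at t
      rcases t with t | t | t
      · exact absurd t he1
      · exact absurd t h02
      · exact t
  by_cases hli : l = i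
  · subst hli
    obtain ⟨s, t, h1, h2⟩ := force (P l f) y (Or.inr ⟨f, rfl⟩) hy1.symm hxy.symm (hy l)
    exact count_one k G l s fun g hg => (h1 g hg).resolve_right fun h => ny g (h2 g hg h)
  obtain ⟨u, hu, w, hw, huw⟩ := exists_boundary T hT {u | u = x ∨ ∃ e, P i e = u} x y (by simp)
    (by simp [hxy.symm, hy])
  simp only [Set.mem_setOf_eq, not_or, not_exists] at hu hw
  obtain ⟨s, t, h1, h2⟩ := force u w hu huw hw.1 hw.2
  by_cases hwP : ∃ j e, P j e = w
  · obtain ⟨j, e, rfl⟩ := hwP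
    refine count_two k G i j l s t e q ?_ hli h1 (fun g hg h => (mem g j e).1 (h2 g hg h)) hq
    rintro rfl
    exact hw.2 e rfl
  · push Not at hwP
    exact count_one k G i s fun g hg => (h1 g hg).resolve_right fun h => by
      obtain ⟨j, hj⟩ := h2 g hg h
      exact hwP _ _ hj

/-- A tree on `3m + 2` vertices (`m ≥ 1`) has at most `3^(m-1)` maximum dissociation
sets. -/
theorem tree_numMaxDissoc_le_of_card_eq_three_mul_add_two {V : Type*} [Fintype V]
    [DecidableEq V] (T : SimpleGraph V) (hT : T.IsTree) (m : ℕ) (hm : 1 ≤ m)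
    (hcard : Fintype.card V = 3 * m + 2) :
    {S : Finset V | IsMaxDissocSet T S}.ncard ≤ 3 ^ (m - 1) := by
  classical
  obtain ⟨p, d, hp, hadj⟩ := exists_parent T hT
  obtain ⟨k, P, C, -, hinj, hP, hCk, hcov⟩ := konig T p d hp hadj _ Finset.univ le_rfl
  let I : (Fin k → Fin 3) → Finset V := fun g => Finset.univ.image fun i => P i (g i)
  let G : Finset (Fin k → Fin 3) := Finset.univ.filter fun g => IsDissocSet T (I g)ᶜ
  have hIcard : ∀ g, (I g).card = k := by
    intro g
    rw [Finset.card_image_of_injective]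
    · simp
    · intro i j h; exact (hinj _ _ _ _ h).1
  have hle : {S : Finset V | IsMaxDissocSet T S}.ncard ≤ G.card := by
    have hsub : {S : Finset V | IsMaxDissocSet T S} ⊆ ((G.image fun g => (I g)ᶜ : Finset (Finset V)) : Set (Finset V)) := by
      rintro S ⟨hS, hSc⟩
      have hCd : IsDissocSet T Cᶜ := by
        intro v hv u hu w hw h1 h2
        by_contra hne
        have := hcov u (by simp) v (by simp) w (by simp) h1.symm h2 hne
        simp only [Finset.mem_compl] at hv hu hw
        tauto
      have hb : Cᶜ.card ≤ dissNum T := by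
        apply le_csSup
        · refine ⟨Fintype.card V, ?_⟩
          rintro n ⟨S, -, rfl⟩
          exact Finset.card_le_univ S
        · exact ⟨_, hCd, rfl⟩
      have hSk : Sᶜ.card ≤ k := by
        rw [Finset.card_compl] at hb ⊢
        omega
      have hit : ∀ i, ∃ e, P i e ∈ Sᶜ := by
        intro i
        by_contra hcon
        push Not at hcon
        simp only [Finset.mem_compl, not_not] at hcon
        have := hS _ (hcon 1) _ (hcon 0) _ (hcon 2) (hP i).1.symm (hP i).2
        exact absurd (hinj _ _ _ _ this).2 (by decide)
      choose g hg using hit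
      have hIg : I g = Sᶜ := by
        apply Finset.eq_of_subset_of_card_le
        · intro v hv
          simp only [I, Finset.mem_image, Finset.mem_univ, true_and] at hv
          obtain ⟨i, rfl⟩ := hv
          exact hg i
        · rw [hIcard]; exact hSk
      simp only [Finset.coe_image, Set.mem_image, Finset.mem_coe]
      exact ⟨g, by simp [G, hIg, hS], by simp [hIg]⟩
    calc _ ≤ _ := Set.ncard_le_ncard hsub (Finset.finite_toSet _)
      _ = _ := Set.ncard_coe_finset _
      _ ≤ _ := Finset.card_image_le
  refine hle.trans ?_
  let R : Finset V := Finset.univ.image fun t : Fin k × Fin 3 => P t.1 t.2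
  have hR : R.card = 3 * k := by
    rw [Finset.card_image_of_injective]
    · simp [mul_comm]
    · rintro ⟨i, e⟩ ⟨j, f⟩ h
      obtain ⟨h1, h2⟩ := hinj _ _ _ _ h
      simp_all
  have hRle : R.card ≤ Fintype.card V := Finset.card_le_univ R
  by_cases hkm : k = m
  · subst hkm
    have h1 : 1 < Rᶜ.card := by
      rw [Finset.card_compl]; omega
    obtain ⟨x, hx, y, hy, hxy⟩ := Finset.one_lt_card.1 h1
    have hmemR : ∀ z ∈ Rᶜ, ∀ i e, P i e ≠ z := by
      intro z hz i e h
      simp only [R, Finset.mem_compl, Finset.mem_image, Finset.mem_univ, true_and, not_exists] at hz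
      exact hz (i, e) h
    refine count_main T hT.connected k hm P hinj hP x y (hmemR x hx) (hmemR y hy) hxy G ?_
    intro g hg u v w huv hvw huw
    have hD : IsDissocSet T (I g)ᶜ := (Finset.mem_filter.1 hg).2
    by_contra hcon
    push Not at hcon
    have mm : ∀ z, (∀ i, P i (g i) ≠ z) → z ∈ (I g)ᶜ := by
      intro z hz
      simpa [I] using hz
    exact huw (hD v (mm v hcon.2.1) u (mm u hcon.1) w (mm w hcon.2.2) huv.symm hvw)
  · have : G.card ≤ 3 ^ k := by
      refine (Finset.card_le_univ G).trans ?_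
      simp
    exact this.trans (Nat.pow_le_pow_right (by norm_num) (by omega))
end

section
/- Let m be a positive integer and T a tree on 3m vertices. Then the number of maximum dissociation sets of T is at most 3^{m−1} + m + 1. -/
open SimpleGraph

theorem exists_rooting {V : Type*} (T : SimpleGraph V) (hT : T.IsTree) :
    ∃ (r : V) (par : V → V) (d : V → ℕ), par r = r ∧
      (∀ v, v ≠ r → T.Adj v (par v) ∧ d (par v) < d v) ∧
      (∀ u v, T.Adj u v → (u = par v ∧ v ≠ r) ∨ (v = par u ∧ u ≠ r)) := by
  classical
  obtain ⟨r⟩ := hT.connected.nonempty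
  choose p hp _ using fun v => hT.existsUnique_path v r
  have huniq : ∀ v (q : T.Walk v r), q.IsPath → q = p v := fun v q hq => by
    have := (hT.isAcyclic.subsingleton_path v r).elim ⟨q, hq⟩ ⟨p v, hp v⟩
    simpa using this
  refine ⟨r, fun v => (p v).snd, fun v => (p v).length, ?_, ?_, ?_⟩
  · have : p r = Walk.nil := (huniq r _ Walk.IsPath.nil).symm
    simp [this]
  · intro v hv
    have hn : ¬ (p v).Nil := fun h => hv h.eq
    refine ⟨(p v).adj_snd hn, ?_⟩
    have h1 := huniq _ _ (hp v).tail
    have h2 := (p v).length_tail_add_one hn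
    show (p (p v).snd).length < (p v).length
    rw [← h1]; omega
  · intro u v huv
    by_cases h : v ∈ (p u).support
    · right
      refine ⟨hT.isAcyclic.eq_snd_of_adj_start (hp u) huv h, ?_⟩
      rintro rfl
      have : p u = Walk.nil := (huniq u _ Walk.IsPath.nil).symm
      rw [this] at h
      simp at h
      exact huv.ne h.symm
    · left
      have := huniq v (Walk.cons huv.symm (p u)) ((hp u).cons h)
      refine ⟨?_, ?_⟩
      · show u = (p v).snd
        rw [← this]; simp
      · rintro rfl
        exact h (p u).end_mem_support

section
variable {V : Type*} [DecidableEq V]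

/-- disjoint vertex sets joined by exactly one edge `p q`. -/
def OneEdge (G : SimpleGraph V) (A B : Finset V) (p q : V) : Prop :=
  Disjoint A B ∧ p ∈ A ∧ q ∈ B ∧ G.Adj p q ∧ ∀ x ∈ A, ∀ y ∈ B, G.Adj x y → x = p ∧ y = q

/-- Trees with a perfect partition in `3`-paths. -/
inductive TT (G : SimpleGraph V) : ℕ → Finset V → Prop
  | base (a b c : V) : G.Adj a b → G.Adj b c → a ≠ c → TT G 1 {a, b, c}
  | join (m n : ℕ) (A B : Finset V) (p q : V) : TT G m A → TT G n B → OneEdge G A B p q →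
      TT G (m + n) (A ∪ B)

inductive Rooted (G : SimpleGraph V) (Q : Finset V) : ℕ → Finset V → Prop
  | base : Rooted G Q 1 Q
  | step (m n : ℕ) (A B : Finset V) (p q : V) : Rooted G Q m A → TT G n B → p ∈ Q →
      OneEdge G A B p q → Rooted G Q (m + n) (A ∪ B)

theorem OneEdge.symm {G : SimpleGraph V} {A B : Finset V} {p q : V} (h : OneEdge G A B p q) :
    OneEdge G B A q p := by
  obtain ⟨h1, h2, h3, h4, h5⟩ := h
  exact ⟨h1.symm, h3, h2, h4.symm, fun x hx y hy hxy => (h5 y hy x hx hxy.symm).symm⟩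

theorem Rooted.join {G : SimpleGraph V} {Q A : Finset V} {m : ℕ} (h : Rooted G Q m A) :
    ∀ {n : ℕ} {B : Finset V} {p q : V}, TT G n B → OneEdge G A B p q →
      Rooted G Q (m + n) (A ∪ B) := by
  induction h with
  | base => intro n B p q hB hj; exact .step _ _ _ _ _ _ .base hB hj.2.1 hj
  | step m1 m2 A1 A2 p' q' hA1 hA2 hp' hj' ih =>
    intro n B p q hB hj
    obtain ⟨h1, h2, h3, h4, h5⟩ := hj
    obtain ⟨k1, k2, k3, k4, k5⟩ := hj'
    rw [Finset.disjoint_left] at h1 k1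
    rcases Finset.mem_union.1 h2 with h | h
    · have hA := ih (p := p) (q := q) hB ⟨by rw [Finset.disjoint_left]; grind, h, h3, h4, by grind⟩
      have := Rooted.step _ _ _ _ p' q' hA hA2 hp'
        ⟨by rw [Finset.disjoint_left]; grind, by grind, k3, k4, by
          intro x hx y hy hxy
          rcases Finset.mem_union.1 hx with hx | hx
          · exact k5 x hx y hy hxy
          · have := h5 y (by grind) x hx hxy.symm
            grind⟩
      have e1 : m1 + m2 + n = m1 + n + m2 := by omega
      have e2 : A1 ∪ A2 ∪ B = A1 ∪ B ∪ A2 := by grind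
      rw [e1, e2]; exact this
    · have hC := TT.join _ _ _ _ p q hA2 hB ⟨by rw [Finset.disjoint_left]; grind, h, h3, h4, by grind⟩
      have := Rooted.step _ _ _ _ p' q' hA1 hC hp'
        ⟨by rw [Finset.disjoint_left]; grind, k2, by grind, k4, by
          intro x hx y hy hxy
          rcases Finset.mem_union.1 hy with hy | hy
          · exact k5 x hx y hy hxy
          · have := h5 x (by grind) y hy hxy
            grind⟩
      rw [add_assoc, Finset.union_assoc]; exact this

theorem TT.rooted {G : SimpleGraph V} {W : Finset V} {m : ℕ} (h : TT G m W) :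
    ∀ w ∈ W, ∃ a b c, G.Adj a b ∧ G.Adj b c ∧ a ≠ c ∧ (w = a ∨ w = b) ∧
      Rooted G {a, b, c} m W := by
  induction h with
  | base a b c hab hbc hac =>
    intro w hw
    simp only [Finset.mem_insert, Finset.mem_singleton] at hw
    rcases hw with h | h | h
    · exact ⟨a, b, c, hab, hbc, hac, .inl h, .base⟩
    · exact ⟨a, b, c, hab, hbc, hac, .inr h, .base⟩
    · refine ⟨c, b, a, hbc.symm, hab.symm, hac.symm, .inl h, ?_⟩
      have : ({a, b, c} : Finset V) = {c, b, a} := by grind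
      rw [this]; exact .base
  | join m n A B p q hA hB hj ihA ihB =>
    intro w hw
    rcases Finset.mem_union.1 hw with h | h
    · obtain ⟨a, b, c, h1, h2, h3, h4, h5⟩ := ihA w h
      exact ⟨a, b, c, h1, h2, h3, h4, h5.join hB hj⟩
    · obtain ⟨a, b, c, h1, h2, h3, h4, h5⟩ := ihB w h
      rw [add_comm, Finset.union_comm]
      exact ⟨a, b, c, h1, h2, h3, h4, h5.join hA hj.symm⟩

theorem TT.pos {G : SimpleGraph V} {W : Finset V} {m : ℕ} (h : TT G m W) : 1 ≤ m := by
  induction h <;> omega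

theorem Rooted.pos {G : SimpleGraph V} {Q W : Finset V} {m : ℕ} (h : Rooted G Q m W) : 1 ≤ m := by
  induction h <;> omega

theorem IsDissocSet.mono {G : SimpleGraph V} {X Y : Finset V} (h : IsDissocSet G Y) (hXY : X ⊆ Y) :
    IsDissocSet G X :=
  fun v hv u hu w hw => h v (hXY hv) u (hXY hu) w (hXY hw)

theorem TT.lower {G : SimpleGraph V} {W : Finset V} {m : ℕ} (h : TT G m W) :
    ∀ S, IsDissocSet G (W \ S) → m ≤ (S ∩ W).card := by
  induction h with
  | base a b c hab hbc hac =>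
    intro S hS
    rw [Nat.one_le_iff_ne_zero, Ne, Finset.card_eq_zero]
    intro h0
    have : ∀ x ∈ ({a, b, c} : Finset V), x ∈ ({a, b, c} : Finset V) \ S := by
      intro x hx
      have : x ∉ S ∩ {a, b, c} := by rw [h0]; simp
      grind
    exact hac (hS b (this _ (by simp)) a (this _ (by simp)) c (this _ (by simp)) hab.symm hbc)
  | join m n A B p q hA hB hj ihA ihB =>
    intro S hS
    have h1 := ihA S (hS.mono (by grind))
    have h2 := ihB S (hS.mono (by grind))
    rw [Finset.inter_union_distrib_left, Finset.card_union_of_disjoint]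
    · omega
    · exact hj.1.mono Finset.inter_subset_right Finset.inter_subset_right

open Classical in
/-- hitting sets of size `m` -/
noncomputable def hits (G : SimpleGraph V) (m : ℕ) (W : Finset V) : Finset (Finset V) :=
  W.powerset.filter fun S => IsDissocSet G (W \ S) ∧ S.card = m

open Classical in
noncomputable def hitsIn (G : SimpleGraph V) (m : ℕ) (W : Finset V) (w : V) : Finset (Finset V) :=
  (hits G m W).filter fun S => w ∈ S

open Classical in
noncomputable def hitsIso (G : SimpleGraph V) (m : ℕ) (W : Finset V) (w : V) : Finset (Finset V) :=
  (hits G m W).filter fun S => w ∉ S ∧ ∀ v ∈ W, G.Adj w v → v ∈ S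

theorem mem_hits {G : SimpleGraph V} {W S : Finset V} {m : ℕ} :
    S ∈ hits G m W ↔ S ⊆ W ∧ IsDissocSet G (W \ S) ∧ S.card = m := by
  simp [hits]

theorem mem_hitsIn {G : SimpleGraph V} {W S : Finset V} {m : ℕ} {w : V} :
    S ∈ hitsIn G m W w ↔ S ∈ hits G m W ∧ w ∈ S := by
  simp [hitsIn]

theorem mem_hitsIso {G : SimpleGraph V} {W S : Finset V} {m : ℕ} {w : V} :
    S ∈ hitsIso G m W w ↔ S ∈ hits G m W ∧ w ∉ S ∧ ∀ v ∈ W, G.Adj w v → v ∈ S := by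
  simp [hitsIso]

theorem hits_split {G : SimpleGraph V} {A B S : Finset V} {m n : ℕ} (hd : Disjoint A B)
    (hA : ∀ S, IsDissocSet G (A \ S) → m ≤ (S ∩ A).card)
    (hB : ∀ S, IsDissocSet G (B \ S) → n ≤ (S ∩ B).card)
    (hS : S ∈ hits G (m + n) (A ∪ B)) :
    S ∩ A ∈ hits G m A ∧ S ∩ B ∈ hits G n B := by
  rw [mem_hits] at hS
  obtain ⟨h1, h2, h3⟩ := hS
  have a1 : IsDissocSet G (A \ S) := h2.mono (by grind)
  have b1 : IsDissocSet G (B \ S) := h2.mono (by grind)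
  have a2 := hA S a1
  have b2 := hB S b1
  have e : S.card = (S ∩ A).card + (S ∩ B).card := by
    rw [← Finset.card_union_of_disjoint
      (hd.mono Finset.inter_subset_right Finset.inter_subset_right),
      ← Finset.inter_union_distrib_left, Finset.inter_eq_left.2 h1]
  rw [mem_hits, mem_hits]
  refine ⟨⟨Finset.inter_subset_right, ?_, by omega⟩, ⟨Finset.inter_subset_right, ?_, by omega⟩⟩
  · exact a1.mono (by grind)
  · exact b1.mono (by grind)

/-- Product bound. -/
theorem card_le_prod {A B : Finset V} {F X Y : Finset (Finset V)}
    (hF : ∀ S ∈ F, S ⊆ A ∪ B) (h : ∀ S ∈ F, S ∩ A ∈ X ∧ S ∩ B ∈ Y) :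
    F.card ≤ X.card * Y.card := by
  rw [← Finset.card_product]
  refine Finset.card_le_card_of_injOn (fun S => (S ∩ A, S ∩ B)) ?_ ?_
  · intro S hS
    simpa using h S hS
  · intro S hS S' hS' he
    simp only [Prod.mk.injEq] at he
    have e1 := hF S hS
    have e2 := hF S' hS'
    rw [← Finset.inter_eq_left.2 e1, ← Finset.inter_eq_left.2 e2,
      Finset.inter_union_distrib_left, Finset.inter_union_distrib_left, he.1, he.2]

theorem K_closure {x y x' y' a b : ℕ} (ha : x ≤ a) (ha' : y ≤ a) (hs : x + y ≤ a + 1)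
    (hb : x' ≤ b) (hb' : y' ≤ b) (hs' : x' + y' ≤ b + 1) (h1b : 1 ≤ b) :
    x * x' + y * y' ≤ a * b + 1 := by
  obtain ⟨b, rfl⟩ : ∃ c, b = c + 1 := ⟨b - 1, by omega⟩
  rcases le_total y x with h | h
  · obtain ⟨d, rfl⟩ := Nat.exists_eq_add_of_le h
    have e1 := Nat.mul_le_mul_left y hs'
    have e2 := Nat.mul_le_mul_left d hb
    have e3 := Nat.mul_le_mul_right b ha
    nlinarith
  · obtain ⟨d, rfl⟩ := Nat.exists_eq_add_of_le h
    have e1 := Nat.mul_le_mul_left x hs'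
    have e2 := Nat.mul_le_mul_left d hb'
    have e3 := Nat.mul_le_mul_right b ha'
    nlinarith

theorem hits_one_eq {G : SimpleGraph V} {Q S : Finset V} {w : V} (h : S ∈ hits G 1 Q)
    (hw : w ∈ S) : S = {w} := by
  rw [mem_hits] at h
  obtain ⟨x, hx⟩ := Finset.card_eq_one.1 h.2.2
  subst hx
  simp at hw
  rw [hw]

theorem card_hits_base {G : SimpleGraph V} (a b c : V) :
    (hits G 1 ({a, b, c} : Finset V)).card ≤ 3 := by
  refine le_trans (Finset.card_le_card (t := {{a}, {b}, {c}}) ?_) Finset.card_le_three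
  intro S hS
  have h := mem_hits.1 hS
  obtain ⟨x, rfl⟩ := Finset.card_eq_one.1 h.2.2
  have := h.1
  simp only [Finset.singleton_subset_iff, Finset.mem_insert, Finset.mem_singleton] at this
  rcases this with rfl | rfl | rfl <;> simp

theorem card_in_base {G : SimpleGraph V} (Q : Finset V) (w : V) : (hitsIn G 1 Q w).card ≤ 1 := by
  rw [Finset.card_le_one]
  intro S hS S' hS'
  rw [mem_hitsIn] at hS hS'
  rw [hits_one_eq hS.1 hS.2, hits_one_eq hS'.1 hS'.2]

theorem card_iso_base {G : SimpleGraph V} (Q : Finset V) (w y : V) (hy : y ∈ Q)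
    (h : G.Adj w y) : (hitsIso G 1 Q w).card ≤ 1 := by
  rw [Finset.card_le_one]
  intro S hS S' hS'
  rw [mem_hitsIso] at hS hS'
  rw [hits_one_eq hS.1 (hS.2.2 y hy h), hits_one_eq hS'.1 (hS'.2.2 y hy h)]

theorem TT.split {G : SimpleGraph V} {A B S : Finset V} {m n : ℕ} {p q : V} (hA : TT G m A)
    (hB : TT G n B) (hj : OneEdge G A B p q) (hS : S ∈ hits G (m + n) (A ∪ B)) :
    S ∩ A ∈ hits G m A ∧ S ∩ B ∈ hits G n B :=
  hits_split hj.1 hA.lower hB.lower hS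

theorem hits_sub {G : SimpleGraph V} {W S : Finset V} {m : ℕ} (h : S ∈ hits G m W) : S ⊆ W :=
  (mem_hits.1 h).1

theorem TT.card_hits {G : SimpleGraph V} {W : Finset V} {m : ℕ} (h : TT G m W) :
    (hits G m W).card ≤ 3 ^ m := by
  induction h with
  | base a b c hab hbc hac => simpa using card_hits_base a b c
  | join m n A B p q hA hB hj ihA ihB =>
    rw [pow_add]
    refine le_trans (card_le_prod (A := A) (B := B) (fun S hS => hits_sub hS)
      (fun S hS => hA.split hB hj hS)) (Nat.mul_le_mul ihA ihB)

theorem in_le_left {G : SimpleGraph V} {A B : Finset V} {m n : ℕ} {p q w : V} (hA : TT G m A)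
    (hB : TT G n B) (hj : OneEdge G A B p q) (hw : w ∈ A) :
    (hitsIn G (m + n) (A ∪ B) w).card ≤ (hitsIn G m A w).card * (hits G n B).card := by
  refine card_le_prod (A := A) (B := B) (fun S hS => hits_sub (mem_hitsIn.1 hS).1) ?_
  intro S hS
  rw [mem_hitsIn] at hS
  have := hA.split hB hj hS.1
  exact ⟨mem_hitsIn.2 ⟨this.1, by grind⟩, this.2⟩

theorem iso_split {G : SimpleGraph V} {A B S : Finset V} {m n : ℕ} {p q w : V} (hA : TT G m A)
    (hB : TT G n B) (hj : OneEdge G A B p q) (hS : S ∈ hitsIso G (m + n) (A ∪ B) w) :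
    S ∩ A ∈ hitsIso G m A w ∧ S ∩ B ∈ hits G n B := by
  rw [mem_hitsIso] at hS
  have := hA.split hB hj hS.1
  exact ⟨mem_hitsIso.2 ⟨this.1, by grind, by grind⟩, this.2⟩

theorem iso_le_left {G : SimpleGraph V} {A B : Finset V} {m n : ℕ} {p q w : V} (hA : TT G m A)
    (hB : TT G n B) (hj : OneEdge G A B p q) :
    (hitsIso G (m + n) (A ∪ B) w).card ≤ (hitsIso G m A w).card * (hits G n B).card :=
  card_le_prod (A := A) (B := B) (fun S hS => hits_sub (mem_hitsIso.1 hS).1)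
    (fun S hS => iso_split hA hB hj hS)

theorem TT.card_in_iso {G : SimpleGraph V} {W : Finset V} {m : ℕ} (h : TT G m W) :
    ∀ w ∈ W, 3 * (hitsIn G m W w).card ≤ 3 ^ m ∧ 3 * (hitsIso G m W w).card ≤ 3 ^ m := by
  induction h with
  | base a b c hab hbc hac =>
    intro w hw
    have h1 := card_in_base (G := G) {a, b, c} w
    have h2 : (hitsIso G 1 {a, b, c} w).card ≤ 1 := by
      simp only [Finset.mem_insert, Finset.mem_singleton] at hw
      rcases hw with rfl | rfl | rfl
      · exact card_iso_base _ _ b (by simp) hab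
      · exact card_iso_base _ _ a (by simp) hab.symm
      · exact card_iso_base _ _ b (by simp) hbc.symm
    omega
  | join m n A B p q hA hB hj ihA ihB =>
    intro w hw
    rcases Finset.mem_union.1 hw with h | h
    · have h1 := in_le_left hA hB hj h
      have h2 := iso_le_left (w := w) hA hB hj
      have h3 := ihA w h
      have h4 := hB.card_hits
      have h5 := Nat.mul_le_mul h3.1 h4
      have h6 := Nat.mul_le_mul h3.2 h4
      rw [← pow_add] at h5 h6
      constructor <;> linarith
    · have h1 := in_le_left hB hA hj.symm h
      have h2 := iso_le_left (w := w) hB hA hj.symm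
      rw [add_comm m n, Finset.union_comm]
      have h3 := ihB w h
      have h4 := hA.card_hits
      have h5 := Nat.mul_le_mul h3.1 h4
      have h6 := Nat.mul_le_mul h3.2 h4
      rw [← pow_add] at h5 h6
      constructor <;> linarith

theorem Rooted.tt {G : SimpleGraph V} {Q W : Finset V} {m : ℕ} (h : Rooted G Q m W)
    (hQ : TT G 1 Q) : TT G m W := by
  induction h with
  | base => exact hQ
  | step m n A B p q hA hB hp hj ih => exact .join _ _ _ _ _ _ ih hB hj

theorem Rooted.sub {G : SimpleGraph V} {Q W : Finset V} {m : ℕ} (h : Rooted G Q m W) : Q ⊆ W := by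
  induction h with
  | base => exact subset_rfl
  | step m n A B p q hA hB hp hj ih => exact ih.trans Finset.subset_union_left

theorem Rooted.one {G : SimpleGraph V} {Q W : Finset V} {m : ℕ} (h : Rooted G Q m W)
    (hQ : TT G 1 Q) : ∀ S ∈ hits G m W, S ∩ Q ∈ hits G 1 Q := by
  induction h with
  | base =>
    intro S hS
    rwa [Finset.inter_eq_left.2 (hits_sub hS)]
  | step m n A B p q hA hB hp hj ih =>
    intro S hS
    have := ih _ ((hA.tt hQ).split hB hj hS).1
    have e : S ∩ A ∩ Q = S ∩ Q := by have := hA.sub; grind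
    rwa [e] at this

theorem three_mul_le (n : ℕ) (hn : 1 ≤ n) : 2 * n + 1 ≤ 3 ^ n := by
  induction n, hn using Nat.le_induction with
  | base => norm_num
  | succ n hn ih => rw [pow_succ]; omega

theorem Rooted.AI {G : SimpleGraph V} {a b c : V} {W : Finset V} {m : ℕ}
    (hab : G.Adj a b) (hbc : G.Adj b c) (hac : a ≠ c)
    (h : Rooted G {a, b, c} m W)
    (H : ∀ n B, n < m → TT G n B → 3 * (hits G n B).card ≤ 3 ^ n + 3 * n + 3) :
    3 * ((hitsIn G m W a).card + (hitsIso G m W a).card) ≤ 3 ^ m + 3 := by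
  have hQ : TT G 1 {a, b, c} := .base a b c hab hbc hac
  have hne : a ≠ b := hab.ne
  have hne' : b ≠ c := hbc.ne
  induction h with
  | base =>
    have h1 := card_in_base (G := G) {a, b, c} a
    have h2 := card_iso_base (G := G) {a, b, c} a b (by simp) hab
    omega
  | step m n A B p q hA hB hp hj ih =>
    have hAT := hA.tt hQ
    have hn := hB.pos
    have hm := hAT.pos
    have ih := ih (fun k B hk => H k B (by omega))
    have hsub := hA.sub
    have haA : a ∈ A := hsub (by simp)
    have hbA : b ∈ A := hsub (by simp)
    have hcA : c ∈ A := hsub (by simp)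
    obtain ⟨t1, t2⟩ := hAT.card_in_iso a haA
    obtain ⟨u1, u2⟩ := hB.card_in_iso q hj.2.2.1
    have hN := H n B (by omega) hB
    have hN' := hB.card_hits
    have h3 : 3 * n ≤ 3 ^ n := by have := three_mul_le n hn; obtain rfl | h := hn.eq_or_lt <;> [norm_num; skip]; obtain ⟨k, rfl⟩ : ∃ k, n = k + 1 := ⟨n - 1, by omega⟩; have := three_mul_le k (by omega); rw [pow_succ]; omega
    have hpos : 1 ≤ 3 ^ n := Nat.one_le_pow _ _ (by norm_num)
    obtain ⟨k, rfl⟩ : ∃ k, m = k + 1 := ⟨m - 1, by omega⟩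
    rw [show k + 1 + n = (k + n) + 1 by ring, pow_succ, pow_add]
    rw [pow_succ] at ih t1 t2
    have key : ∀ x y, (hitsIn G (k + 1 + n) (A ∪ B) a).card ≤ (hitsIn G (k + 1) A a).card * x →
        (hitsIso G (k + 1 + n) (A ∪ B) a).card ≤ (hitsIso G (k + 1) A a).card * y →
        x ≤ 3 ^ n → y ≤ 3 ^ n → x + y ≤ 3 ^ n + 1 →
        3 * ((hitsIn G (k + n + 1) (A ∪ B) a).card + (hitsIso G (k + n + 1) (A ∪ B) a).card) ≤
          3 ^ k * 3 ^ n * 3 + 3 := by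
      intro x y h1 h2 h3 h4 h5
      rw [show k + 1 + n = (k + n) + 1 by ring] at h1 h2
      have := K_closure (a := 3 ^ k) (by omega) (by omega)
        (by omega : (hitsIn G (k + 1) A a).card + (hitsIso G (k + 1) A a).card ≤ 3 ^ k + 1)
        h3 h4 h5 hpos
      omega
    have hIn : p ≠ a → (hitsIn G (k + 1 + n) (A ∪ B) a).card ≤
        (hitsIn G (k + 1) A a).card * (hitsIn G n B q).card := by
      intro hpa
      refine card_le_prod (A := A) (B := B) (fun S hS => hits_sub (mem_hitsIn.1 hS).1) ?_
      intro S hS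
      rw [mem_hitsIn] at hS
      have hs := hAT.split hB hj hS.1
      refine ⟨mem_hitsIn.2 ⟨hs.1, by grind⟩, mem_hitsIn.2 ⟨hs.2, ?_⟩⟩
      have hq := hits_one_eq (w := a) (hA.one hQ _ hs.1) (by simp; grind)
      have hb : b ∉ S := by
        intro hb
        have : b ∈ S ∩ A ∩ {a, b, c} := by simp; grind
        rw [hq] at this; simp at this; exact hne this.symm
      have hc : c ∉ S := by
        intro hc
        have : c ∈ S ∩ A ∩ {a, b, c} := by simp; grind
        rw [hq] at this; simp at this; exact hac this.symm
      by_contra hqS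
      have hd := (mem_hits.1 hS.1).2.1
      have hqB := hj.2.2.1
      have hdis := Finset.disjoint_left.1 hj.1
      simp only [Finset.mem_insert, Finset.mem_singleton] at hp
      rcases hp with rfl | rfl | rfl
      · exact hpa rfl
      · have := hd p (by grind) c (by grind) q (by grind) hbc hj.2.2.2.1
        grind
      · have := hd p (by grind) b (by grind) q (by grind) hbc.symm hj.2.2.2.1
        grind
    have hp' := hp
    simp only [Finset.mem_insert, Finset.mem_singleton] at hp'
    by_cases hpa : p = a
    · refine key (hits G n B).card (hitsIn G n B q).card (in_le_left hAT hB hj haA) ?_ hN'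
        (by omega) (by omega)
      refine card_le_prod (A := A) (B := B) (fun S hS => hits_sub (mem_hitsIso.1 hS).1) ?_
      intro S hS
      have := iso_split hAT hB hj hS
      rw [mem_hitsIso] at hS
      refine ⟨this.1, mem_hitsIn.2 ⟨this.2, ?_⟩⟩
      have := hS.2.2 q (Finset.mem_union_right _ hj.2.2.1) (hpa ▸ hj.2.2.2.1)
      have := hj.2.2.1
      grind
    by_cases hpb : p = b
    · exact key (hitsIn G n B q).card (hits G n B).card (hIn hpa) (iso_le_left hAT hB hj)
        (by omega) hN' (by omega)
    have hpc : p = c := by tauto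
    refine key (hitsIn G n B q).card ((hitsIn G n B q).card + (hitsIso G n B q).card) (hIn hpa) ?_
      (by omega) (by omega) (by omega)
    refine le_trans ?_ (Nat.mul_le_mul_left _
      (Finset.card_union_le (hitsIn G n B q) (hitsIso G n B q)))
    refine card_le_prod (A := A) (B := B) (fun S hS => hits_sub (mem_hitsIso.1 hS).1) ?_
    intro S hS
    have hs := iso_split hAT hB hj hS
    rw [mem_hitsIso] at hS
    refine ⟨hs.1, ?_⟩
    have hbS := hS.2.2 b (Finset.mem_union_left _ hbA) hab
    have hq := hits_one_eq (w := b) (hA.one hQ _ (mem_hitsIso.1 hs.1).1) (by simp; grind)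
    have hc : c ∉ S := by
      intro hc
      have : c ∈ S ∩ A ∩ {a, b, c} := by simp; grind
      rw [hq] at this; simp at this; exact hne' this.symm
    rw [Finset.mem_union, mem_hitsIn, mem_hitsIso]
    have hqB := hj.2.2.1
    by_cases hqS : q ∈ S
    · left; exact ⟨hs.2, by grind⟩
    · right
      refine ⟨hs.2, by grind, ?_⟩
      intro v hv hqv
      by_contra hvS
      have hd := (mem_hits.1 hS.1).2.1
      have hdis := Finset.disjoint_left.1 hj.1
      have := hd q (by grind) c (by grind) v (by grind) (hpc ▸ hj.2.2.2.1.symm) hqv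
      grind

theorem TT.AI {G : SimpleGraph V} {W : Finset V} {m : ℕ} (h : TT G m W) {w : V} (hw : w ∈ W)
    (H : ∀ n B, n < m → TT G n B → 3 * (hits G n B).card ≤ 3 ^ n + 3 * n + 3) :
    3 * ((hitsIn G m W w).card + (hitsIso G m W w).card) ≤ 3 ^ m + 3 := by
  obtain ⟨a, b, c, hab, hbc, hac, hw', hR⟩ := h.rooted w hw
  rcases hw' with rfl | rfl
  · exact hR.AI hab hbc hac H
  · have h0 : hitsIso G m W w = ∅ := by
      rw [Finset.eq_empty_iff_forall_notMem]
      intro S hS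
      rw [mem_hitsIso] at hS
      have hs := hR.one (.base a w c hab hbc hac) S hS.1
      have h1 := hS.2.2 a (hR.sub (by simp)) hab.symm
      have h2 := hS.2.2 c (hR.sub (by simp)) hbc
      have e1 := hits_one_eq (w := a) hs (by simp [h1])
      have e2 := hits_one_eq (w := c) hs (by simp [h2])
      rw [e1] at e2
      exact hac (by simpa using e2)
    have := (h.card_in_iso w hw).1
    rw [h0]; simp; omega

theorem join_arith {A1 A2 I1 I2 N1 N2 O1 F a b m n : ℤ} (hA1 : A1 ≤ a)
    (hA2 : A2 ≤ b) (hI1 : A1 + I1 ≤ a + 1) (hI2 : A2 + I2 ≤ b + 1) (hN1 : N1 ≤ a + m + 1)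
    (hN2 : N2 ≤ b + n + 1) (hO : O1 + A1 = N1) (hF : F ≤ A1 * N2 + O1 * A2 + I1 * I2)
    (p1 : 0 ≤ A1) (p2 : 0 ≤ A2) (p3 : 0 ≤ I1) (p4 : 0 ≤ I2)
    (ha : 2 * m ≤ a + 1) (hb : 2 * n ≤ b + 1) (ha1 : 1 ≤ a) (hb1 : 1 ≤ b)
    (hm : 1 ≤ m) (hn : 1 ≤ n) :
    F ≤ 3 * a * b + m + n + 1 := by
  have e1 := mul_le_mul_of_nonneg_left hN2 p1
  have e2 := mul_le_mul_of_nonneg_right hN1 p2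
  have e3 : I1 * I2 ≤ (a + 1 - A1) * (b + 1 - A2) :=
    mul_le_mul (by linarith) (by linarith) p4 (by linarith)
  have e4 : A1 * n ≤ a * n := mul_le_mul_of_nonneg_right hA1 (by linarith)
  have e5 : A2 * m ≤ b * m := mul_le_mul_of_nonneg_right hA2 (by linarith)
  have e6 : O1 = N1 - A1 := by linarith
  have e7 : (b - 1) * (2 * m) ≤ (b - 1) * (a + 1) := mul_le_mul_of_nonneg_left ha (by linarith)
  have e8 : (a - 1) * (2 * n) ≤ (a - 1) * (b + 1) := mul_le_mul_of_nonneg_left hb (by linarith)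
  have e9 : 0 ≤ (a - 1) * (b - 1) := mul_nonneg (by linarith) (by linarith)
  subst e6
  nlinarith

theorem TT.bound {G : SimpleGraph V} : ∀ (m : ℕ) (W : Finset V), TT G m W →
    3 * (hits G m W).card ≤ 3 ^ m + 3 * m + 3 := by
  intro m
  induction m using Nat.strong_induction_on with
  | _ m ih =>
  intro W h
  cases h with
  | base a b c hab hbc hac =>
    have := card_hits_base (G := G) a b c
    omega
  | join m n A B p q hA hB hj =>
    have hm := hA.pos
    have hn := hB.pos
    have hpA := hj.2.1
    have hqB := hj.2.2.1
    have hdis := Finset.disjoint_left.1 hj.1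
    have N1 := ih m (by omega) A hA
    have N2 := ih n (by omega) B hB
    have A1 := (hA.card_in_iso p hpA).1
    have A2 := (hB.card_in_iso q hqB).1
    have I1 := hA.AI hpA (fun k B hk => ih k (by omega) B)
    have I2 := hB.AI hqB (fun k B hk => ih k (by omega) B)
    classical
    have hO := Finset.card_filter_add_card_filter_not (s := hits G m A) (fun S => p ∈ S)
    have e1 : ((hits G (m + n) (A ∪ B)).filter (fun S => p ∈ S)).card ≤
        (hitsIn G m A p).card * (hits G n B).card := by
      have h := in_le_left hA hB hj hpA
      have h' : (hits G (m + n) (A ∪ B)).filter (fun S => p ∈ S) = hitsIn G (m + n) (A ∪ B) p := by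
        ext S; simp [mem_hitsIn]
      rwa [h']
    have e2 : (((hits G (m + n) (A ∪ B)).filter (fun S => ¬ p ∈ S)).filter (fun S => q ∈ S)).card ≤
        ((hits G m A).filter (fun S => ¬ p ∈ S)).card * (hitsIn G n B q).card := by
      refine card_le_prod (A := A) (B := B) (fun S hS => hits_sub (G := G) (m := m + n) (by
        simp only [Finset.mem_filter] at hS; exact hS.1.1)) ?_
      intro S hS
      simp only [Finset.mem_filter] at hS ⊢
      have hs := hA.split hB hj hS.1.1
      rw [mem_hitsIn]
      exact ⟨⟨hs.1, by grind⟩, hs.2, by grind⟩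
    have e3 : (((hits G (m + n) (A ∪ B)).filter (fun S => ¬ p ∈ S)).filter
        (fun S => ¬ q ∈ S)).card ≤ (hitsIso G m A p).card * (hitsIso G n B q).card := by
      refine card_le_prod (A := A) (B := B) (fun S hS => hits_sub (G := G) (m := m + n) (by
        simp only [Finset.mem_filter] at hS; exact hS.1.1)) ?_
      intro S hS
      simp only [Finset.mem_filter] at hS
      have hs := hA.split hB hj hS.1.1
      rw [mem_hitsIso, mem_hitsIso]
      have hd := (mem_hits.1 hS.1.1).2.1
      have hpq := hj.2.2.2.1
      refine ⟨⟨hs.1, by grind, ?_⟩, hs.2, by grind, ?_⟩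
      · intro v hv hpv
        by_contra hvS
        have := hd p (by grind) v (by grind) q (by grind) hpv hpq
        grind
      · intro v hv hpv
        by_contra hvS
        have := hd q (by grind) v (by grind) p (by grind) hpv hpq.symm
        grind
    have f1 := Finset.card_filter_add_card_filter_not (s := hits G (m + n) (A ∪ B))
      (fun S => p ∈ S)
    have f2 := Finset.card_filter_add_card_filter_not
      (s := (hits G (m + n) (A ∪ B)).filter (fun S => ¬ p ∈ S)) (fun S => q ∈ S)
    have hIn : (hits G m A).filter (fun S => p ∈ S) = hitsIn G m A p := by
      ext S; simp [mem_hitsIn]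
    rw [hIn] at hO
    obtain ⟨k, rfl⟩ : ∃ k, m = k + 1 := ⟨m - 1, by omega⟩
    obtain ⟨l, rfl⟩ : ∃ l, n = l + 1 := ⟨n - 1, by omega⟩
    have g1 : 2 * k + 1 ≤ 3 ^ k := by
      rcases Nat.eq_zero_or_pos k with rfl | h
      · simp
      · exact three_mul_le k h
    have g2 : 2 * l + 1 ≤ 3 ^ l := by
      rcases Nat.eq_zero_or_pos l with rfl | h
      · simp
      · exact three_mul_le l h
    rw [pow_succ] at N1 N2 A1 A2 I1 I2
    have fin := join_arith (A1 := (hitsIn G (k+1) A p).card) (A2 := (hitsIn G (l+1) B q).card)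
      (I1 := (hitsIso G (k+1) A p).card) (I2 := (hitsIso G (l+1) B q).card)
      (N1 := (hits G (k+1) A).card) (N2 := (hits G (l+1) B).card)
      (O1 := ((hits G (k+1) A).filter (fun S => ¬ p ∈ S)).card)
      (F := (hits G (k + 1 + (l + 1)) (A ∪ B)).card) (a := (3 ^ k : ℕ)) (b := (3 ^ l : ℕ))
      (m := (k + 1 : ℕ)) (n := (l + 1 : ℕ)) (by omega) (by omega) (by omega) (by omega)
      (by omega) (by omega) (by omega) (by norm_cast; omega) (by omega) (by omega)
      (by omega) (by omega) (by omega) (by omega) (by omega) (by omega) (by omega) (by omega)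
    have e : 3 ^ (k + 1 + (l + 1)) = 9 * (3 ^ k * 3 ^ l) := by ring
    rw [e]
    rw [mul_assoc] at fin
    norm_cast at fin
    omega

theorem greedy {G : SimpleGraph V} {r : V} {par : V → V} {d : V → ℕ} (hr : par r = r)
    (hpar : ∀ v, v ≠ r → G.Adj v (par v) ∧ d (par v) < d v)
    (hadj : ∀ u v, G.Adj u v → (u = par v ∧ v ≠ r) ∨ (v = par u ∧ u ≠ r)) :
    ∀ (N : ℕ) (W : Finset V), W.card = N → (∀ v ∈ W, par v ∈ W) →
    ∃ k, 3 * k ≤ W.card ∧ (∃ S, S ⊆ W ∧ IsDissocSet G (W \ S) ∧ S.card = k) ∧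
      (∀ S, IsDissocSet G (W \ S) → k ≤ (S ∩ W).card) ∧ (hits G k W).card ≤ 3 ^ k ∧
      (3 * k = W.card → W = ∅ ∨ TT G k W) := by
  classical
  intro N
  induction N using Nat.strong_induction_on with
  | _ N ih =>
  intro W hWN hcl
  by_cases hdW : IsDissocSet G W
  · refine ⟨0, by omega, ⟨∅, by simp, by simpa using hdW, rfl⟩, by simp, ?_, ?_⟩
    · rw [pow_zero, Finset.card_le_one]
      intro S hS S' hS'
      rw [mem_hits] at hS hS'
      rw [Finset.card_eq_zero.1 hS.2.2, Finset.card_eq_zero.1 hS'.2.2]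
    · intro h; left; exact Finset.card_eq_zero.1 (by omega)
  -- descendants
  let De : V → V → Prop := fun t v => ∃ i : ℕ, par^[i] v = t
  have De_refl : ∀ t, De t t := fun t => ⟨0, rfl⟩
  have De_par : ∀ t v, De t (par v) → De t v := fun t v ⟨i, hi⟩ => ⟨i + 1, hi⟩
  have De_up : ∀ t v, De t v → v ≠ t → De t (par v) := by
    rintro t v ⟨i, hi⟩ hne
    cases i with
    | zero => exact absurd hi hne
    | succ i => exact ⟨i, hi⟩
  have De_r : ∀ n v, d v = n → De r v := by
    intro n
    induction n using Nat.strong_induction_on with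
    | _ n ihn =>
    intro v hv
    by_cases h : v = r
    · rw [h]; exact De_refl r
    · exact De_par _ _ (ihn _ (hv ▸ (hpar v h).2) _ rfl)
  have De_le : ∀ t (i : ℕ) v, par^[i] v = t → d t ≤ d v := by
    intro t i
    induction i with
    | zero => intro v hv; simp at hv; rw [hv]
    | succ i ihi =>
      intro v hv
      have := ihi (par v) hv
      by_cases h : v = r
      · rw [h, hr] at this; rwa [h]
      · have := (hpar v h).2; omega
  have De_lt : ∀ t v, De t v → v ≠ t → d t < d v := by
    intro t v h hne
    have hvr : v ≠ r := by
      rintro rfl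
      obtain ⟨i, hi⟩ := h
      rw [Function.iterate_fixed hr] at hi
      exact hne hi
    obtain ⟨i, hi⟩ := De_up t v h hne
    have := De_le t i _ hi
    have := (hpar v hvr).2
    omega
  have hrW : r ∈ W := by
    have hne : W.Nonempty := by
      by_contra h
      rw [Finset.not_nonempty_iff_eq_empty] at h
      exact hdW (by rw [h]; intro v hv; simp at hv)
    obtain ⟨v, hv⟩ := hne
    obtain ⟨i, hi⟩ := De_r _ v rfl
    have : ∀ (i : ℕ) v, v ∈ W → par^[i] v ∈ W := by
      intro i
      induction i with
      | zero => intro v hv; simpa using hv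
      | succ i ihi => intro v hv; exact ihi _ (hcl v hv)
    rw [← hi]; exact this i v hv
  obtain ⟨t, ht, hmax⟩ := Finset.exists_max_image
    (W.filter fun t => ¬ IsDissocSet G (W.filter (De t))) d
    ⟨r, by
      rw [Finset.mem_filter]
      refine ⟨hrW, ?_⟩
      rwa [Finset.filter_true_of_mem (fun v _ => De_r _ v rfl)]⟩
  rw [Finset.mem_filter] at ht
  obtain ⟨htW, htD⟩ := ht
  set D := W.filter (De t) with hD
  set W' := W.filter (fun v => ¬ De t v) with hW'
  have htD' : t ∈ D := by rw [hD, Finset.mem_filter]; exact ⟨htW, De_refl t⟩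
  have memD : ∀ v, v ∈ D ↔ v ∈ W ∧ De t v := fun v => by rw [hD, Finset.mem_filter]
  have memW' : ∀ v, v ∈ W' ↔ v ∈ W ∧ ¬ De t v := fun v => by rw [hW', Finset.mem_filter]
  have hdis : Disjoint W' D := by
    rw [Finset.disjoint_left]; intro v h1 h2
    exact ((memW' v).1 h1).2 ((memD v).1 h2).2
  have hun : W' ∪ D = W := by
    ext v; rw [Finset.mem_union, memD, memW']; tauto
  have hcross : ∀ x ∈ W', ∀ y ∈ D, G.Adj x y → y = t ∧ x = par t ∧ t ≠ r := by
    intro x hx y hy hxy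
    rw [memW'] at hx
    rw [memD] at hy
    rcases hadj x y hxy with ⟨h1, h2⟩ | ⟨h1, h2⟩
    · have hyt : y = t := by
        by_contra hne
        exact hx.2 (h1 ▸ De_up t y hy.2 hne)
      subst hyt
      exact ⟨rfl, h1, h2⟩
    · exact absurd (De_par t x (h1 ▸ hy.2)) hx.2
  have hDt : IsDissocSet G (D \ {t}) := by
    intro v hv u hu w hw hvu hvw
    by_contra huw
    rw [Finset.mem_sdiff, memD, Finset.mem_singleton] at hv hu hw
    have main : ∀ s, s ∈ W → De t s → s ≠ t → De s v → De s u → De s w → False := by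
      intro s hs hts hst h1 h2 h3
      have := hmax s (by
        rw [Finset.mem_filter]
        refine ⟨hs, fun hdd => huw ?_⟩
        exact hdd v (by simp [hv.1.1, h1]) u (by simp [hu.1.1, h2]) w (by simp [hw.1.1, h3])
          hvu hvw)
      have := De_lt t s hts hst
      omega
    rcases hadj v u hvu with ⟨h1, _⟩ | ⟨h1, _⟩
    · rcases hadj v w hvw with ⟨h2, _⟩ | ⟨h2, _⟩
      · exact main v hv.1.1 hv.1.2 hv.2 (De_refl v) (De_par _ _ (h1 ▸ De_refl v))
          (De_par _ _ (h2 ▸ De_refl v))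
      · have hwv : De w v := De_par _ _ (h2 ▸ De_refl w)
        exact main w hw.1.1 hw.1.2 hw.2 hwv (De_par _ _ (h1 ▸ hwv)) (De_refl w)
    · rcases hadj v w hvw with ⟨h2, _⟩ | ⟨h2, _⟩
      · have huv : De u v := De_par _ _ (h1 ▸ De_refl u)
        exact main u hu.1.1 hu.1.2 hu.2 huv (De_refl u) (De_par _ _ (h2 ▸ huv))
      · exact huw (h1.trans h2.symm)
  have htD2 := htD
  unfold IsDissocSet at htD2
  push Not at htD2
  obtain ⟨b, hb, a, ha, c, hc, hba, hbc, hac⟩ := htD2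
  have hQD : ({a, b, c} : Finset V) ⊆ D := by
    intro x; simp only [Finset.mem_insert, Finset.mem_singleton]
    rintro (rfl | rfl | rfl) <;> assumption
  have hQ : TT G 1 {a, b, c} := .base a b c hba.symm hbc hac
  have hQ3 : ({a, b, c} : Finset V).card = 3 := Finset.card_eq_three.2
    ⟨a, b, c, hba.ne.symm, hac, hbc.ne, rfl⟩
  have hD3 : 3 ≤ D.card := hQ3 ▸ Finset.card_le_card hQD
  have hcard : W.card = W'.card + D.card := by
    rw [← hun, Finset.card_union_of_disjoint hdis]
  obtain ⟨k, hk1, ⟨S0, hS0, hS0d, hS0c⟩, hk3, hk4, hk5⟩ := ih W'.card (by omega) W' rfl (by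
    intro v hv
    rw [memW'] at hv ⊢
    exact ⟨hcl v hv.1, fun h => hv.2 (De_par _ _ h)⟩)
  have hDlow : ∀ S, IsDissocSet G (D \ S) → 1 ≤ (S ∩ D).card := fun S hS =>
    (hQ.lower S (hS.mono (Finset.sdiff_subset_sdiff hQD subset_rfl))).trans
      (Finset.card_le_card (Finset.inter_subset_inter subset_rfl hQD))
  refine ⟨k + 1, by omega, ⟨insert t S0, ?_, ?_, ?_⟩, ?_, ?_, ?_⟩
  · intro x hx
    rw [Finset.mem_insert] at hx
    rcases hx with rfl | hx
    · exact htW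
    · exact ((memW' x).1 (hS0 hx)).1
  · intro v hv u hu w hw hvu hvw
    have cl : ∀ x, x ∈ W \ insert t S0 → x ∈ W' \ S0 ∨ x ∈ D \ {t} := by
      intro x hx
      rw [← hun] at hx
      grind
    have nc : ∀ x y, x ∈ W' \ S0 → y ∈ D \ {t} → G.Adj x y → False := by
      intro x y hx hy hxy
      have := (hcross x (by grind) y (by grind) hxy).1
      grind
    rcases cl v hv with h1 | h1
    · rcases cl u hu with h2 | h2
      · rcases cl w hw with h3 | h3
        · exact hS0d v h1 u h2 w h3 hvu hvw
        · exact (nc v w h1 h3 hvw).elim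
      · exact (nc v u h1 h2 hvu).elim
    · rcases cl u hu with h2 | h2
      · exact (nc u v h2 h1 hvu.symm).elim
      · rcases cl w hw with h3 | h3
        · exact (nc w v h3 h1 hvw.symm).elim
        · exact hDt v h1 u h2 w h3 hvu hvw
  · rw [Finset.card_insert_of_notMem, hS0c]
    intro h
    exact ((memW' t).1 (hS0 h)).2 (De_refl t)
  · intro S hS
    have h1 := hk3 S (hS.mono (Finset.sdiff_subset_sdiff (hun ▸ Finset.subset_union_left) subset_rfl))
    have h2 := hDlow S (hS.mono (Finset.sdiff_subset_sdiff (hun ▸ Finset.subset_union_right) subset_rfl))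
    rw [← hun, Finset.inter_union_distrib_left, Finset.card_union_of_disjoint
      (hdis.mono Finset.inter_subset_right Finset.inter_subset_right)]
    omega
  · rw [pow_succ]
    have : (hits G 1 D).card ≤ 3 := by
      refine le_trans (Finset.card_le_card (t := {{a}, {b}, {c}}) ?_) Finset.card_le_three
      intro S hS
      have h := mem_hits.1 hS
      obtain ⟨x, rfl⟩ := Finset.card_eq_one.1 h.2.2
      have h3 := hQ.lower _ (h.2.1.mono (Finset.sdiff_subset_sdiff hQD subset_rfl))
      obtain ⟨y, hy⟩ := Finset.card_pos.1 h3
      simp only [Finset.mem_inter, Finset.mem_insert, Finset.mem_singleton] at hy ⊢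
      grind
    refine le_trans (card_le_prod (A := W') (B := D) (X := hits G k W') (Y := hits G 1 D)
      (fun S hS => hun ▸ hits_sub hS) ?_) (Nat.mul_le_mul hk4 this)
    intro S hS
    rw [← hun] at hS
    exact hits_split hdis hk3 hDlow hS
  · intro h3
    right
    have hDQ : ({a, b, c} : Finset V) = D := Finset.eq_of_subset_of_card_le hQD (by omega)
    rw [hDQ] at hQ
    rcases hk5 (by omega) with h0 | hT
    · have hk0 : k = 0 := by rw [h0] at hk1; simpa using hk1
      rw [hk0, zero_add, ← hun, h0, Finset.empty_union]
      exact hQ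
    · have htr : t ≠ r := by
        rintro rfl
        obtain ⟨x, hx⟩ : W'.Nonempty := by
          rw [← Finset.card_pos]; have := hT.pos; omega
        exact ((memW' x).1 hx).2 (De_r _ x rfl)
      rw [← hun]
      refine TT.join k 1 W' D (par t) t hT hQ ⟨hdis, ?_, htD', (hpar t htr).1.symm, ?_⟩
      · rw [memW']
        refine ⟨hcl t htW, fun ⟨i, hi⟩ => ?_⟩
        have := De_le _ _ _ hi
        have := (hpar t htr).2
        omega
      · intro x hx y hy hxy
        have := hcross x hx y hy hxy
        exact ⟨this.2.1, this.1⟩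

end

/-- A tree on `3m` vertices (`m ≥ 1`) has at most `3^(m-1) + m + 1` maximum dissociation
sets. -/
theorem tree_numMaxDissoc_le_of_card_eq_three_mul {V : Type*} [Fintype V]
    [DecidableEq V] (T : SimpleGraph V) (hT : T.IsTree) (m : ℕ) (hm : 1 ≤ m)
    (hcard : Fintype.card V = 3 * m) :
    {S : Finset V | IsMaxDissocSet T S}.ncard ≤ 3 ^ (m - 1) + m + 1 := by
  classical
  obtain ⟨r, par, d, hr, hpar, hadj⟩ := exists_rooting T hT
  obtain ⟨k, h1, ⟨S0, -, hS0, hS0c⟩, h3, h4, h5⟩ :=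
    greedy hr hpar hadj _ (Finset.univ : Finset V) rfl (fun _ _ => Finset.mem_univ _)
  rw [Finset.card_univ, hcard] at h1 h5
  have hle : {S : Finset V | IsMaxDissocSet T S}.ncard ≤ (hits T k Finset.univ).card := by
    rw [← Set.ncard_coe_finset]
    refine Set.ncard_le_ncard_of_injOn (fun S => Sᶜ) ?_ ?_ (Finset.finite_toSet _)
    · intro S hS
      obtain ⟨hd, hc⟩ := hS
      have e : (Finset.univ : Finset V) \ Sᶜ = S := by ext; simp
      have hlow := h3 Sᶜ (by rw [e]; exact hd)
      have hbdd : BddAbove {n | ∃ S : Finset V, IsDissocSet T S ∧ S.card = n} :=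
        ⟨Fintype.card V, by rintro n ⟨S, -, rfl⟩; exact Finset.card_le_univ S⟩
      have hge : (Finset.univ \ S0).card ≤ dissNum T := le_csSup hbdd ⟨_, hS0, rfl⟩
      have c1 := Finset.card_compl S0
      rw [Finset.compl_eq_univ_sdiff] at c1
      have c2 := Finset.card_compl S
      have c3 := Finset.card_le_univ S
      have c4 := Finset.card_le_univ S0
      rw [Finset.inter_univ] at hlow
      rw [Finset.mem_coe, mem_hits]
      refine ⟨Finset.subset_univ _, ?_, ?_⟩
      · rw [e]; exact hd
      · omega
    · intro S _ S' _ h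
      exact compl_injective h
  refine hle.trans ?_
  rcases (show k ≤ m by omega).lt_or_eq with h | h
  · have : 3 ^ k ≤ 3 ^ (m - 1) := Nat.pow_le_pow_right (by norm_num) (by omega)
    omega
  · subst h
    rcases h5 rfl with h0 | hTT
    · have : Fintype.card V = 0 := by rw [← Finset.card_univ, h0]; rfl
      omega
    · have := hTT.bound
      obtain ⟨l, rfl⟩ : ∃ l, k = l + 1 := ⟨k - 1, by omega⟩
      rw [pow_succ] at this
      simp only [Nat.add_sub_cancel]
      omega
end
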